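/- Let G be a group generated by a finite set X admitting a (possibly infinite) reduced presentation ⟨X | R⟩ satisfying the C'(1/6) small cancellation condition. Then G has linear isoperimetric spectrum: f_{G,X}(k,m,n) ∼ n/m. -/

import Mathlib

open Function

namespace IsoSpecPaper

variable {ι : Type*} {G : Type*} [Group G]

/-- The (reduced) length of an element of a free group. -/
noncomputable def wnorm (w : FreeGroup ι) : ℕ :=
  @FreeGroup.norm ι (Classical.decEq ι) w

/-- `triv φ k` : the set of words of length at most `k` in the generators
(and their inverses) representing the identity of `G` under the marking `φ`. -/
noncomputable def triv (φ : FreeGroup ι →* G) (k : ℕ) : Set (FreeGroup ι) :=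
  {w | wnorm w ≤ k ∧ φ w = 1}

/-- `AreaLe R w l` : `w` is a product of `l` conjugates of elements of `R` or
their inverses in the free group. -/
def AreaLe (R : Set (FreeGroup ι)) (w : FreeGroup ι) (l : ℕ) : Prop :=
  ∃ L : List (FreeGroup ι × FreeGroup ι), L.length = l ∧
    (∀ p ∈ L, p.2 ∈ R ∨ p.2⁻¹ ∈ R) ∧
    w = (L.map fun p => p.1⁻¹ * p.2 * p.1).prod

/-- The area of `w` with respect to the set of relators `R`. -/
noncomputable def area (R : Set (FreeGroup ι)) (w : FreeGroup ι) : ℕ :=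
  sInf {l | AreaLe R w l}

/-- The isoperimetric spectrum of the marked group `(G, φ)`:
`isoSpec φ k m n = max { area_{S_m}(w) : w ∈ ⟪S_k⟫, ‖w‖ ≤ n }`. -/
noncomputable def isoSpec (φ : FreeGroup ι →* G) (k m n : ℕ) : ℕ :=
  sSup (area (triv φ m) '' {w | w ∈ Subgroup.normalClosure (triv φ k) ∧ wnorm w ≤ n})

/-- The real-valued isoperimetric spectrum. -/
noncomputable def isoSpecR (φ : FreeGroup ι →* G) : ℕ → ℕ → ℕ → ℝ :=
  fun k m n => (isoSpec φ k m n : ℝ)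

/-- The Dehn function of the presentation with relators `R`. -/
noncomputable def dehn (R : Set (FreeGroup ι)) (n : ℕ) : ℕ :=
  sSup (area R '' {w | w ∈ Subgroup.normalClosure R ∧ wnorm w ≤ n})

/-- The quasi-order `f ≼ g` on functions of triples `(k,m,n)` of positive integers
with `m ≥ k`. -/
def SpecLE (f g : ℕ → ℕ → ℕ → ℝ) : Prop :=
  ∃ C : ℕ, 0 < C ∧ ∀ k m n : ℕ, 0 < k → 0 < m → 0 < n → C * k ≤ m →
    f k (C * m) n ≤ C * g (C * k) m (C * n) + C * (n : ℝ) / m + C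

/-- Equivalence of isoperimetric functions: `f ∼ g`. -/
def SpecEquiv (f g : ℕ → ℕ → ℕ → ℝ) : Prop := SpecLE f g ∧ SpecLE g f

/-- The linear spectrum `(k,m,n) ↦ n/m`. -/
noncomputable def linSpec : ℕ → ℕ → ℕ → ℝ := fun _ m n => (n : ℝ) / m

/-- The word length of `g ∈ G` with respect to the marking `φ`. -/
noncomputable def wlen (φ : FreeGroup ι →* G) (g : G) : ℕ :=
  sInf {n | ∃ w : FreeGroup ι, wnorm w = n ∧ φ w = g}

/-- The word metric on `G` with respect to the marking `φ`. -/
noncomputable def wdist (φ : FreeGroup ι →* G) (g h : G) : ℕ := wlen φ (g⁻¹ * h)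

/-- Quasi-isometry of marked groups with respect to their word metrics. -/
noncomputable def QuasiIsometric {H : Type*} [Group H] {κ : Type*}
    (φ : FreeGroup ι →* G) (ψ : FreeGroup κ →* H) : Prop :=
  ∃ L : ℝ, 0 ≤ L ∧ ∃ (α : G → H) (β : H → G),
    (∀ x y : G, (wdist ψ (α x) (α y) : ℝ) ≤ L * wdist φ x y + L) ∧
    (∀ u v : H, (wdist φ (β u) (β v) : ℝ) ≤ L * wdist ψ u v + L) ∧
    (∀ t : H, (wdist ψ (α (β t)) t : ℝ) ≤ L) ∧
    (∀ s : G, (wdist φ (β (α s)) s : ℝ) ≤ L)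

/-- A (combinatorial) geodesic path of length `n` in the Cayley graph of `(G, φ)`:
consecutive vertices are at distance at most `1` and the endpoints are at
distance exactly `n`. -/
noncomputable def IsGeodesic (φ : FreeGroup ι →* G) {n : ℕ} (p : Fin (n + 1) → G) : Prop :=
  (∀ i : Fin n, wdist φ (p i.castSucc) (p i.succ) ≤ 1) ∧
  wdist φ (p 0) (p (Fin.last n)) = n

/-- Every vertex of the path `p` lies within distance `δ` of the set `A`. -/
noncomputable def ThinAt (φ : FreeGroup ι →* G) (δ : ℝ) {n : ℕ}
    (p : Fin (n + 1) → G) (A : Set G) : Prop :=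
  ∀ i, ∃ a ∈ A, (wdist φ (p i) a : ℝ) ≤ δ

/-- The Cayley graph of `(G, φ)` is `δ`-hyperbolic: every geodesic triangle is `δ`-thin. -/
noncomputable def HypConst (φ : FreeGroup ι →* G) (δ : ℝ) : Prop :=
  ∀ (n₁ n₂ n₃ : ℕ) (p : Fin (n₁ + 1) → G) (q : Fin (n₂ + 1) → G) (r : Fin (n₃ + 1) → G),
    IsGeodesic φ p → IsGeodesic φ q → IsGeodesic φ r →
    p (Fin.last n₁) = q 0 → q (Fin.last n₂) = r 0 → r (Fin.last n₃) = p 0 →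
    ThinAt φ δ p (Set.range q ∪ Set.range r) ∧
    ThinAt φ δ q (Set.range r ∪ Set.range p) ∧
    ThinAt φ δ r (Set.range p ∪ Set.range q)

/-- The marked group `(G, φ)` is hyperbolic. -/
noncomputable def IsHyperbolic (φ : FreeGroup ι →* G) : Prop :=
  ∃ δ : ℝ, 0 ≤ δ ∧ HypConst φ δ

/-- `G` (marked by `φ`) is a limit (direct limit) of hyperbolic groups. -/
noncomputable def LimitOfHyperbolic (φ : FreeGroup ι →* G) : Prop :=
  Surjective φ ∧ ∃ R : ℕ → Set (FreeGroup ι),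
    (∀ i j, i ≤ j → R i ⊆ R j) ∧
    φ.ker = Subgroup.normalClosure (⋃ i, R i) ∧
    ∀ i, IsHyperbolic (QuotientGroup.mk' (Subgroup.normalClosure (R i)))

/-- `G` (marked by `φ`) is well-approximated by hyperbolic groups. -/
noncomputable def WellApproximated (φ : FreeGroup ι →* G) : Prop :=
  Surjective φ ∧ ∃ R : ℕ → Set (FreeGroup ι),
    (∀ i j, i ≤ j → R i ⊆ R j) ∧
    φ.ker = Subgroup.normalClosure (⋃ i, R i) ∧
    (∀ i, IsHyperbolic (QuotientGroup.mk' (Subgroup.normalClosure (R i)))) ∧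
    ∃ C : ℕ, 0 < C ∧ ∀ i : ℕ, 0 < i →
      (∀ w : FreeGroup ι, wnorm w ≤ i → φ w = 1 →
        w ∈ Subgroup.normalClosure (R i)) ∧
      HypConst (QuotientGroup.mk' (Subgroup.normalClosure (R i))) ((C * i : ℕ) : ℝ)

/-- The formal inverse of a word. -/
def winv {ι : Type*} (w : List (ι × Bool)) : List (ι × Bool) :=
  (w.map fun p => (p.1, !p.2)).reverse

/-- A word is reduced if it contains no subword `x x⁻¹` or `x⁻¹ x`. -/
def ReducedWord {ι : Type*} (w : List (ι × Bool)) : Prop :=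
  w.Chain' fun a b => ¬(a.1 = b.1 ∧ a.2 = !b.2)

/-- All cyclic shifts of relators of `𝓡` and of their inverses. -/
def CyclicShifts {ι : Type*} (𝓡 : Set (List (ι × Bool))) : Set (List (ι × Bool)) :=
  {w | ∃ r ∈ 𝓡, ∃ n : ℕ, w = r.rotate n ∨ w = (winv r).rotate n}

/-- A presentation is reduced if all cyclic shifts of all relators are reduced words. -/
def ReducedPresentation {ι : Type*} (𝓡 : Set (List (ι × Bool))) : Prop :=
  ∀ r ∈ 𝓡, ∀ n : ℕ, ReducedWord (r.rotate n)

/-- The `C'(lam)` small cancellation condition: any common initial subword `U` of two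
distinct cyclic shifts `R₁ ≢ R₂` of relators or their inverses satisfies
`‖U‖ < lam · min(‖R₁‖, ‖R₂‖)`. -/
def SmallCancellation {ι : Type*} (lam : ℝ) (𝓡 : Set (List (ι × Bool))) : Prop :=
  ∀ R₁ ∈ CyclicShifts 𝓡, ∀ R₂ ∈ CyclicShifts 𝓡, R₁ ≠ R₂ →
    ∀ U : List (ι × Bool), U <+: R₁ → U <+: R₂ →
      (U.length : ℝ) < lam * min (R₁.length : ℝ) (R₂.length : ℝ)

/-!
By Dehn's algorithm, `⟪S_k⟫` is the normal closure of the relators of length at most `2k`, so the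
spectrum is a matter of filling words in the quotient `Q` by these relators. The key point is that
`Q` is hyperbolic with constant `O(k)`.

A minimal van Kampen diagram of a geodesic quadrilateral has total curvature at least `6`. A cell
without boundary edges has negative curvature, and positive curvature occurs only at the four
corners, so at most `18` cells have no boundary edge, and some neighborhood `U` of the first side,
of radius `O(k)`, has a frontier avoiding all of them. If no two opposite sides are `O(k)`-close,
the coboundary of `U`, cut off near the second side, has a nonzero sum along the boundary, hence by
a discrete Stokes identity along the boundary of some cell. That cell has a boundary edge, but is
too far from each of the four sides. So two opposite sides are `O(k)`-close, which gives Gromov's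
four-point inequality.

A word of length `n` is a polygon with about `n / m` sides of length `m`. When `m` exceeds the
four-point constant, four sides around a vertex farthest from the base point can be replaced by
three, at the cost of one relator of length at most `7m`. Repeating this, about `n / m` relators
fill the polygon.

Van Kampen diagrams are encoded without topology: by the cyclic words along their boundaries, whose
letters carry the label of the adjacent cell.
-/

/-! ### Words and products of conjugates -/

section Words

variable {α : Type*}

/-- Words in the letters `α` and their formal inverses. -/
abbrev Word (α : Type*) := List (α × Bool)

/-- The formal inverse of a letter. -/
def letterInv (x : α × Bool) : α × Bool := (x.1, !x.2)

@[simp] lemma letterInv_letterInv (x : α × Bool) : letterInv (letterInv x) = x := by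
  simp [letterInv]

lemma invRev_eq_map_reverse (w : Word α) : FreeGroup.invRev w = (w.map letterInv).reverse := rfl

lemma mk_letterInv (x : α × Bool) : FreeGroup.mk [letterInv x] = (FreeGroup.mk [x])⁻¹ := rfl

lemma mk_cons (x : α × Bool) (w : Word α) :
    FreeGroup.mk (x :: w) = FreeGroup.mk [x] * FreeGroup.mk w := by
  rw [FreeGroup.mul_mk, List.singleton_append]

lemma mk_append (u v : Word α) : FreeGroup.mk (u ++ v) = FreeGroup.mk u * FreeGroup.mk v :=
  FreeGroup.mul_mk.symm

lemma mk_invRev (w : Word α) : FreeGroup.mk (FreeGroup.invRev w) = (FreeGroup.mk w)⁻¹ :=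
  FreeGroup.inv_mk.symm

lemma eq_of_isReduced_of_mk_eq {u v : Word α} (hu : FreeGroup.IsReduced u)
    (hv : FreeGroup.IsReduced v) (h : FreeGroup.mk u = FreeGroup.mk v) : u = v := by
  obtain ⟨w, huw, hvw⟩ := FreeGroup.Red.exact.1 h
  rw [← hu.red_iff_eq.1 huw, hv.red_iff_eq.1 hvw]

lemma exists_cancelling_pair_of_not_isReduced {w : Word α} (hw : ¬FreeGroup.IsReduced w) :
    ∃ u z v, w = u ++ z ++ v ∧ z.length = 2 ∧ FreeGroup.mk z = 1 := by
  rw [FreeGroup.isReduced_iff_not_step] at hw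
  push Not at hw
  obtain ⟨_, @⟨u, v, x, b⟩⟩ := hw
  exact ⟨u, [(x, b), (x, !b)], v, by simp, rfl, Quot.sound (FreeGroup.Red.Step.not (L₁ := []))⟩

lemma letter_compat_iff (x y : α × Bool) : (x.1 = y.1 → x.2 = y.2) ↔ y ≠ letterInv x := by
  obtain ⟨a, b⟩ := x
  obtain ⟨c, d⟩ := y
  simp only [letterInv, ne_eq, Prod.mk.injEq, not_and]
  rw [eq_comm (a := a), Bool.eq_not, ne_eq, not_not, eq_comm (a := b)]

lemma isReduced_append_iff {u v : Word α} :
    FreeGroup.IsReduced (u ++ v) ↔ FreeGroup.IsReduced u ∧ FreeGroup.IsReduced v ∧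
      ∀ x ∈ u.getLast?, ∀ y ∈ v.head?, y ≠ letterInv x := by
  simp only [FreeGroup.IsReduced, List.isChain_append, letter_compat_iff]

lemma isReduced_cons_iff {x : α × Bool} {v : Word α} :
    FreeGroup.IsReduced (x :: v) ↔
      (∀ y ∈ v.head?, y ≠ letterInv x) ∧ FreeGroup.IsReduced v := by
  simp only [FreeGroup.IsReduced, List.isChain_cons, letter_compat_iff]

lemma isReduced_of_append_append {u z v : Word α} (h : FreeGroup.IsReduced (u ++ z ++ v)) :
    FreeGroup.IsReduced z :=
  (isReduced_append_iff.1 (isReduced_append_iff.1 h).1).2.1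

lemma append_eq_append_cons {β : Type*} {u v P Q : List β} {x : β} (h : u ++ v = P ++ x :: Q) :
    (∃ b, u = P ++ x :: b ∧ Q = b ++ v) ∨ ∃ a, P = u ++ a ∧ v = a ++ x :: Q := by
  rcases List.append_eq_append_iff.1 h with ⟨a, hP, hv⟩ | ⟨_ | ⟨c, cs⟩, hu, hQ⟩
  · exact Or.inr ⟨a, hP, hv⟩
  · exact Or.inr ⟨[], by simpa using hu.symm, by simpa using hQ.symm⟩
  · obtain ⟨rfl, rfl⟩ := List.cons.inj hQ
    exact Or.inl ⟨cs, hu, rfl⟩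

lemma exists_letter_of_red_cons {W v : Word α} {x : α × Bool} (h : FreeGroup.Red W (x :: v)) :
    ∃ P Q, W = P ++ x :: Q ∧ FreeGroup.mk P = 1 ∧ FreeGroup.mk Q = FreeGroup.mk v := by
  induction h using Relation.ReflTransGen.head_induction_on with
  | refl => exact ⟨[], v, rfl, rfl, rfl⟩
  | head hstep _ ih =>
    obtain ⟨P, Q, hPQ, hP, hQ⟩ := ih
    obtain @⟨L₁, L₂, a, s⟩ := hstep
    have mk_pair (U V : Word α) :
        FreeGroup.mk (U ++ (a, s) :: (a, !s) :: V) = FreeGroup.mk (U ++ V) :=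
      Quot.sound FreeGroup.Red.Step.not
    rcases append_eq_append_cons hPQ with ⟨U, rfl, rfl⟩ | ⟨U, rfl, rfl⟩
    · exact ⟨P, U ++ (a, s) :: (a, !s) :: L₂, by simp, hP, by rw [mk_pair, hQ]⟩
    · exact ⟨L₁ ++ (a, s) :: (a, !s) :: U, Q, by simp, by rw [mk_pair, hP], hQ⟩

end Words

section Area

variable {α : Type*}

/-- `w` is a product of at most `n` conjugates of elements of `S` or their inverses; unlike
`AreaLe`, this is monotone in `n`. -/
def AreaAtMost (S : Set (FreeGroup α)) (w : FreeGroup α) (n : ℕ) : Prop :=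
  ∃ l ≤ n, AreaLe S w l

namespace AreaAtMost

variable {S : Set (FreeGroup α)} {v w : FreeGroup α} {m n : ℕ}

lemma mono (h : AreaAtMost S w m) (hmn : m ≤ n) : AreaAtMost S w n :=
  let ⟨l, hl, hw⟩ := h
  ⟨l, hl.trans hmn, hw⟩

protected lemma one : AreaAtMost S 1 n := ⟨0, n.zero_le, [], rfl, by simp, rfl⟩

lemma of_mem (h : w ∈ S) : AreaAtMost S w 1 := ⟨1, le_rfl, [(1, w)], rfl, by simp [h], by simp⟩

protected lemma mul (hv : AreaAtMost S v m) (hw : AreaAtMost S w n) :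
    AreaAtMost S (v * w) (m + n) := by
  obtain ⟨_, hm, L, rfl, hL, rfl⟩ := hv
  obtain ⟨_, hn, M, rfl, hM, rfl⟩ := hw
  refine ⟨_, add_le_add hm hn, L ++ M, List.length_append, ?_, by simp⟩
  simpa only [List.mem_append, or_imp, forall_and] using ⟨hL, hM⟩

protected lemma conj (h : AreaAtMost S w n) (g : FreeGroup α) : AreaAtMost S (g⁻¹ * w * g) n := by
  obtain ⟨_, hn, L, rfl, hL, rfl⟩ := h
  refine ⟨_, hn, L.map fun p => (p.1 * g, p.2), by simp, List.forall_mem_map.2 hL, ?_⟩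
  clear hn hL
  induction L with
  | nil => simp
  | cons p L ih =>
    simp only [List.map_cons, List.prod_cons] at ih ⊢
    rw [← ih]
    group

protected lemma inv (h : AreaAtMost S w n) : AreaAtMost S w⁻¹ n := by
  obtain ⟨_, hn, L, rfl, hL, rfl⟩ := h
  refine ⟨_, hn, (L.map fun p => (p.1, p.2⁻¹)).reverse, by simp, ?_, ?_⟩
  · intro p hp
    obtain ⟨q, hq, rfl⟩ := List.mem_map.1 (List.mem_reverse.1 hp)
    simpa [or_comm] using hL q hq
  · rw [List.prod_inv_reverse, ← List.map_reverse, ← List.map_reverse, List.map_map,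
      ← List.map_reverse, List.map_map]
    congr 2
    funext p
    simp [mul_assoc]

lemma mul_comm (h : AreaAtMost S (v * w) n) : AreaAtMost S (w * v) n := by
  simpa [mul_assoc] using h.conj v

lemma mul_of_inv_mul {t : FreeGroup α} (hv : AreaAtMost S (v * t) m)
    (hw : AreaAtMost S (t⁻¹ * w) n) : AreaAtMost S (v * w) (m + n) := by
  simpa [mul_assoc] using hv.mul hw

lemma eq_one (h : AreaAtMost S w 0) : w = 1 := by
  obtain ⟨l, hl, L, rfl, -, rfl⟩ := h
  rw [List.length_eq_zero_iff.1 (Nat.le_zero.1 hl), List.map_nil, List.prod_nil]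

lemma mem_normalClosure (h : AreaAtMost S w n) : w ∈ Subgroup.normalClosure S := by
  obtain ⟨_, -, L, -, hL, rfl⟩ := h
  refine list_prod_mem fun x hx => ?_
  obtain ⟨p, hp, rfl⟩ := List.mem_map.1 hx
  have hmem : p.2 ∈ Subgroup.normalClosure S :=
    (hL p hp).elim (fun h => Subgroup.subset_normalClosure h)
      fun h => inv_mem_iff.1 (Subgroup.subset_normalClosure h)
  simpa using Subgroup.normalClosure_normal.conj_mem _ hmem p.1⁻¹

end AreaAtMost

lemma exists_areaAtMost_of_mem_normalClosure {S : Set (FreeGroup α)} {w : FreeGroup α}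
    (h : w ∈ Subgroup.normalClosure S) : ∃ n, AreaAtMost S w n := by
  induction h using Subgroup.closure_induction with
  | mem x hx =>
    obtain ⟨r, hr, hrx⟩ := Group.mem_conjugatesOfSet_iff.1 hx
    obtain ⟨c, rfl⟩ := isConj_iff.1 hrx
    exact ⟨1, by simpa using (AreaAtMost.of_mem hr).conj c⁻¹⟩
  | one => exact ⟨0, AreaAtMost.one⟩
  | mul x y _ _ hx hy =>
    obtain ⟨m, hm⟩ := hx
    obtain ⟨n, hn⟩ := hy
    exact ⟨_, hm.mul hn⟩
  | inv x _ hx =>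
    obtain ⟨n, hn⟩ := hx
    exact ⟨n, hn.inv⟩

end Area

/-! ### Peeling the first edge off a filled word -/

section FirstEdge

variable {α : Type*}

/-- Closure of a set of relators under cyclic shifts and formal inverses. -/
structure IsSymmetrized (R : Set (Word α)) : Prop where
  append_comm_mem : ∀ u v, u ++ v ∈ R → v ++ u ∈ R
  invRev_mem : ∀ r ∈ R, FreeGroup.invRev r ∈ R

/-- The product of the conjugates `f⁻¹ r f` over the pairs `(f, r)` of a list. -/
def conjProd (L : List (FreeGroup α × Word α)) : FreeGroup α :=
  (L.map fun p => p.1⁻¹ * FreeGroup.mk p.2 * p.1).prod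

@[simp] lemma conjProd_nil : conjProd ([] : List (FreeGroup α × Word α)) = 1 := rfl

@[simp] lemma conjProd_cons (p : FreeGroup α × Word α) (L : List (FreeGroup α × Word α)) :
    conjProd (p :: L) = p.1⁻¹ * FreeGroup.mk p.2 * p.1 * conjProd L := List.prod_cons

@[simp] lemma conjProd_append (L M : List (FreeGroup α × Word α)) :
    conjProd (L ++ M) = conjProd L * conjProd M := by simp [conjProd]

lemma areaAtMost_conjProd {R : Set (Word α)} {L : List (FreeGroup α × Word α)}
    (hL : ∀ p ∈ L, p.2 ∈ R) : AreaAtMost (FreeGroup.mk '' R) (conjProd L) L.length := by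
  refine ⟨_, le_rfl, L.map fun p => (p.1, FreeGroup.mk p.2), L.length_map _, ?_, ?_⟩
  · exact List.forall_mem_map.2 fun p hp => Or.inl ⟨p.2, hL p hp, rfl⟩
  · rw [List.map_map]
    rfl

/-- The first letter of `x :: v` lies on a cell `x :: s`, whose removal leaves a word of area
less than `n`. -/
def FirstEdgeOnCell (R : Set (Word α)) (x : α × Bool) (v : Word α) (n : ℕ) : Prop :=
  ∃ s, x :: s ∈ R ∧ ∃ m < n,
    AreaAtMost (FreeGroup.mk '' R) ((FreeGroup.mk s)⁻¹ * FreeGroup.mk v) m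

lemma FirstEdgeOnCell.mono {R : Set (Word α)} {x : α × Bool} {v : Word α} {m n : ℕ}
    (h : FirstEdgeOnCell R x v m) (hmn : m ≤ n) : FirstEdgeOnCell R x v n :=
  let ⟨s, hs, l, hl, hA⟩ := h
  ⟨s, hs, l, hl.trans_le hmn, hA⟩

lemma FirstEdgeOnCell.of_mul_mk {R : Set (Word α)} {x : α × Bool} {u v : Word α}
    {z : FreeGroup α} {m n : ℕ} (h : FirstEdgeOnCell R x u n)
    (hz : AreaAtMost (FreeGroup.mk '' R) z m) (hv : FreeGroup.mk v = z * FreeGroup.mk u) :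
    FirstEdgeOnCell R x v (m + n) := by
  obtain ⟨s, hs, l, hl, hA⟩ := h
  refine ⟨s, hs, m + l, by omega, ?_⟩
  simpa [hv, mul_assoc, -FreeGroup.inv_mk, -FreeGroup.mul_mk] using
    (hz.conj (FreeGroup.mk s)).mul hA

lemma FirstEdgeOnCell.of_mk_inv_mul {R : Set (Word α)} (hR : IsSymmetrized R) {x : α × Bool}
    {u v : Word α} {b : FreeGroup α} {m n : ℕ} (h : FirstEdgeOnCell R (letterInv x) u m)
    (hb : AreaAtMost (FreeGroup.mk '' R) b n) (hv : FreeGroup.mk v = (FreeGroup.mk u)⁻¹ * b) :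
    FirstEdgeOnCell R x v (m + n) := by
  obtain ⟨s, hs, l, hl, hA⟩ := h
  refine ⟨FreeGroup.invRev s, ?_, l + n, by omega, ?_⟩
  · have hrev : FreeGroup.invRev (letterInv x :: s) = FreeGroup.invRev s ++ [x] := by
      simp [invRev_eq_map_reverse]
    exact hR.append_comm_mem _ [x] (hrev ▸ hR.invRev_mem _ hs)
  · simpa [hv, mk_invRev, mul_assoc, -FreeGroup.inv_mk, -FreeGroup.mul_mk] using
      (hA.inv.conj (FreeGroup.mk s)⁻¹).mul hb

lemma firstEdge_of_mem_relator {R : Set (Word α)} (hR : IsSymmetrized R) {m₁ m₂ : ℕ}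
    {c f : FreeGroup α} {v a u s : Word α} {x : α × Bool} (hr : u ++ x :: s ∈ R)
    (hz : AreaAtMost (FreeGroup.mk '' R) (FreeGroup.mk a)⁻¹ m₁)
    (hc : AreaAtMost (FreeGroup.mk '' R) c m₂) (ha : FreeGroup.mk a = f⁻¹ * FreeGroup.mk u)
    (hv : FreeGroup.mk v = FreeGroup.mk s * f * c) : FirstEdgeOnCell R x v (m₁ + 1 + m₂) := by
  refine ⟨s ++ u, hR.append_comm_mem u (x :: s) hr, m₁ + m₂, by omega, ?_⟩
  convert hz.mul hc using 1
  rw [hv, ha, mk_append]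
  group

variable [DecidableEq α]

/-- The total length of the conjugators, each increased by one. -/
def conjWeight (L : List (FreeGroup α × Word α)) : ℕ := (L.map fun p => p.1.norm + 1).sum

@[simp] lemma conjWeight_cons (p : FreeGroup α × Word α) (L : List (FreeGroup α × Word α)) :
    conjWeight (p :: L) = p.1.norm + 1 + conjWeight L := List.sum_cons

@[simp] lemma conjWeight_append (L M : List (FreeGroup α × Word α)) :
    conjWeight (L ++ M) = conjWeight L + conjWeight M := by simp [conjWeight]

/-- `w` is a product of at most `n` conjugates of relators of total weight at most `t`. The weight
is what decreases when first edges are peeled off. -/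
def WeightedArea (R : Set (Word α)) (w : FreeGroup α) (n t : ℕ) : Prop :=
  ∃ L, (∀ p ∈ L, p.2 ∈ R) ∧ conjProd L = w ∧ L.length ≤ n ∧ conjWeight L ≤ t

namespace WeightedArea

variable {R : Set (Word α)} {v w : FreeGroup α} {m n s t : ℕ}

lemma of_list {L : List (FreeGroup α × Word α)} (hL : ∀ p ∈ L, p.2 ∈ R) :
    WeightedArea R (conjProd L) L.length (conjWeight L) := ⟨L, hL, rfl, le_rfl, le_rfl⟩

lemma areaAtMost (h : WeightedArea R w n t) : AreaAtMost (FreeGroup.mk '' R) w n := by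
  obtain ⟨L, hL, rfl, hn, -⟩ := h
  exact (areaAtMost_conjProd hL).mono hn

lemma conj_of_mem {r : Word α} (hr : r ∈ R) (g : FreeGroup α) :
    WeightedArea R (g⁻¹ * FreeGroup.mk r * g) 1 (g.norm + 1) :=
  ⟨[(g, r)], by simpa using hr, by simp, le_rfl, le_rfl⟩

protected lemma mul (hv : WeightedArea R v m s) (hw : WeightedArea R w n t) :
    WeightedArea R (v * w) (m + n) (s + t) := by
  obtain ⟨L, hL, rfl, hm, hs⟩ := hv
  obtain ⟨M, hM, rfl, hn, ht⟩ := hw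
  refine ⟨L ++ M, ?_, conjProd_append L M, ?_, ?_⟩
  · simpa only [List.mem_append, or_imp, forall_and] using ⟨hL, hM⟩
  · rw [List.length_append]
    omega
  · rw [conjWeight_append]
    omega

protected lemma inv (hR : IsSymmetrized R) (h : WeightedArea R w n t) :
    WeightedArea R w⁻¹ n t := by
  obtain ⟨L, hL, rfl, hn, ht⟩ := h
  refine ⟨(L.map fun p => (p.1, FreeGroup.invRev p.2)).reverse, ?_, ?_, by simpa using hn, ?_⟩
  · intro p hp
    obtain ⟨q, hq, rfl⟩ := List.mem_map.1 (List.mem_reverse.1 hp)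
    exact hR.invRev_mem _ (hL q hq)
  · clear hL hn ht
    induction L with
    | nil => simp
    | cons p L ih => simp [ih, mk_invRev, mul_assoc, -FreeGroup.inv_mk, -FreeGroup.mul_mk]
  · simpa [conjWeight, List.sum_reverse, Function.comp_def] using ht

end WeightedArea

lemma AreaAtMost.exists_weightedArea {R : Set (Word α)} (hR : IsSymmetrized R)
    {w : FreeGroup α} {n : ℕ} (h : AreaAtMost (FreeGroup.mk '' R) w n) :
    ∃ t, WeightedArea R w n t := by
  obtain ⟨l, hn, L, rfl, hL, rfl⟩ := h
  suffices h : ∃ t, WeightedArea R (L.map fun p => p.1⁻¹ * p.2 * p.1).prod L.length t by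
    obtain ⟨t, M, hM, hprod, hlen, ht⟩ := h
    exact ⟨t, M, hM, hprod, hlen.trans hn, ht⟩
  clear hn
  induction L with
  | nil => exact ⟨0, [], by simp, rfl, le_rfl, le_rfl⟩
  | cons p L ih =>
    obtain ⟨t, ht⟩ := ih fun q hq => hL q (List.mem_cons_of_mem p hq)
    obtain ⟨r, hr, hrp⟩ : ∃ r ∈ R, FreeGroup.mk r = p.2 := by
      rcases hL p List.mem_cons_self with ⟨r, hr, hrp⟩ | ⟨r, hr, hrp⟩
      · exact ⟨r, hr, hrp⟩
      · exact ⟨FreeGroup.invRev r, hR.invRev_mem r hr, by rw [mk_invRev, hrp, inv_inv]⟩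
    have hcons := (WeightedArea.conj_of_mem hr p.1).mul ht
    rw [hrp, add_comm] at hcons
    exact ⟨_, hcons⟩

/-- The first letter of `x :: v` is folded with a later inverse letter, and the words on both
sides of that letter are filled with total area `n` and weight `t`. -/
def FirstEdgeFolds (R : Set (Word α)) (x : α × Bool) (v : Word α) (n t : ℕ) : Prop :=
  ∃ Z B, v = Z ++ letterInv x :: B ∧ ∃ m₁ m₂ t₁ t₂, WeightedArea R (FreeGroup.mk Z) m₁ t₁ ∧
    WeightedArea R (FreeGroup.mk B) m₂ t₂ ∧ m₁ + m₂ ≤ n ∧ t₁ + t₂ ≤ t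

lemma FirstEdgeFolds.mono {R : Set (Word α)} {x : α × Bool} {v : Word α} {m n s t : ℕ}
    (h : FirstEdgeFolds R x v m s) (hmn : m ≤ n) (hst : s ≤ t) : FirstEdgeFolds R x v n t :=
  let ⟨Z, B, hv, m₁, m₂, t₁, t₂, hZ, hB, hm, ht⟩ := h
  ⟨Z, B, hv, m₁, m₂, t₁, t₂, hZ, hB, hm.trans hmn, ht.trans hst⟩

/-- The first-edge dichotomy for reduced words filled with weight `t`. -/
def FirstEdgeDichotomy (R : Set (Word α)) (t : ℕ) : Prop :=
  ∀ n x v, FreeGroup.IsReduced (x :: v) → WeightedArea R (FreeGroup.mk (x :: v)) n t →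
    FirstEdgeOnCell R x v n ∨ ∃ s < t, FirstEdgeFolds R x v n s

lemma eq_toWord_append_letterInv_cons {x : α × Bool} {v : Word α} {z b : FreeGroup α}
    (hv : FreeGroup.IsReduced v)
    (h : FreeGroup.mk v = z * (FreeGroup.mk [x])⁻¹ * b) (hb : ¬∃ u, b.toWord = x :: u)
    (hz : ¬∃ u, z⁻¹.toWord = letterInv x :: u) :
    v = z.toWord ++ letterInv x :: b.toWord := by
  refine eq_of_isReduced_of_mk_eq hv ?_ ?_
  · refine isReduced_append_iff.2 ⟨FreeGroup.isReduced_toWord,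
      isReduced_cons_iff.2 ⟨fun y hy hyx => ?_, FreeGroup.isReduced_toWord⟩,
      fun y hy w hw hwy => ?_⟩
    · rw [hyx, letterInv_letterInv] at hy
      exact hb (List.head?_eq_some_iff.1 hy)
    · obtain rfl : letterInv x = w := by simpa using hw
      obtain rfl : x = y := by simpa using congrArg letterInv hwy
      obtain ⟨u, hu⟩ := List.getLast?_eq_some_iff.1 hy
      exact hz ⟨FreeGroup.invRev u, by simp [FreeGroup.toWord_inv, hu, invRev_eq_map_reverse]⟩
  · rw [mk_append, mk_cons, FreeGroup.mk_toWord, FreeGroup.mk_toWord, mk_letterInv, h, mul_assoc]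

lemma firstEdge_of_mk_eq_mul {R : Set (Word α)} (hR : IsSymmetrized R) {T : ℕ}
    (hT : ∀ t < T, FirstEdgeDichotomy R t) {s : ℕ} (hs : s < T) {m₁ m₂ t₁ t₂ : ℕ}
    (hst : t₁ + t₂ = s) {z b : FreeGroup α} (hz : WeightedArea R z m₁ t₁)
    (hb : WeightedArea R b m₂ t₂) {x : α × Bool} {v : Word α} (hred : FreeGroup.IsReduced (x :: v))
    (hv : FreeGroup.mk v = z * (FreeGroup.mk [x])⁻¹ * b) :
    FirstEdgeOnCell R x v (m₁ + m₂) ∨ FirstEdgeFolds R x v (m₁ + m₂) s := by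
  induction s using Nat.strong_induction_on generalizing m₁ m₂ t₁ t₂ z b with
  | _ s ih =>
  by_cases hbx : ∃ u, b.toWord = x :: u
  · obtain ⟨u, hu⟩ := hbx
    have hbu : FreeGroup.mk (x :: u) = b := by rw [← hu, FreeGroup.mk_toWord]
    have hvu : FreeGroup.mk v = z * FreeGroup.mk u := by
      rw [hv, ← hbu, mk_cons x u]
      group
    rcases hT t₂ (by omega) m₂ x u (hu ▸ FreeGroup.isReduced_toWord) (hbu ▸ hb) with
      hcell | ⟨t, ht, Z, B, rfl, k₁, k₂, p₁, p₂, hZ, hB, hk, hp⟩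
    · exact Or.inl (hcell.of_mul_mk hz.areaAtMost hvu)
    · refine (ih (t₁ + p₁ + p₂) (by omega) (by omega) rfl (hz.mul hZ) hB ?_).imp
        (·.mono (by omega)) (·.mono (by omega) (by omega))
      rw [hvu, mk_append, mk_cons, mk_letterInv]
      group
  by_cases hzx : ∃ u, z⁻¹.toWord = letterInv x :: u
  · obtain ⟨u, hu⟩ := hzx
    have hzu : FreeGroup.mk (letterInv x :: u) = z⁻¹ := by rw [← hu, FreeGroup.mk_toWord]
    have hvu : FreeGroup.mk v = (FreeGroup.mk u)⁻¹ * b := by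
      rw [hv, ← inv_inv z, ← hzu, mk_cons, mk_letterInv]
      group
    rcases hT t₁ (by omega) m₁ _ u (hu ▸ FreeGroup.isReduced_toWord) (hzu ▸ hz.inv hR) with
      hcell | ⟨t, ht, Z, B, rfl, k₁, k₂, p₁, p₂, hZ, hB, hk, hp⟩
    · exact Or.inl (hcell.of_mk_inv_mul hR hb.areaAtMost hvu)
    · refine (ih (p₂ + (p₁ + t₂)) (by omega) (by omega) rfl (hB.inv hR) ((hZ.inv hR).mul hb) ?_).imp
        (·.mono (by omega)) (·.mono (by omega) (by omega))
      rw [hvu, mk_append, mk_cons, mk_letterInv, mk_letterInv]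
      group
  · refine Or.inr ⟨z.toWord, b.toWord, ?_, m₁, m₂, t₁, t₂, ?_, ?_, le_rfl, hst.le⟩
    · exact eq_toWord_append_letterInv_cons (isReduced_cons_iff.1 hred).2 hv hbx hzx
    · rwa [FreeGroup.mk_toWord]
    · rwa [FreeGroup.mk_toWord]

/-- The word `f⁻¹ r f` of the factor `(f, r)`. -/
def factorWord (p : FreeGroup α × Word α) : Word α :=
  FreeGroup.invRev p.1.toWord ++ (p.2 ++ p.1.toWord)

lemma mk_factorWord (p : FreeGroup α × Word α) :
    FreeGroup.mk (factorWord p) = p.1⁻¹ * FreeGroup.mk p.2 * p.1 := by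
  rw [factorWord, mk_append, mk_append, mk_invRev, FreeGroup.mk_toWord, mul_assoc]

lemma mk_flatMap_factorWord (L : List (FreeGroup α × Word α)) :
    FreeGroup.mk (L.flatMap factorWord) = conjProd L := by
  induction L with
  | nil => rfl
  | cons p L ih => rw [List.flatMap_cons, mk_append, ih, mk_factorWord, conjProd_cons]

lemma exists_factor_of_flatMap_eq {L : List (FreeGroup α × Word α)} {P Q : Word α}
    {x : α × Bool} (h : L.flatMap factorWord = P ++ x :: Q) :
    ∃ L₁ p L₂ a b, L = L₁ ++ p :: L₂ ∧ factorWord p = a ++ x :: b ∧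
      FreeGroup.mk P = conjProd L₁ * FreeGroup.mk a ∧
      FreeGroup.mk Q = FreeGroup.mk b * conjProd L₂ := by
  induction L generalizing P with
  | nil => simp at h
  | cons p L ih =>
    rw [List.flatMap_cons] at h
    rcases append_eq_append_cons h with ⟨b, hp, hQ⟩ | ⟨a, hP, hL⟩
    · exact ⟨[], p, L, P, b, rfl, hp, by simp, by rw [hQ, mk_append, mk_flatMap_factorWord]⟩
    · obtain ⟨L₁, q, L₂, a', b, rfl, hq, ha, hQ⟩ := ih hL
      refine ⟨p :: L₁, q, L₂, a', b, rfl, hq, ?_, hQ⟩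
      rw [hP, mk_append, ha, mk_factorWord, conjProd_cons, ← mul_assoc]

lemma firstEdge_of_conj_of_norm_lt {R : Set (Word α)} {T : ℕ}
    (hT : ∀ t < T, FirstEdgeDichotomy R t) {m₁ m₂ t₁ t₂ : ℕ} {z c f g : FreeGroup α}
    {r v : Word α} {x : α × Bool} (hr : r ∈ R) (hz : WeightedArea R z m₁ t₁)
    (hc : WeightedArea R c m₂ t₂) (hg : g.norm < f.norm) (hweight : t₁ + (f.norm + 1) + t₂ ≤ T)
    (hred : FreeGroup.IsReduced (x :: v))
    (h : FreeGroup.mk (x :: v) = g⁻¹ * FreeGroup.mk r * g * z * c) :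
    FirstEdgeOnCell R x v (m₁ + 1 + m₂) ∨ ∃ s < T, FirstEdgeFolds R x v (m₁ + 1 + m₂) s := by
  rcases hT (g.norm + 1 + t₁ + t₂) (by omega) _ x v hred
    (h ▸ ((WeightedArea.conj_of_mem hr g).mul hz).mul hc) with hcell | ⟨s, hs, hfold⟩
  · exact Or.inl (hcell.mono (by omega))
  · exact Or.inr ⟨s, by omega, hfold.mono (by omega) le_rfl⟩

lemma firstEdge_of_mem_conjugator_inv {R : Set (Word α)} (hR : IsSymmetrized R) {T : ℕ}
    (hT : ∀ t < T, FirstEdgeDichotomy R t) {m₁ m₂ t₁ t₂ : ℕ} {c f : FreeGroup α}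
    {r v a k : Word α} {x : α × Bool} (hr : r ∈ R)
    (hz : WeightedArea R (FreeGroup.mk a)⁻¹ m₁ t₁) (hc : WeightedArea R c m₂ t₂)
    (hf : f⁻¹ = FreeGroup.mk a * FreeGroup.mk [x] * FreeGroup.mk k)
    (hnorm : f.norm = a.length + 1 + k.length) (hweight : t₁ + (f.norm + 1) + t₂ ≤ T)
    (hred : FreeGroup.IsReduced (x :: v))
    (hv : FreeGroup.mk v = FreeGroup.mk k * FreeGroup.mk r * f * c) :
    FirstEdgeOnCell R x v (m₁ + 1 + m₂) ∨ ∃ s < T, FirstEdgeFolds R x v (m₁ + 1 + m₂) s := by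
  have hf' : f = (FreeGroup.mk k)⁻¹ * (FreeGroup.mk [x])⁻¹ * (FreeGroup.mk a)⁻¹ := by
    rw [← inv_inv f, hf]
    group
  have hk : (FreeGroup.mk k)⁻¹.norm ≤ k.length :=
    FreeGroup.norm_inv_eq.trans_le FreeGroup.norm_mk_le
  rcases eq_or_ne a [] with rfl | ha
  · refine (firstEdge_of_mk_eq_mul hR hT (s := (FreeGroup.mk k)⁻¹.norm + 1 + t₂) (by omega) rfl
      (WeightedArea.conj_of_mem hr (FreeGroup.mk k)⁻¹) hc hred ?_).imp
      (·.mono (by omega)) fun hfold => ⟨_, by omega, hfold.mono (by omega) le_rfl⟩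
    rw [hv, hf', ← FreeGroup.one_eq_mk]
    group
  · have ha_pos := List.length_pos_iff.2 ha
    have hxk : (FreeGroup.mk (x :: k))⁻¹.norm ≤ k.length + 1 :=
      FreeGroup.norm_inv_eq.trans_le FreeGroup.norm_mk_le
    refine firstEdge_of_conj_of_norm_lt hT (g := (FreeGroup.mk (x :: k))⁻¹) hr hz hc (by omega)
      hweight hred ?_
    rw [mk_cons x v, mk_cons x k, hv, hf']
    group

lemma firstEdge_of_mem_conjugator {R : Set (Word α)} {T : ℕ}
    (hT : ∀ t < T, FirstEdgeDichotomy R t) {m₁ m₂ t₁ t₂ : ℕ} {c f : FreeGroup α}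
    {r v a g b : Word α} {x : α × Bool} (hr : r ∈ R)
    (hz : WeightedArea R (FreeGroup.mk a)⁻¹ m₁ t₁) (hc : WeightedArea R c m₂ t₂)
    (ha : FreeGroup.mk a = f⁻¹ * FreeGroup.mk r * FreeGroup.mk g)
    (hf : f.toWord = g ++ x :: b) (hweight : t₁ + (f.norm + 1) + t₂ ≤ T)
    (hred : FreeGroup.IsReduced (x :: v)) (hv : FreeGroup.mk v = FreeGroup.mk b * c) :
    FirstEdgeOnCell R x v (m₁ + 1 + m₂) ∨ ∃ s < T, FirstEdgeFolds R x v (m₁ + 1 + m₂) s := by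
  have hnorm : f.norm = g.length + (b.length + 1) := by
    rw [FreeGroup.norm, hf, List.length_append, List.length_cons]
  have hg : (FreeGroup.mk g).norm < f.norm := FreeGroup.norm_mk_le.trans_lt (by omega)
  have hf' : f = FreeGroup.mk g * FreeGroup.mk [x] * FreeGroup.mk b := by
    rw [← FreeGroup.mk_toWord (x := f), hf, mk_append, mk_cons x b, mul_assoc]
  refine firstEdge_of_conj_of_norm_lt hT hr hz hc hg hweight hred ?_
  rw [mk_cons x v, hv, ha, hf']
  group

theorem firstEdgeDichotomy {R : Set (Word α)} (hR : IsSymmetrized R) (t : ℕ) :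
    FirstEdgeDichotomy R t := by
  induction t using Nat.strong_induction_on with
  | _ T hT =>
  rintro n x v hred ⟨L, hL, hprod, hn, ht⟩
  obtain ⟨P, Q, hPQ, hP, hQ⟩ : ∃ P Q, L.flatMap factorWord = P ++ x :: Q ∧ FreeGroup.mk P = 1 ∧
      FreeGroup.mk Q = FreeGroup.mk v := by
    refine exists_letter_of_red_cons ?_
    rw [← hred.reduce_eq, ← FreeGroup.reduce.sound ((mk_flatMap_factorWord L).trans hprod)]
    exact FreeGroup.reduce.red
  obtain ⟨L₁, ⟨f, r⟩, L₂, a, b, rfl, hfactor, hPa, hQb⟩ := exists_factor_of_flatMap_eq hPQ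
  simp only [List.mem_append, List.mem_cons, or_imp, forall_and, forall_eq] at hL
  obtain ⟨hL₁, hr, hL₂⟩ := hL
  rw [List.length_append, List.length_cons] at hn
  rw [conjWeight_append, conjWeight_cons] at ht
  have hz := WeightedArea.of_list hL₁
  rw [eq_inv_of_mul_eq_one_left (hPa.symm.trans hP)] at hz
  have hc := WeightedArea.of_list hL₂
  have hv := hQ.symm.trans hQb
  suffices h : FirstEdgeOnCell R x v (L₁.length + 1 + L₂.length) ∨
      ∃ s < T, FirstEdgeFolds R x v (L₁.length + 1 + L₂.length) s from
    h.imp (·.mono (by omega)) fun ⟨s, hs, h⟩ => ⟨s, hs, h.mono (by omega) le_rfl⟩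
  rcases append_eq_append_cons hfactor with ⟨k, hf, rfl⟩ | ⟨a', rfl, hrf⟩
  · have hlen := congrArg List.length hf
    rw [FreeGroup.invRev_length, List.length_append, List.length_cons] at hlen
    refine firstEdge_of_mem_conjugator_inv hR hT hr hz hc (k := k) ?_
      (hlen.trans (by omega)) (by omega) hred ?_
    · rw [← FreeGroup.mk_toWord (x := f), ← mk_invRev, hf, mk_append, mk_cons x k, mul_assoc]
    · rw [hv, mk_append, mk_append, FreeGroup.mk_toWord, mul_assoc _ _ f]
  rcases append_eq_append_cons hrf with ⟨s, rfl, rfl⟩ | ⟨g, rfl, hf⟩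
  · refine Or.inl (firstEdge_of_mem_relator hR hr hz.areaAtMost hc.areaAtMost (f := f) ?_ ?_)
    · rw [mk_append, mk_invRev, FreeGroup.mk_toWord]
    · rw [hv, mk_append, FreeGroup.mk_toWord]
  · refine firstEdge_of_mem_conjugator hT hr hz hc ?_ hf (by omega) hred hv
    rw [mk_append, mk_append, mk_invRev, FreeGroup.mk_toWord, mul_assoc]

end FirstEdge

/-! ### Boundaries of van Kampen diagrams -/

section Boundary

variable {α Q I J : Type*}

/-- A boundary edge of a van Kampen diagram mapped to a Cayley graph with vertex set `Q`. It starts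
at `vertex`, and the boundary of its `cell` reads `letter :: rest` from there. Unless `isBreak` is
set, the edge continues the preceding boundary edge along the same cell. -/
structure BoundaryEdge (α Q I : Type*) where
  vertex : Q
  letter : α × Bool
  rest : Word α
  cell : I
  isBreak : Bool

/-- The word read along a list of boundary edges. -/
def boundaryWord (T : List (BoundaryEdge α Q I)) : Word α := T.map BoundaryEdge.letter

@[simp] lemma boundaryWord_nil : boundaryWord ([] : List (BoundaryEdge α Q I)) = [] := rfl

@[simp] lemma boundaryWord_cons (a : BoundaryEdge α Q I) (T : List (BoundaryEdge α Q I)) :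
    boundaryWord (a :: T) = a.letter :: boundaryWord T := rfl

@[simp] lemma boundaryWord_append (S T : List (BoundaryEdge α Q I)) :
    boundaryWord (S ++ T) = boundaryWord S ++ boundaryWord T := List.map_append

@[simp] lemma length_boundaryWord (T : List (BoundaryEdge α Q I)) :
    (boundaryWord T).length = T.length := List.length_map _

/-- A nonempty list is cyclically chained by `r` if `r` also holds from its last to its first
entry. -/
def IsCyclicChain {β : Type*} (r : β → β → Prop) (L : List β) : Prop :=
  L.IsChain r ∧ ∀ x ∈ L.getLast?, ∀ y ∈ L.head?, r x y

lemma isCyclicChain_append {β : Type*} {r : β → β → Prop} {A B : List β} (hA : A ≠ [])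
    (hB : B ≠ []) :
    IsCyclicChain r (A ++ B) ↔ A.IsChain r ∧ B.IsChain r ∧
      (∀ x ∈ A.getLast?, ∀ y ∈ B.head?, r x y) ∧ ∀ x ∈ B.getLast?, ∀ y ∈ A.head?, r x y := by
  rw [IsCyclicChain, List.isChain_append, List.getLast?_append_of_ne_nil _ hB,
    List.head?_append_of_ne_nil _ hA]
  tauto

lemma IsCyclicChain.append_comm {β : Type*} {r : β → β → Prop} {A B : List β}
    (h : IsCyclicChain r (A ++ B)) : IsCyclicChain r (B ++ A) := by
  by_cases hA : A = []
  · simpa [hA] using h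
  by_cases hB : B = []
  · simpa [hB] using h
  rw [isCyclicChain_append hA hB] at h
  rw [isCyclicChain_append hB hA]
  tauto

/-- The sum of a function `θ` of oriented edges over a list of boundary edges. -/
def edgeSum (θ : Q → α × Bool → ℤ) (T : List (BoundaryEdge α Q I)) : ℤ :=
  (T.map fun a => θ a.vertex a.letter).sum

@[simp] lemma edgeSum_append (θ : Q → α × Bool → ℤ) (S T : List (BoundaryEdge α Q I)) :
    edgeSum θ (S ++ T) = edgeSum θ S + edgeSum θ T := by
  simp [edgeSum]

section Follows

variable [Group Q] (ψ : FreeGroup α →* Q)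

/-- The boundary edge `b` may follow `a`. -/
def Follows (a b : BoundaryEdge α Q I) : Prop :=
  b.vertex = a.vertex * ψ (FreeGroup.mk [a.letter]) ∧
    (b.isBreak = false → b.cell = a.cell ∧ b.letter :: b.rest = a.rest ++ [a.letter])

/-- The sum of a function `θ` of oriented edges along the path that starts at a given vertex and
reads a given word. -/
def pathSum (θ : Q → α × Bool → ℤ) : Q → Word α → ℤ
  | _, [] => 0
  | g, x :: r => θ g x + pathSum θ (g * ψ (FreeGroup.mk [x])) r

/-- Reversing an oriented edge changes the sign of `θ`. -/
def IsAntisymmetric (θ : Q → α × Bool → ℤ) : Prop :=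
  ∀ p x, θ (p * ψ (FreeGroup.mk [x])) (letterInv x) = -θ p x

variable {ψ}

lemma pathSum_append (θ : Q → α × Bool → ℤ) (u v : Word α) (g : Q) :
    pathSum ψ θ g (u ++ v) = pathSum ψ θ g u + pathSum ψ θ (g * ψ (FreeGroup.mk u)) v := by
  induction u generalizing g with
  | nil => simp [pathSum, ← FreeGroup.one_eq_mk]
  | cons x u ih =>
    rw [List.cons_append, pathSum, ih, pathSum, mk_cons x u, map_mul, mul_assoc, add_assoc]

lemma pathSum_invRev {θ : Q → α × Bool → ℤ} (hθ : IsAntisymmetric ψ θ) (u : Word α) (g : Q) :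
    pathSum ψ θ (g * ψ (FreeGroup.mk u)) (FreeGroup.invRev u) = -pathSum ψ θ g u := by
  induction u generalizing g with
  | nil => simp [pathSum]
  | cons x u ih =>
    have hx : FreeGroup.invRev (x :: u) = FreeGroup.invRev u ++ [letterInv x] := by
      simp [invRev_eq_map_reverse]
    rw [hx, pathSum_append, pathSum, pathSum, pathSum, mk_cons x u, map_mul, ← mul_assoc, ih,
      mk_invRev, map_inv, mul_inv_cancel_right, hθ]
    ring

lemma edgeSum_eq_pathSum (θ : Q → α × Bool → ℤ) {T : List (BoundaryEdge α Q I)} {g : Q}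
    (hT : T.IsChain (Follows ψ)) (hg : ∀ a ∈ T.head?, a.vertex = g) :
    edgeSum θ T = pathSum ψ θ g (boundaryWord T) := by
  induction T generalizing g with
  | nil => rfl
  | cons a T ih =>
    have ha : a.vertex = g := hg a rfl
    rw [List.isChain_cons] at hT
    rw [edgeSum, List.map_cons, List.sum_cons, boundaryWord_cons, pathSum, ha]
    exact congrArg _ (ih hT.2 fun b hb => by rw [(hT.1 b hb).1, ha])

lemma vertex_head_of_isChain_append {S T : List (BoundaryEdge α Q I)}
    (h : (S ++ T).IsChain (Follows ψ)) {a b : BoundaryEdge α Q I} (ha : a ∈ S.head?)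
    (hb : b ∈ T.head?) : b.vertex = a.vertex * ψ (FreeGroup.mk (boundaryWord S)) := by
  induction S generalizing a with
  | nil => simp at ha
  | cons c S ih =>
    obtain rfl : c = a := by simpa using ha
    rw [List.cons_append, List.isChain_cons] at h
    rw [boundaryWord_cons, mk_cons c.letter, map_mul, ← mul_assoc]
    rcases S with _ | ⟨d, S⟩
    · simpa [← FreeGroup.one_eq_mk] using (h.1 b hb).1
    · rw [ih h.2 rfl, (h.1 d rfl).1]

lemma take_boundaryWord_isPrefix_of_isChain {a : BoundaryEdge α Q I}
    {S : List (BoundaryEdge α Q I)} (h : (a :: S).IsChain (Follows ψ))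
    (hS : ∀ b ∈ S, b.isBreak = false) :
    (boundaryWord (a :: S)).take (a.rest.length + 1) <+: a.letter :: a.rest := by
  induction S generalizing a with
  | nil => simp
  | cons b S ih =>
    rw [List.isChain_cons_cons] at h
    obtain ⟨-, hrest⟩ := h.1.2 (hS b (by simp))
    have hlen : b.rest.length = a.rest.length := by simpa using congrArg List.length hrest
    have hpre := ih h.2 fun c hc => hS c (by simp [hc])
    rw [boundaryWord_cons, List.take_succ_cons, List.cons_prefix_cons]
    refine ⟨rfl, ?_⟩
    rw [hrest, hlen] at hpre
    have hsub : (boundaryWord (b :: S)).take a.rest.length <+: a.rest ++ [a.letter] :=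
      (List.take_prefix_take_left (Nat.le_succ _)).trans hpre
    exact List.prefix_of_prefix_length_le hsub (List.prefix_append _ _) (by simp)

lemma cell_eq_of_isChain {a : BoundaryEdge α Q I} {S : List (BoundaryEdge α Q I)}
    (h : (a :: S).IsChain (Follows ψ)) (hS : ∀ b ∈ S, b.isBreak = false) :
    ∀ b ∈ S, b.cell = a.cell := by
  induction S generalizing a with
  | nil => simp
  | cons b S ih =>
    rw [List.isChain_cons_cons] at h
    have hb : b.cell = a.cell := (h.1.2 (hS b (by simp))).1
    have hrec := ih h.2 fun c hc => hS c (by simp [hc])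
    exact List.forall_mem_cons.2 ⟨hb, fun c hc => (hrec c hc).trans hb⟩

end Follows

section Counts

open scoped Classical in
/-- The number of boundary edges of the cell `c`. -/
noncomputable def edgeCount (c : I) (T : List (BoundaryEdge α Q I)) : ℕ :=
  T.countP fun a => decide (a.cell = c)

open scoped Classical in
/-- The number of boundary edges of the cell `c` at which a break occurs. -/
noncomputable def breakCount (c : I) (T : List (BoundaryEdge α Q I)) : ℕ :=
  T.countP fun a => decide (a.isBreak ∧ a.cell = c)

/-- The number of boundary edges at which a break occurs. -/
def totalBreaks (T : List (BoundaryEdge α Q I)) : ℕ := T.countP fun a => a.isBreak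

variable (c : I) (a : BoundaryEdge α Q I) (S T : List (BoundaryEdge α Q I))

@[simp] lemma edgeCount_nil : edgeCount c ([] : List (BoundaryEdge α Q I)) = 0 := rfl

@[simp] lemma breakCount_nil : breakCount c ([] : List (BoundaryEdge α Q I)) = 0 := rfl

@[simp] lemma totalBreaks_nil : totalBreaks ([] : List (BoundaryEdge α Q I)) = 0 := rfl

@[simp] lemma edgeCount_append : edgeCount c (S ++ T) = edgeCount c S + edgeCount c T := by
  simp [edgeCount]

@[simp] lemma breakCount_append : breakCount c (S ++ T) = breakCount c S + breakCount c T := by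
  simp [breakCount]

@[simp] lemma totalBreaks_append : totalBreaks (S ++ T) = totalBreaks S + totalBreaks T := by
  simp [totalBreaks]

open scoped Classical in
lemma edgeCount_cons : edgeCount c (a :: T) = edgeCount c T + if a.cell = c then 1 else 0 := by
  simp [edgeCount, List.countP_cons]

open scoped Classical in
lemma breakCount_cons :
    breakCount c (a :: T) = breakCount c T + if a.isBreak ∧ a.cell = c then 1 else 0 := by
  simp [breakCount, List.countP_cons]

lemma totalBreaks_cons : totalBreaks (a :: T) = totalBreaks T + if a.isBreak then 1 else 0 := by
  simp [totalBreaks, List.countP_cons]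

variable {c T}

lemma edgeCount_eq_length (h : ∀ b ∈ T, b.cell = c) : edgeCount c T = T.length := by
  simpa [edgeCount] using h

lemma edgeCount_eq_zero (h : ∀ b ∈ T, b.cell ≠ c) : edgeCount c T = 0 := by
  simpa [edgeCount] using h

lemma totalBreaks_eq_zero (h : ∀ b ∈ T, b.isBreak = false) : totalBreaks T = 0 := by
  simpa [totalBreaks] using h

variable (c T)

lemma edgeCount_le_length : edgeCount c T ≤ T.length := List.countP_le_length

lemma breakCount_le_totalBreaks : breakCount c T ≤ totalBreaks T :=
  List.countP_mono_left fun _ _ h => by simp_all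

open scoped Classical in
lemma sum_breakCount [Fintype I] : ∑ c, breakCount c T = totalBreaks T := by
  induction T with
  | nil => simp
  | cons a T ih =>
    simp only [breakCount_cons, totalBreaks_cons, Finset.sum_add_distrib, ih]
    by_cases h : a.isBreak <;> simp [h]

end Counts

section Embed

/-- Sets the break flag of the first edge. -/
def markHead : List (BoundaryEdge α Q I) → List (BoundaryEdge α Q I)
  | [] => []
  | a :: T => { a with isBreak := true } :: T

/-- Renames the cell of a boundary edge. -/
def BoundaryEdge.mapCell (f : I → J) (a : BoundaryEdge α Q I) : BoundaryEdge α Q J :=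
  { a with cell := f a.cell }

/-- A boundary path as part of the boundary of a larger diagram, whose cells contain those of the
old one via `f`. -/
def embed (f : I → J) (T : List (BoundaryEdge α Q I)) : List (BoundaryEdge α Q J) :=
  (markHead T).map (.mapCell f)

variable (T : List (BoundaryEdge α Q I))

lemma boundaryWord_markHead : boundaryWord (markHead T) = boundaryWord T := by cases T <;> rfl

lemma length_markHead : (markHead T).length = T.length := by cases T <;> rfl

lemma totalBreaks_markHead_le : totalBreaks (markHead T) ≤ totalBreaks T + 1 := by
  cases T <;> simp [markHead, totalBreaks_cons]

lemma edgeCount_markHead (c : I) : edgeCount c (markHead T) = edgeCount c T := by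
  cases T <;> simp [markHead, edgeCount_cons]

open scoped Classical in
lemma breakCount_markHead_le (c : I) : breakCount c (markHead T) ≤ breakCount c T +
    if ∃ a ∈ T.head?, a.isBreak = false ∧ a.cell = c then 1 else 0 := by
  rcases T with _ | ⟨a, T⟩
  · simp [markHead]
  · by_cases h : a.isBreak <;> simp [markHead, breakCount_cons, h]

variable (f : I → J)

lemma embed_eq_nil_iff {T : List (BoundaryEdge α Q I)} : embed f T = [] ↔ T = [] := by
  cases T <;> simp [embed, markHead]

lemma boundaryWord_embed : boundaryWord (embed f T) = boundaryWord T := by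
  rw [← boundaryWord_markHead T]
  simp [boundaryWord, embed, BoundaryEdge.mapCell, Function.comp_def]

lemma totalBreaks_embed : totalBreaks (embed f T) = totalBreaks (markHead T) := by
  simp [totalBreaks, embed, BoundaryEdge.mapCell, List.countP_map, Function.comp_def]

lemma edgeSum_embed (θ : Q → α × Bool → ℤ) : edgeSum θ (embed f T) = edgeSum θ T := by
  cases T <;> simp [edgeSum, embed, markHead, BoundaryEdge.mapCell, Function.comp_def]

variable {f}

open scoped Classical in
lemma edgeCount_embed (hf : Injective f) (c : I) :
    edgeCount (f c) (embed f T) = edgeCount c T := by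
  rw [← edgeCount_markHead T c]
  simp [edgeCount, embed, BoundaryEdge.mapCell, List.countP_map, Function.comp_def, hf.eq_iff]

open scoped Classical in
lemma breakCount_embed (hf : Injective f) (c : I) :
    breakCount (f c) (embed f T) = breakCount c (markHead T) := by
  simp [breakCount, embed, BoundaryEdge.mapCell, List.countP_map, Function.comp_def, hf.eq_iff]

lemma edgeCount_embed_of_notMem_range {d : J} (hd : d ∉ Set.range f) :
    edgeCount d (embed f T) = 0 := by
  refine edgeCount_eq_zero fun b hb h => ?_
  obtain ⟨a, -, rfl⟩ := List.mem_map.1 hb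
  exact hd ⟨_, h⟩

lemma breakCount_embed_of_notMem_range {d : J} (hd : d ∉ Set.range f) :
    breakCount d (embed f T) = 0 := by
  have h (c : I) : f c ≠ d := fun h => hd ⟨c, h⟩
  simp [breakCount, embed, BoundaryEdge.mapCell, List.countP_map, Function.comp_def, h]

variable {T}

lemma exists_of_mem_head?_embed {b : BoundaryEdge α Q J} (h : b ∈ (embed f T).head?) :
    ∃ a ∈ T.head?, b = ⟨a.vertex, a.letter, a.rest, f a.cell, true⟩ := by
  rcases T with _ | ⟨a, T⟩
  · simp [embed, markHead] at h
  · exact ⟨a, rfl, (Option.mem_some_iff.1 h).symm⟩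

lemma exists_of_mem_getLast?_embed {b : BoundaryEdge α Q J} (h : b ∈ (embed f T).getLast?) :
    ∃ a ∈ T.getLast?, b.vertex = a.vertex ∧ b.letter = a.letter := by
  obtain ⟨a, ha, rfl⟩ : ∃ a ∈ (markHead T).getLast?, a.mapCell f = b := by
    simpa [embed, List.getLast?_map] using h
  rcases T with _ | ⟨c, _ | ⟨d, T⟩⟩
  · simp [markHead] at ha
  · obtain rfl : _ = a := Option.mem_some_iff.1 ha
    exact ⟨c, rfl, rfl, rfl⟩
  · exact ⟨a, by simpa [markHead] using ha, rfl, rfl⟩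

lemma exists_of_markHead_eq_append_cons {U V : List (BoundaryEdge α Q I)}
    {b : BoundaryEdge α Q I} (h : markHead T = U ++ b :: V) :
    ∃ U' a, T = U' ++ a :: V ∧ boundaryWord U' = boundaryWord U ∧ a.vertex = b.vertex ∧
      a.letter = b.letter ∧ a.rest = b.rest ∧ a.cell = b.cell := by
  rcases T with _ | ⟨a, T⟩
  · simp [markHead] at h
  rcases U with _ | ⟨u, U⟩
  · obtain ⟨rfl, rfl⟩ := List.cons.inj h
    exact ⟨[], a, rfl, rfl, rfl, rfl, rfl, rfl⟩
  · obtain ⟨rfl, rfl⟩ := List.cons.inj h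
    exact ⟨a :: U, b, rfl, rfl, rfl, rfl, rfl, rfl⟩

lemma exists_of_embed_eq_append_cons {U V : List (BoundaryEdge α Q J)} {b : BoundaryEdge α Q J}
    (h : embed f T = U ++ b :: V) :
    ∃ U' a V', T = U' ++ a :: V' ∧ boundaryWord U' = boundaryWord U ∧
      boundaryWord V' = boundaryWord V ∧ b.vertex = a.vertex ∧ b.letter = a.letter ∧
      b.rest = a.rest ∧ b.cell = f a.cell := by
  obtain ⟨U₁, W, hT, rfl, hW⟩ := List.map_eq_append_iff.1 h
  obtain ⟨b', V₁, rfl, rfl, rfl⟩ := List.map_eq_cons_iff.1 hW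
  obtain ⟨U', a, hT', hU, hvertex, hletter, hrest, hcell⟩ := exists_of_markHead_eq_append_cons hT
  refine ⟨U', a, V₁, hT', hU.trans ?_, ?_, hvertex.symm, hletter.symm, hrest.symm,
    congrArg f hcell.symm⟩ <;>
    simp [boundaryWord, BoundaryEdge.mapCell, Function.comp_def]

lemma exists_embed_append_eq (A B : List (BoundaryEdge α Q I)) :
    ∃ A' B', embed f (A ++ B) = A' ++ B' ∧ boundaryWord A' = boundaryWord A ∧
      boundaryWord B' = boundaryWord B ∧ (∀ a ∈ A', ∃ b ∈ A, a.cell = f b.cell) ∧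
      ∀ b ∈ B'.head?, ∃ c ∈ B.head?, b.vertex = c.vertex := by
  rcases A with _ | ⟨a, A⟩
  · refine ⟨[], embed f B, rfl, rfl, boundaryWord_embed .., by simp, fun b hb => ?_⟩
    obtain ⟨c, hc, rfl⟩ := exists_of_mem_head?_embed hb
    exact ⟨c, hc, rfl⟩
  · refine ⟨embed f (a :: A), B.map (.mapCell f), by simp [embed, markHead], boundaryWord_embed ..,
      by simp [boundaryWord, BoundaryEdge.mapCell, Function.comp_def], ?_, ?_⟩
    · simp only [embed, markHead, List.map_cons, List.forall_mem_cons, List.forall_mem_map]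
      exact ⟨⟨a, by simp, rfl⟩, fun b hb => ⟨b, by simp [hb], rfl⟩⟩
    · intro b hb
      rw [List.head?_map, Option.mem_map] at hb
      obtain ⟨c, hc, rfl⟩ := hb
      exact ⟨c, hc, rfl⟩

lemma isChain_markHead [Group Q] {ψ : FreeGroup α →* Q} (h : T.IsChain (Follows ψ)) :
    (markHead T).IsChain (Follows ψ) := by
  cases T with
  | nil => exact h
  | cons a T =>
    rw [List.isChain_cons] at h
    rwa [markHead, List.isChain_cons]

lemma isChain_embed [Group Q] {ψ : FreeGroup α →* Q} (f : I → J) (h : T.IsChain (Follows ψ)) :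
    (embed f T).IsChain (Follows ψ) := by
  rw [embed, List.isChain_map]
  exact (isChain_markHead h).imp fun a b hab =>
    ⟨hab.1, fun hb => ⟨congrArg f (hab.2 hb).1, (hab.2 hb).2⟩⟩

end Embed

end Boundary

/-! ### Van Kampen diagrams over sixth groups -/

section SmallCancellationSystem

variable {α Q I : Type*}

/-- A symmetrized set of nonempty reduced relators satisfying `C'(1/6)`. -/
structure IsSixthSystem (R : Set (Word α)) : Prop extends IsSymmetrized R where
  isReduced : ∀ r ∈ R, FreeGroup.IsReduced r
  ne_nil : ∀ r ∈ R, r ≠ []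
  six_mul_length_lt : ∀ r ∈ R, ∀ s ∈ R, r ≠ s → ∀ u, u <+: r → u <+: s → 6 * u.length < r.length

lemma exists_eq_run_append (S : List (BoundaryEdge α Q I)) :
    ∃ B T, S = B ++ T ∧ (∀ b ∈ B, b.isBreak = false) ∧ ∀ b ∈ T.head?, b.isBreak = true := by
  refine ⟨S.takeWhile fun b => !b.isBreak, S.dropWhile fun b => !b.isBreak,
    List.takeWhile_append_dropWhile.symm, fun b hb => by simpa using List.mem_takeWhile_imp hb,
    fun b hb => ?_⟩
  have h := List.head?_dropWhile_not (fun b : BoundaryEdge α Q I => !b.isBreak) S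
  rw [hb] at h
  simpa using h

variable [Group Q]

/-- A path `S` along which a relator `boundaryWord S ++ σ` touches cells with boundary lengths
`len`, none of which is the mirror image of that relator. -/
structure IsInnerPath (R : Set (Word α)) (ψ : FreeGroup α →* Q) (len : I → ℕ)
    (S : List (BoundaryEdge α Q I)) (σ : Word α) : Prop where
  append_mem : boundaryWord S ++ σ ∈ R
  isChain : S.IsChain (Follows ψ)
  isBreak_head : ∀ a ∈ S.head?, a.isBreak = true
  cons_mem : ∀ a ∈ S, a.letter :: a.rest ∈ R
  length_rest : ∀ a ∈ S, a.rest.length + 1 = len a.cell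
  ne_mirror : ∀ S₀ a S₁, S = S₀ ++ a :: S₁ →
    a.letter :: a.rest ≠ boundaryWord (a :: S₁) ++ σ ++ boundaryWord S₀

namespace IsInnerPath

variable {R : Set (Word α)} {ψ : FreeGroup α →* Q} {len : I → ℕ} {a : BoundaryEdge α Q I}
  {B S T : List (BoundaryEdge α Q I)} {σ : Word α}

lemma of_append (hR : IsSymmetrized R) (h : IsInnerPath R ψ len (S ++ T) σ)
    (hT : ∀ b ∈ T.head?, b.isBreak = true) : IsInnerPath R ψ len T (σ ++ boundaryWord S) where
  append_mem := by
    simpa using hR.append_comm_mem (boundaryWord S) (boundaryWord T ++ σ)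
      (by simpa using h.append_mem)
  isChain := (List.isChain_append.1 h.isChain).2.1
  isBreak_head := hT
  cons_mem a ha := h.cons_mem a (by simp [ha])
  length_rest a ha := h.length_rest a (by simp [ha])
  ne_mirror S₀ a S₁ hS := by
    simpa using h.ne_mirror (S ++ S₀) a S₁ (by simp [hS])

/-- A run of an inner path along a single cell is a piece. -/
lemma six_mul_length_run_lt (hR : IsSixthSystem R) (h : IsInnerPath R ψ len (a :: B ++ T) σ)
    (hB : ∀ b ∈ B, b.isBreak = false) :
    6 * (B.length + 1) < len a.cell ∧ 6 * (B.length + 1) < B.length + 1 + T.length + σ.length := by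
  have hpre := take_boundaryWord_isPrefix_of_isChain (List.isChain_append.1 h.isChain).1 hB
  have hpre' : (boundaryWord (a :: B)).take (a.rest.length + 1) <+:
      boundaryWord (a :: B ++ T) ++ σ :=
    (List.take_prefix _ _).trans ⟨boundaryWord T ++ σ, by simp⟩
  have hmem := h.cons_mem a (by simp)
  have hne : a.letter :: a.rest ≠ boundaryWord (a :: B ++ T) ++ σ := by
    simpa using h.ne_mirror [] a (B ++ T) rfl
  have h₁ := hR.six_mul_length_lt _ hmem _ h.append_mem hne _ hpre hpre'
  have h₂ := hR.six_mul_length_lt _ h.append_mem _ hmem hne.symm _ hpre' hpre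
  simp only [List.length_take, length_boundaryWord, List.length_cons, List.length_append] at h₁ h₂
  have hlen := h.length_rest a (by simp)
  omega

lemma arc_estimates_of_length_le (hR : IsSixthSystem R) (n : ℕ)
    (hn : S.length ≤ n) (h : IsInnerPath R ψ len S σ) :
    6 * S.length + totalBreaks S ≤ totalBreaks S * (S.length + σ.length) ∧
      ∀ c, 6 * edgeCount c S + breakCount c S ≤ breakCount c S * len c := by
  induction n generalizing S σ with
  | zero => simp [List.length_eq_zero_iff.1 (Nat.le_zero.1 hn)]
  | succ n ih =>
    rcases S with _ | ⟨a, S⟩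
    · simp
    obtain ⟨B, T, rfl, hB, hT⟩ := exists_eq_run_append S
    have ha : a.isBreak = true := h.isBreak_head a rfl
    have hcell := cell_eq_of_isChain (List.isChain_append (l₁ := a :: B) |>.1 h.isChain).1 hB
    obtain ⟨ihlen, ihcell⟩ := ih (by simp at hn; omega)
      (of_append (S := a :: B) hR.toIsSymmetrized h hT)
    obtain ⟨hlen, hpath⟩ := six_mul_length_run_lt hR h hB
    have hB₀ := totalBreaks_eq_zero hB
    refine ⟨?_, fun c => ?_⟩
    · have hbreaks : totalBreaks (a :: (B ++ T)) = totalBreaks T + 1 := by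
        simp [totalBreaks_cons, ha, hB₀]
      rw [hbreaks, add_mul, one_mul]
      simp only [length_boundaryWord, List.length_append, List.length_cons] at ihlen ⊢
      have hcomm : T.length + (σ.length + (B.length + 1)) =
        B.length + T.length + 1 + σ.length := by omega
      rw [hcomm] at ihlen
      omega
    · have hBc : breakCount c B = 0 :=
        Nat.le_zero.1 ((breakCount_le_totalBreaks c B).trans_eq hB₀)
      rw [breakCount_cons, edgeCount_cons, breakCount_append, edgeCount_append, hBc, zero_add]
      by_cases hc : a.cell = c
      · have hcount := edgeCount_le_length c B
        have := ihcell c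
        rw [if_pos hc, if_pos ⟨ha, hc⟩, add_mul, one_mul, ← hc]
        rw [← hc] at this hcount
        omega
      · rw [edgeCount_eq_zero fun b hb => (hcell b hb).trans_ne hc, if_neg hc,
          if_neg fun h => hc h.2]
        simpa using ihcell c

lemma six_mul_length_add_totalBreaks_le (hR : IsSixthSystem R) (h : IsInnerPath R ψ len S σ) :
    6 * S.length + totalBreaks S ≤ totalBreaks S * (S.length + σ.length) :=
  (arc_estimates_of_length_le hR _ le_rfl h).1

lemma six_mul_edgeCount_add_breakCount_le (hR : IsSixthSystem R)
    (h : IsInnerPath R ψ len S σ) (c : I) :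
    6 * edgeCount c S + breakCount c S ≤ breakCount c S * len c :=
  (arc_estimates_of_length_le hR _ le_rfl h).2 c

lemma one_le_breakCount (hR : IsSixthSystem R) (h : IsInnerPath R ψ len S σ) {c : I}
    (hc : edgeCount c S ≠ 0) : 1 ≤ breakCount c S := by
  by_contra! hlt
  have hle := h.six_mul_edgeCount_add_breakCount_le hR c
  rw [Nat.lt_one_iff.1 hlt] at hle
  omega

end IsInnerPath

end SmallCancellationSystem

section DiskDiagram

variable {α Q : Type*} [Group Q]

/-- A disk diagram over the relators `R`, mapped to the Cayley graph with labelling `ψ`: its cell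
`c` reads `label c` from the vertex `base c`, and meets its neighbours and the boundary in at most
`arcs c` arcs. Planarity enters through the numerical consequences that are needed: the area of the
boundary word and of what remains when the cell of a boundary edge is removed, the discrete Stokes
formula `edgeSum_boundary`, the `C'(1/6)` estimate of the interior edges of a cell, and Euler's
formula. -/
structure DiskDiagram (R : Set (Word α)) (ψ : FreeGroup α →* Q) where
  Cell : Type
  [fintype : Fintype Cell]
  base : Cell → Q
  label : Cell → Word α
  arcs : Cell → ℕ
  boundary : List (BoundaryEdge α Q Cell)
  isCyclicChain : IsCyclicChain (Follows ψ) boundary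
  cons_mem : ∀ a ∈ boundary, a.letter :: a.rest ∈ R
  length_rest : ∀ a ∈ boundary, a.rest.length + 1 = (label a.cell).length
  exists_prefix : ∀ a ∈ boundary, ∃ q, q <+: label a.cell ∧
    a.vertex = base a.cell * ψ (FreeGroup.mk q)
  label_mem : ∀ c, label c ∈ R
  areaAtMost : AreaAtMost (FreeGroup.mk '' R) (FreeGroup.mk (boundaryWord boundary))
    (Fintype.card Cell)
  areaAtMost_remove : ∀ U a V, boundary = U ++ a :: V → AreaAtMost (FreeGroup.mk '' R)
    (FreeGroup.mk (boundaryWord U) * (FreeGroup.mk a.rest)⁻¹ * FreeGroup.mk (boundaryWord V))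
    (Fintype.card Cell - 1)
  edgeSum_boundary : ∀ θ, IsAntisymmetric ψ θ →
    edgeSum θ boundary = ∑ c, pathSum ψ θ (base c) (label c)
  six_mul_length_add_arcs_le : ∀ c, 6 * (label c).length + arcs c ≤
    6 * edgeCount c boundary + arcs c * (label c).length
  breakCount_le_arcs : ∀ c, breakCount c boundary ≤ arcs c
  euler : 6 + ∑ c, arcs c + 2 * totalBreaks boundary ≤ 6 * Fintype.card Cell

attribute [instance] DiskDiagram.fintype

namespace DiskDiagram

variable {R : Set (Word α)} {ψ : FreeGroup α →* Q}

/-- The word read along the boundary of a diagram. -/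
def word (D : DiskDiagram R ψ) : Word α := boundaryWord D.boundary

lemma areaAtMost_remove_append_comm (D : DiskDiagram R ψ)
    {A B U V : List (BoundaryEdge α Q D.Cell)} {a : BoundaryEdge α Q D.Cell}
    (hD : D.boundary = A ++ B) (h : B ++ A = U ++ a :: V) : AreaAtMost (FreeGroup.mk '' R)
      (FreeGroup.mk (boundaryWord U) * (FreeGroup.mk a.rest)⁻¹ * FreeGroup.mk (boundaryWord V))
      (Fintype.card D.Cell - 1) := by
  rcases append_eq_append_cons h with ⟨W, rfl, rfl⟩ | ⟨W, rfl, rfl⟩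
  · have hrem := D.areaAtMost_remove (A ++ U) a W (by simp [hD])
    rw [boundaryWord_append, mk_append, mul_assoc, mul_assoc] at hrem
    simpa [mk_append, mul_assoc, -FreeGroup.mul_mk, -FreeGroup.inv_mk] using hrem.mul_comm
  · have hrem := D.areaAtMost_remove W a (V ++ B) (by simp [hD])
    rw [boundaryWord_append, mk_append, ← mul_assoc] at hrem
    simpa [mk_append, mul_assoc, -FreeGroup.mul_mk, -FreeGroup.inv_mk] using hrem.mul_comm

/-- The same diagram, with another starting point of its boundary. -/
abbrev rotate (D : DiskDiagram R ψ) (A B : List (BoundaryEdge α Q D.Cell))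
    (h : D.boundary = A ++ B) : DiskDiagram R ψ :=
  { D with
    boundary := B ++ A
    isCyclicChain := (h ▸ D.isCyclicChain).append_comm
    cons_mem := fun a ha => D.cons_mem a (by simp_all [or_comm])
    length_rest := fun a ha => D.length_rest a (by simp_all [or_comm])
    exists_prefix := fun a ha => D.exists_prefix a (by simp_all [or_comm])
    areaAtMost := by
      have hA := D.areaAtMost
      rw [h, boundaryWord_append, mk_append] at hA
      simpa [mk_append, -FreeGroup.mul_mk] using hA.mul_comm
    areaAtMost_remove := fun _ _ _ => D.areaAtMost_remove_append_comm h
    edgeSum_boundary := fun θ hθ => by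
      rw [← D.edgeSum_boundary θ hθ, h, edgeSum_append, edgeSum_append, add_comm]
    six_mul_length_add_arcs_le := fun c => by
      simpa [h, add_comm] using D.six_mul_length_add_arcs_le c
    breakCount_le_arcs := fun c => by simpa [h, add_comm] using D.breakCount_le_arcs c
    euler := by simpa [h, add_comm] using D.euler }

end DiskDiagram

/-- Data for gluing the diagrams `D₁` and `D₂` along a seam, which lies on the boundary of a single
cell of `D₁`. -/
structure Gluing {R : Set (Word α)} {ψ : FreeGroup α →* Q} (D₁ D₂ : DiskDiagram R ψ) where
  outer₁ : List (BoundaryEdge α Q D₁.Cell)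
  seam₁ : List (BoundaryEdge α Q D₁.Cell)
  seam₂ : List (BoundaryEdge α Q D₂.Cell)
  outer₂ : List (BoundaryEdge α Q D₂.Cell)
  cell : D₁.Cell
  tail : Word α
  boundary₁ : D₁.boundary = outer₁ ++ seam₁
  boundary₂ : D₂.boundary = seam₂ ++ outer₂
  outer₁_ne_nil : outer₁ ≠ []
  seam₁_ne_nil : seam₁ ≠ []
  outer₂_ne_nil : outer₂ ≠ []
  cell_of_mem : ∀ a ∈ seam₁, a.cell = cell
  boundaryWord_seam₂ : boundaryWord seam₂ = FreeGroup.invRev (boundaryWord seam₁)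
  vertex_seam₂ : ∀ a ∈ seam₂.head?, ∀ y ∈ outer₁.head?, a.vertex = y.vertex
  append_tail_mem : boundaryWord seam₂ ++ tail ∈ R
  length_append_tail : seam₂.length + tail.length = (D₁.label cell).length
  areaAtMost_remove : AreaAtMost (FreeGroup.mk '' R)
    (FreeGroup.mk (boundaryWord outer₁) * FreeGroup.mk tail) (Fintype.card D₁.Cell - 1)
  not_areaAtMost : ¬AreaAtMost (FreeGroup.mk '' R)
    (FreeGroup.mk (boundaryWord outer₁) * FreeGroup.mk (boundaryWord outer₂))
    (Fintype.card D₁.Cell + Fintype.card D₂.Cell - 1)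

namespace Gluing

variable {R : Set (Word α)} {ψ : FreeGroup α →* Q} {D₁ D₂ : DiskDiagram R ψ} (E : Gluing D₁ D₂)

lemma length_seam₂ : E.seam₂.length = E.seam₁.length := by
  simpa using congrArg List.length E.boundaryWord_seam₂

lemma seam₂_ne_nil : E.seam₂ ≠ [] :=
  List.ne_nil_of_length_pos (E.length_seam₂ ▸ List.length_pos_iff.2 E.seam₁_ne_nil)

lemma mk_seam₂ : FreeGroup.mk (boundaryWord E.seam₂) =
    (FreeGroup.mk (boundaryWord E.seam₁))⁻¹ := by
  rw [E.boundaryWord_seam₂, mk_invRev]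

lemma isCyclicChain₁ : IsCyclicChain (Follows ψ) (E.outer₁ ++ E.seam₁) :=
  E.boundary₁ ▸ D₁.isCyclicChain

lemma isCyclicChain₂ : IsCyclicChain (Follows ψ) (E.seam₂ ++ E.outer₂) :=
  E.boundary₂ ▸ D₂.isCyclicChain

lemma follows₁ : E.outer₁.IsChain (Follows ψ) ∧ E.seam₁.IsChain (Follows ψ) ∧
    (∀ x ∈ E.outer₁.getLast?, ∀ y ∈ E.seam₁.head?, Follows ψ x y) ∧
    ∀ x ∈ E.seam₁.getLast?, ∀ y ∈ E.outer₁.head?, Follows ψ x y :=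
  (isCyclicChain_append E.outer₁_ne_nil E.seam₁_ne_nil).1 E.isCyclicChain₁

lemma follows₂ : E.seam₂.IsChain (Follows ψ) ∧ E.outer₂.IsChain (Follows ψ) ∧
    (∀ x ∈ E.seam₂.getLast?, ∀ y ∈ E.outer₂.head?, Follows ψ x y) ∧
    ∀ x ∈ E.outer₂.getLast?, ∀ y ∈ E.seam₂.head?, Follows ψ x y :=
  (isCyclicChain_append E.seam₂_ne_nil E.outer₂_ne_nil).1 E.isCyclicChain₂

lemma card_cell₁_pos (E : Gluing D₁ D₂) : 0 < Fintype.card D₁.Cell :=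
  Fintype.card_pos_iff.2 ⟨E.cell⟩

lemma card_cell₂_pos (E : Gluing D₁ D₂) : 0 < Fintype.card D₂.Cell := by
  obtain ⟨v, -, -⟩ := List.exists_cons_of_ne_nil E.outer₂_ne_nil
  exact Fintype.card_pos_iff.2 ⟨v.cell⟩

lemma vertex_outer₁ {y t : BoundaryEdge α Q D₁.Cell} (hy : y ∈ E.outer₁.head?)
    (ht : t ∈ E.seam₁.head?) :
    y.vertex = t.vertex * ψ (FreeGroup.mk (boundaryWord E.seam₁)) :=
  vertex_head_of_isChain_append E.isCyclicChain₁.append_comm.1 ht hy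

lemma vertex_outer₂ {v : BoundaryEdge α Q D₂.Cell} {t : BoundaryEdge α Q D₁.Cell}
    (hv : v ∈ E.outer₂.head?) (ht : t ∈ E.seam₁.head?) : v.vertex = t.vertex := by
  obtain ⟨a, ha⟩ := Option.isSome_iff_exists.1 (List.isSome_head?.2 E.seam₂_ne_nil)
  obtain ⟨y, hy⟩ := Option.isSome_iff_exists.1 (List.isSome_head?.2 E.outer₁_ne_nil)
  rw [vertex_head_of_isChain_append E.isCyclicChain₂.1 ha hv, E.vertex_seam₂ a ha y hy,
    E.vertex_outer₁ hy ht, E.mk_seam₂, map_inv, mul_inv_cancel_right]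

lemma isInnerPath : IsInnerPath R ψ (fun d => (D₂.label d).length) (markHead E.seam₂) E.tail where
  append_mem := by simpa [boundaryWord_markHead] using E.append_tail_mem
  isChain := isChain_markHead E.follows₂.1
  isBreak_head := by
    cases E.seam₂ <;> simp [markHead]
  cons_mem a ha := by
    obtain ⟨U, V, h⟩ := List.append_of_mem ha
    obtain ⟨_, b, hS, -, -, hletter, hrest, -⟩ := exists_of_markHead_eq_append_cons h
    exact hletter ▸ hrest ▸ D₂.cons_mem b (by simp [E.boundary₂, hS])
  length_rest a ha := by
    obtain ⟨U, V, h⟩ := List.append_of_mem ha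
    obtain ⟨_, b, hS, -, -, -, hrest, hcell⟩ := exists_of_markHead_eq_append_cons h
    exact hrest ▸ hcell ▸ D₂.length_rest b (by simp [E.boundary₂, hS])
  ne_mirror S₀ a S₁ hS hmirror := by
    obtain ⟨U, b, hS', hU, -, -, hrest, -⟩ := exists_of_markHead_eq_append_cons hS
    -- Both cells at such an edge could be cancelled.
    have hrem := D₂.areaAtMost_remove U b (S₁ ++ E.outer₂) (by simp [E.boundary₂, hS'])
    have hb : FreeGroup.mk b.rest = (FreeGroup.mk [a.letter])⁻¹ * (FreeGroup.mk [a.letter] *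
        FreeGroup.mk (boundaryWord S₁) * FreeGroup.mk E.tail * FreeGroup.mk (boundaryWord U)) := by
      have h := congrArg FreeGroup.mk hmirror
      rw [mk_cons, mk_append, mk_append, boundaryWord_cons, mk_cons a.letter (boundaryWord S₁),
        ← hU, ← hrest] at h
      rw [← h, inv_mul_cancel_left]
    rw [boundaryWord_append, mk_append, hb] at hrem
    have hcancel : AreaAtMost (FreeGroup.mk '' R) ((FreeGroup.mk E.tail)⁻¹ *
        FreeGroup.mk (boundaryWord E.outer₂)) (Fintype.card D₂.Cell - 1) := by
      convert hrem using 1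
      group
    have hpos := E.card_cell₂_pos
    exact E.not_areaAtMost ((E.areaAtMost_remove.mul_of_inv_mul hcancel).mono (by omega))

/-- The boundary of the glued diagram. -/
def boundary : List (BoundaryEdge α Q (D₁.Cell ⊕ D₂.Cell)) :=
  embed Sum.inl E.outer₁ ++ embed Sum.inr E.outer₂

open scoped Classical in
/-- The number of arcs of a cell of the glued diagram. -/
noncomputable def arcs : D₁.Cell ⊕ D₂.Cell → ℕ :=
  Sum.elim (fun d => D₁.arcs d + if d = E.cell then totalBreaks (markHead E.seam₂) else 0)
    fun d => D₂.arcs d + breakCount d (markHead E.seam₂)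

lemma isCyclicChain_boundary : IsCyclicChain (Follows ψ) E.boundary := by
  obtain ⟨t, ht⟩ := Option.isSome_iff_exists.1 (List.isSome_head?.2 E.seam₁_ne_nil)
  obtain ⟨s, hs⟩ := Option.isSome_iff_exists.1 (List.isSome_head?.2 E.seam₂_ne_nil)
  rw [boundary, isCyclicChain_append (embed_eq_nil_iff _ |>.not.2 E.outer₁_ne_nil)
    (embed_eq_nil_iff _ |>.not.2 E.outer₂_ne_nil)]
  refine ⟨isChain_embed _ E.follows₁.1, isChain_embed _ E.follows₂.2.1, ?_, ?_⟩
  · rintro x hx _ hz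
    obtain ⟨a, ha, hvertex, hletter⟩ := exists_of_mem_getLast?_embed hx
    obtain ⟨b, hb, rfl⟩ := exists_of_mem_head?_embed hz
    refine ⟨?_, by simp⟩
    rw [hvertex, hletter, ← (E.follows₁.2.2.1 a ha t ht).1]
    exact E.vertex_outer₂ hb ht
  · rintro x hx _ hz
    obtain ⟨a, ha, hvertex, hletter⟩ := exists_of_mem_getLast?_embed hx
    obtain ⟨b, hb, rfl⟩ := exists_of_mem_head?_embed hz
    refine ⟨?_, by simp⟩
    rw [hvertex, hletter, ← (E.follows₂.2.2.2 a ha s hs).1]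
    exact (E.vertex_seam₂ s hs b hb).symm

lemma exists_of_mem_boundary {a : BoundaryEdge α Q (D₁.Cell ⊕ D₂.Cell)} (ha : a ∈ E.boundary) :
    (∃ b ∈ D₁.boundary, a.vertex = b.vertex ∧ a.letter = b.letter ∧ a.rest = b.rest ∧
      a.cell = Sum.inl b.cell) ∨
    ∃ b ∈ D₂.boundary, a.vertex = b.vertex ∧ a.letter = b.letter ∧ a.rest = b.rest ∧
      a.cell = Sum.inr b.cell := by
  rcases List.mem_append.1 ha with h | h
  · obtain ⟨U, V, h⟩ := List.append_of_mem h
    obtain ⟨_, b, _, hb, -, -, heq⟩ := exists_of_embed_eq_append_cons h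
    exact Or.inl ⟨b, by simp [E.boundary₁, hb], heq⟩
  · obtain ⟨U, V, h⟩ := List.append_of_mem h
    obtain ⟨_, b, _, hb, -, -, heq⟩ := exists_of_embed_eq_append_cons h
    exact Or.inr ⟨b, by simp [E.boundary₂, hb], heq⟩

lemma boundaryWord_boundary :
    boundaryWord E.boundary = boundaryWord E.outer₁ ++ boundaryWord E.outer₂ := by
  rw [boundary, boundaryWord_append, boundaryWord_embed, boundaryWord_embed]

lemma areaAtMost₁ : AreaAtMost (FreeGroup.mk '' R)
    (FreeGroup.mk (boundaryWord E.outer₁) * FreeGroup.mk (boundaryWord E.seam₁))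
    (Fintype.card D₁.Cell) := by
  simpa [E.boundary₁, mk_append, -FreeGroup.mul_mk] using D₁.areaAtMost

lemma areaAtMost₂ : AreaAtMost (FreeGroup.mk '' R)
    ((FreeGroup.mk (boundaryWord E.seam₁))⁻¹ * FreeGroup.mk (boundaryWord E.outer₂))
    (Fintype.card D₂.Cell) := by
  rw [← E.mk_seam₂, ← mk_append, ← boundaryWord_append, ← E.boundary₂]
  exact D₂.areaAtMost

lemma areaAtMost_boundary : AreaAtMost (FreeGroup.mk '' R) (FreeGroup.mk (boundaryWord E.boundary))
    (Fintype.card D₁.Cell + Fintype.card D₂.Cell) := by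
  rw [E.boundaryWord_boundary, mk_append]
  exact E.areaAtMost₁.mul_of_inv_mul E.areaAtMost₂

lemma areaAtMost_remove_boundary {U V : List (BoundaryEdge α Q (D₁.Cell ⊕ D₂.Cell))}
    {a : BoundaryEdge α Q (D₁.Cell ⊕ D₂.Cell)} (h : E.boundary = U ++ a :: V) :
    AreaAtMost (FreeGroup.mk '' R)
      (FreeGroup.mk (boundaryWord U) * (FreeGroup.mk a.rest)⁻¹ * FreeGroup.mk (boundaryWord V))
      (Fintype.card D₁.Cell + Fintype.card D₂.Cell - 1) := by
  have hpos₁ := E.card_cell₁_pos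
  have hpos₂ := E.card_cell₂_pos
  rcases append_eq_append_cons h with ⟨W, hW, rfl⟩ | ⟨W, rfl, hW⟩
  · obtain ⟨U', b, V', hb, hU, hV, -, -, hrest, -⟩ := exists_of_embed_eq_append_cons hW
    have hrem := D₁.areaAtMost_remove U' b (V' ++ E.seam₁) (by simp [E.boundary₁, hb])
    rw [boundaryWord_append, mk_append, ← mul_assoc] at hrem
    have hglue : AreaAtMost _ _ (Fintype.card D₁.Cell + Fintype.card D₂.Cell - 1) :=
      (hrem.mul_of_inv_mul E.areaAtMost₂).mono (by omega)
    rw [boundaryWord_append, boundaryWord_embed, mk_append, ← hU, ← hV, hrest]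
    simpa only [mul_assoc] using hglue
  · obtain ⟨U', b, V', hb, hU, hV, -, -, hrest, -⟩ := exists_of_embed_eq_append_cons hW
    have hrem := D₂.areaAtMost_remove (E.seam₂ ++ U') b V' (by simp [E.boundary₂, hb])
    rw [boundaryWord_append, mk_append, E.mk_seam₂, mul_assoc, mul_assoc] at hrem
    have hglue : AreaAtMost _ _ (Fintype.card D₁.Cell + Fintype.card D₂.Cell - 1) :=
      (E.areaAtMost₁.mul_of_inv_mul hrem).mono (by omega)
    rw [boundaryWord_append, boundaryWord_embed, mk_append, ← hU, ← hV, hrest]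
    simpa only [mul_assoc] using hglue

lemma edgeSum_eq {θ : Q → α × Bool → ℤ} (hθ : IsAntisymmetric ψ θ) :
    edgeSum θ E.boundary = edgeSum θ D₁.boundary + edgeSum θ D₂.boundary := by
  obtain ⟨t, ht⟩ := Option.isSome_iff_exists.1 (List.isSome_head?.2 E.seam₁_ne_nil)
  obtain ⟨y, hy⟩ := Option.isSome_iff_exists.1 (List.isSome_head?.2 E.outer₁_ne_nil)
  have hseam₁ : edgeSum θ E.seam₁ = pathSum ψ θ t.vertex (boundaryWord E.seam₁) :=
    edgeSum_eq_pathSum θ E.follows₁.2.1 fun a ha => by rw [Option.mem_unique ha ht]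
  have hseam₂ : edgeSum θ E.seam₂ = pathSum ψ θ y.vertex (boundaryWord E.seam₂) :=
    edgeSum_eq_pathSum θ E.follows₂.1 fun a ha => E.vertex_seam₂ a ha y hy
  rw [E.boundaryWord_seam₂, E.vertex_outer₁ hy ht, pathSum_invRev hθ, ← hseam₁] at hseam₂
  rw [boundary, edgeSum_append, edgeSum_embed, edgeSum_embed, E.boundary₁, E.boundary₂,
    edgeSum_append, edgeSum_append, hseam₂]
  ring

lemma cell_inequality₁ (hR : IsSixthSystem R) (d : D₁.Cell) :
    6 * (D₁.label d).length + E.arcs (Sum.inl d) ≤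
      6 * edgeCount (Sum.inl d) E.boundary + E.arcs (Sum.inl d) * (D₁.label d).length := by
  have hcell := D₁.six_mul_length_add_arcs_le d
  rw [E.boundary₁, edgeCount_append] at hcell
  rw [boundary, edgeCount_append, edgeCount_embed _ Sum.inl_injective,
    edgeCount_embed_of_notMem_range _ (by simp), arcs, Sum.elim_inl, add_zero]
  by_cases hd : d = E.cell
  · have hseam := E.isInnerPath.six_mul_length_add_totalBreaks_le hR
    rw [length_markHead, E.length_append_tail, E.length_seam₂, ← hd] at hseam
    rw [edgeCount_eq_length fun a ha => (E.cell_of_mem a ha).trans hd.symm] at hcell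
    rw [if_pos hd, add_mul]
    omega
  · rw [edgeCount_eq_zero fun a ha h => hd (h.symm.trans (E.cell_of_mem a ha))] at hcell
    rwa [if_neg hd, add_zero]

lemma cell_inequality₂ (hR : IsSixthSystem R) (d : D₂.Cell) :
    6 * (D₂.label d).length + E.arcs (Sum.inr d) ≤
      6 * edgeCount (Sum.inr d) E.boundary + E.arcs (Sum.inr d) * (D₂.label d).length := by
  have hcell := D₂.six_mul_length_add_arcs_le d
  have hseam := E.isInnerPath.six_mul_edgeCount_add_breakCount_le hR d
  rw [edgeCount_markHead] at hseam
  rw [E.boundary₂, edgeCount_append] at hcell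
  rw [boundary, edgeCount_append, edgeCount_embed _ Sum.inr_injective,
    edgeCount_embed_of_notMem_range _ (by simp), arcs, Sum.elim_inr, add_mul]
  omega

lemma breakCount_le_arcs₁ (d : D₁.Cell) :
    breakCount (Sum.inl d) E.boundary ≤ E.arcs (Sum.inl d) := by
  have hbreaks := D₁.breakCount_le_arcs d
  rw [E.boundary₁, breakCount_append] at hbreaks
  have hmark := breakCount_markHead_le E.outer₁ d
  rw [boundary, breakCount_append, breakCount_embed _ Sum.inl_injective,
    breakCount_embed_of_notMem_range _ (by simp), arcs, Sum.elim_inl]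
  by_cases hd : d = E.cell
  · have hpos : 1 ≤ totalBreaks (markHead E.seam₂) := by
      obtain ⟨s, S, hS⟩ := List.exists_cons_of_ne_nil E.seam₂_ne_nil
      simp [hS, markHead, totalBreaks_cons]
    rw [if_pos hd]
    split_ifs at hmark <;> omega
  · -- A first edge continuing the cell `d` would make `d` the cell of the seam.
    split_ifs at hmark with h
    · obtain ⟨a, ha, hbreak, had⟩ := h
      obtain ⟨x, hx⟩ := Option.isSome_iff_exists.1 (List.getLast?_isSome.2 E.seam₁_ne_nil)
      have hcell := ((E.follows₁.2.2.2 x hx a ha).2 hbreak).1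
      exact absurd (had.symm.trans (hcell.trans (E.cell_of_mem x (List.mem_of_getLast? hx)))) hd
    · omega

lemma breakCount_le_arcs₂ (hR : IsSixthSystem R) (d : D₂.Cell) :
    breakCount (Sum.inr d) E.boundary ≤ E.arcs (Sum.inr d) := by
  have hbreaks := D₂.breakCount_le_arcs d
  rw [E.boundary₂, breakCount_append] at hbreaks
  have hmark := breakCount_markHead_le E.outer₂ d
  rw [boundary, breakCount_append, breakCount_embed _ Sum.inr_injective,
    breakCount_embed_of_notMem_range _ (by simp), arcs, Sum.elim_inr]
  split_ifs at hmark with h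
  · obtain ⟨a, ha, hbreak, rfl⟩ := h
    obtain ⟨x, hx⟩ := Option.isSome_iff_exists.1 (List.getLast?_isSome.2 E.seam₂_ne_nil)
    have hcell := ((E.follows₂.2.2.1 x hx a ha).2 hbreak).1
    have hpos : edgeCount x.cell (markHead E.seam₂) ≠ 0 := by
      obtain ⟨U, V, hUV⟩ := List.append_of_mem (List.mem_of_getLast? hx)
      simp [edgeCount_markHead, hUV, edgeCount_cons]
    have hone := E.isInnerPath.one_le_breakCount hR hpos
    rw [hcell]
    rw [hcell] at hmark hbreaks
    omega
  · omega

lemma euler : 6 + ∑ c, E.arcs c + 2 * totalBreaks E.boundary ≤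
    6 * (Fintype.card D₁.Cell + Fintype.card D₂.Cell) := by
  classical
  have h₁ := D₁.euler
  have h₂ := D₂.euler
  rw [E.boundary₁, totalBreaks_append] at h₁
  rw [E.boundary₂, totalBreaks_append] at h₂
  simp only [arcs, Fintype.sum_sum_type, Sum.elim_inl, Sum.elim_inr]
  rw [Finset.sum_add_distrib, Finset.sum_add_distrib, sum_breakCount, Finset.sum_ite_eq',
    if_pos (Finset.mem_univ _), boundary, totalBreaks_append, totalBreaks_embed, totalBreaks_embed]
  have := totalBreaks_markHead_le E.outer₁
  have := totalBreaks_markHead_le E.outer₂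
  have := totalBreaks_markHead_le E.seam₂
  omega

/-- The diagram obtained by gluing. -/
noncomputable abbrev glue (hR : IsSixthSystem R) : DiskDiagram R ψ where
  Cell := D₁.Cell ⊕ D₂.Cell
  base := Sum.elim D₁.base D₂.base
  label := Sum.elim D₁.label D₂.label
  arcs := E.arcs
  boundary := E.boundary
  isCyclicChain := E.isCyclicChain_boundary
  cons_mem a ha := by
    obtain ⟨b, hb, -, hletter, hrest, -⟩ | ⟨b, hb, -, hletter, hrest, -⟩ :=
      E.exists_of_mem_boundary ha
    · exact hletter ▸ hrest ▸ D₁.cons_mem b hb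
    · exact hletter ▸ hrest ▸ D₂.cons_mem b hb
  length_rest a ha := by
    obtain ⟨b, hb, -, -, hrest, hcell⟩ | ⟨b, hb, -, -, hrest, hcell⟩ :=
      E.exists_of_mem_boundary ha
    · simpa [hcell, hrest] using D₁.length_rest b hb
    · simpa [hcell, hrest] using D₂.length_rest b hb
  exists_prefix a ha := by
    obtain ⟨b, hb, hvertex, -, -, hcell⟩ | ⟨b, hb, hvertex, -, -, hcell⟩ :=
      E.exists_of_mem_boundary ha
    · simpa [hcell, hvertex] using D₁.exists_prefix b hb
    · simpa [hcell, hvertex] using D₂.exists_prefix b hb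
  label_mem := by
    rintro (d | d)
    exacts [D₁.label_mem d, D₂.label_mem d]
  areaAtMost := by simpa using E.areaAtMost_boundary
  areaAtMost_remove U a V h := by
    simpa using E.areaAtMost_remove_boundary h
  edgeSum_boundary θ hθ := by
    rw [E.edgeSum_eq hθ, D₁.edgeSum_boundary θ hθ, D₂.edgeSum_boundary θ hθ,
      Fintype.sum_sum_type]
    rfl
  six_mul_length_add_arcs_le := by
    rintro (d | d)
    exacts [E.cell_inequality₁ hR d, E.cell_inequality₂ hR d]
  breakCount_le_arcs := by
    rintro (d | d)
    exacts [E.breakCount_le_arcs₁ d, E.breakCount_le_arcs₂ hR d]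
  euler := by simpa using E.euler

end Gluing

end DiskDiagram

section SingleCell

variable {α Q : Type*} [Group Q] (ψ : FreeGroup α →* Q) (g : Q)

/-- The part of the boundary of a cell based at `g` with label `u ++ v` along which `v` is read. -/
def cellBoundary : Word α → Word α → List (BoundaryEdge α Q Unit)
  | _, [] => []
  | u, x :: v => ⟨g * ψ (FreeGroup.mk u), x, v ++ u, (), false⟩ :: cellBoundary (u ++ [x]) v

variable {ψ g} {u v : Word α}

lemma boundaryWord_cellBoundary : boundaryWord (cellBoundary ψ g u v) = v := by
  induction v generalizing u with
  | nil => rfl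
  | cons x v ih => simp [cellBoundary, ih]

lemma length_cellBoundary : (cellBoundary ψ g u v).length = v.length := by
  rw [← length_boundaryWord, boundaryWord_cellBoundary]

lemma of_cellBoundary_eq_append_cons {U V : List (BoundaryEdge α Q Unit)}
    {b : BoundaryEdge α Q Unit} (h : cellBoundary ψ g u v = U ++ b :: V) :
    b.vertex = g * ψ (FreeGroup.mk (u ++ boundaryWord U)) ∧
      b.rest = boundaryWord V ++ u ++ boundaryWord U ∧ b.isBreak = false := by
  induction v generalizing u U with
  | nil => simp [cellBoundary] at h
  | cons x v ih =>
    rcases U with _ | ⟨c, U⟩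
    · obtain ⟨rfl, rfl⟩ := List.cons.inj h
      simp [boundaryWord_cellBoundary]
    · obtain ⟨rfl, htail⟩ := List.cons.inj h
      simpa using ih htail

lemma totalBreaks_cellBoundary : totalBreaks (cellBoundary ψ g u v) = 0 :=
  totalBreaks_eq_zero fun _ ha =>
    let ⟨_, _, h⟩ := List.append_of_mem ha
    (of_cellBoundary_eq_append_cons h).2.2

lemma isChain_cellBoundary : (cellBoundary ψ g u v).IsChain (Follows ψ) := by
  induction v generalizing u with
  | nil => simp [cellBoundary]
  | cons x v ih =>
    rw [cellBoundary, List.isChain_cons]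
    refine ⟨fun b hb => ?_, ih⟩
    cases v with
    | nil => simp [cellBoundary] at hb
    | cons y v =>
      obtain rfl := Option.mem_some_iff.1 hb
      exact ⟨by simp only [mk_append, map_mul, mul_assoc], by simp⟩

lemma isCyclicChain_cellBoundary {r : Word α} (hr : ψ (FreeGroup.mk r) = 1) :
    IsCyclicChain (Follows ψ) (cellBoundary ψ g [] r) := by
  refine ⟨isChain_cellBoundary, fun x hx y hy => ?_⟩
  obtain ⟨V, hV⟩ := List.head?_eq_some_iff.1 hy
  obtain ⟨U, hU⟩ := List.getLast?_eq_some_iff.1 hx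
  obtain ⟨hyvertex, hyrest, -⟩ := of_cellBoundary_eq_append_cons (U := []) hV
  obtain ⟨hxvertex, hxrest, -⟩ := of_cellBoundary_eq_append_cons hU
  have hyr := congrArg boundaryWord hV
  have hxr := congrArg boundaryWord hU
  rw [boundaryWord_cellBoundary] at hyr hxr
  rw [boundaryWord_append, boundaryWord_cons, boundaryWord_nil] at hxr
  rw [boundaryWord_cons] at hyr
  refine ⟨?_, fun _ => ⟨rfl, ?_⟩⟩
  · rw [hyvertex, hxvertex, mul_assoc, ← map_mul, ← mk_append]
    rw [List.nil_append, List.nil_append, ← hxr, hr]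
    simp [← FreeGroup.one_eq_mk]
  · simpa [hyrest, hxrest, ← hyr] using hxr

/-- The disk diagram with a single cell. -/
abbrev singleCell {R : Set (Word α)} (hR : IsSymmetrized R) (hψ : ∀ r ∈ R, ψ (FreeGroup.mk r) = 1)
    (g : Q) {r : Word α} (hr : r ∈ R) : DiskDiagram R ψ where
  Cell := Unit
  base _ := g
  label _ := r
  arcs _ := 0
  boundary := cellBoundary ψ g [] r
  isCyclicChain := isCyclicChain_cellBoundary (hψ r hr)
  cons_mem a ha := by
    obtain ⟨U, V, h⟩ := List.append_of_mem ha
    have hword := congrArg boundaryWord h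
    rw [boundaryWord_cellBoundary, boundaryWord_append] at hword
    rw [(of_cellBoundary_eq_append_cons h).2.1]
    simpa using hR.append_comm_mem (boundaryWord U) (boundaryWord (a :: V)) (hword ▸ hr)
  length_rest a ha := by
    obtain ⟨U, V, h⟩ := List.append_of_mem ha
    have hlen := congrArg List.length h
    rw [length_cellBoundary] at hlen
    rw [(of_cellBoundary_eq_append_cons h).2.1]
    simp only [List.append_nil, List.length_append, length_boundaryWord, List.length_cons]
      at hlen ⊢
    omega
  exists_prefix a ha := by
    obtain ⟨U, V, h⟩ := List.append_of_mem ha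
    have hword := congrArg boundaryWord h
    rw [boundaryWord_cellBoundary, boundaryWord_append] at hword
    exact ⟨boundaryWord U, ⟨_, hword.symm⟩, (of_cellBoundary_eq_append_cons h).1⟩
  label_mem _ := hr
  areaAtMost := by
    rw [boundaryWord_cellBoundary]
    exact .of_mem ⟨r, hr, rfl⟩
  areaAtMost_remove U a V h := by
    rw [(of_cellBoundary_eq_append_cons h).2.1, List.append_nil, mk_append]
    simpa [-FreeGroup.mul_mk, -FreeGroup.inv_mk] using AreaAtMost.one
  edgeSum_boundary θ _ := by
    rw [edgeSum_eq_pathSum θ (g := g) isChain_cellBoundary fun a ha => ?_,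
      boundaryWord_cellBoundary]
    · simp
    · obtain ⟨V, hV⟩ := List.head?_eq_some_iff.1 ha
      simpa [← FreeGroup.one_eq_mk] using (of_cellBoundary_eq_append_cons (U := []) hV).1
  six_mul_length_add_arcs_le c := by
    rw [edgeCount_eq_length fun _ _ => rfl, length_cellBoundary]
    simp
  breakCount_le_arcs c :=
    (breakCount_le_totalBreaks c _).trans totalBreaks_cellBoundary.le
  euler := by simp [totalBreaks_cellBoundary]

end SingleCell

section Greendlinger

variable {α Q I : Type*} [Group Q] {ψ : FreeGroup α →* Q}

lemma edgeCount_eq_zero_of_breakCount_eq_zero {c : I} {S : List (BoundaryEdge α Q I)}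
    (hS : S.IsChain (Follows ψ)) (hhead : ∀ a ∈ S.head?, a.cell ≠ c)
    (hc : breakCount c S = 0) : edgeCount c S = 0 := by
  induction S with
  | nil => rfl
  | cons a S ih =>
    have ha : a.cell ≠ c := hhead a rfl
    rw [List.isChain_cons] at hS
    rw [breakCount_cons, Nat.add_eq_zero_iff] at hc
    rw [edgeCount_cons, if_neg ha, add_zero]
    refine ih hS.2 (fun b hb hbc => ?_) hc.1
    cases hbreak : b.isBreak
    · exact ha (((hS.1 b hb).2 hbreak).1 ▸ hbc)
    · obtain ⟨S', rfl⟩ := List.head?_eq_some_iff.1 hb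
      simp [breakCount_cons, hbreak, hbc] at hc

lemma exists_run_of_breakCount_eq_one {c : I} {S : List (BoundaryEdge α Q I)}
    (hS : S.IsChain (Follows ψ)) (hhead : ∀ a ∈ S.head?, a.cell ≠ c) (hc : breakCount c S = 1) :
    ∃ U a B V, S = U ++ a :: (B ++ V) ∧ a.cell = c ∧ (∀ b ∈ B, b.isBreak = false) ∧
      B.length + 1 = edgeCount c S := by
  obtain ⟨a, haS, ha, hac⟩ : ∃ a ∈ S, a.isBreak = true ∧ a.cell = c := by
    have hpos : 0 < breakCount c S := by omega
    simpa [breakCount, List.countP_pos_iff] using hpos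
  obtain ⟨U, W, rfl⟩ := List.append_of_mem haS
  obtain ⟨B, V, rfl, hB, hV⟩ := exists_eq_run_append W
  rw [List.isChain_append] at hS
  have hchain := hS.2.1
  rw [← List.cons_append, List.isChain_append] at hchain
  have hBcell := cell_eq_of_isChain hchain.1 hB
  rw [breakCount_append, breakCount_cons, if_pos ⟨ha, hac⟩, breakCount_append] at hc
  have hU : edgeCount c U = 0 :=
    edgeCount_eq_zero_of_breakCount_eq_zero hS.1
      (fun b hb => hhead b (by rw [List.head?_append]; simp [Option.mem_def.1 hb])) (by omega)
  have hVzero : edgeCount c V = 0 := by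
    refine edgeCount_eq_zero_of_breakCount_eq_zero hchain.2.1 (fun b hb hbc => ?_) (by omega)
    obtain ⟨V, rfl⟩ := List.head?_eq_some_iff.1 hb
    simp only [breakCount_cons, hV b rfl, hbc, and_self, if_true] at hc
    omega
  refine ⟨U, a, B, V, rfl, hac, hB, ?_⟩
  rw [edgeCount_append, edgeCount_cons, edgeCount_append, if_pos hac, hU, hVzero,
    edgeCount_eq_length fun b hb => (hBcell b hb).trans hac]
  omega

/-- The words obtained from `w` by one step of Dehn's algorithm, replacing more than half of a
relator, include one of area at most `n`. -/
def HasDehnStep (R : Set (Word α)) (w : Word α) (n : ℕ) : Prop :=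
  ∃ u e v e', w = u ++ e ++ v ∧ e ++ e' ∈ R ∧ e'.length < e.length ∧
    AreaAtMost (FreeGroup.mk '' R) (FreeGroup.mk u * (FreeGroup.mk e')⁻¹ * FreeGroup.mk v) n

namespace DiskDiagram

variable {R : Set (Word α)} (D : DiskDiagram R ψ)

/-- The combinatorial curvature of a cell. -/
noncomputable def curvature (c : D.Cell) : ℤ := 6 - 2 * breakCount c D.boundary - D.arcs c

lemma six_le_sum_curvature : 6 ≤ ∑ c, D.curvature c := by
  have heuler := D.euler
  have hbreaks : ∑ c, (breakCount c D.boundary : ℤ) = totalBreaks D.boundary := by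
    exact_mod_cast sum_breakCount D.boundary
  simp only [curvature, Finset.sum_sub_distrib, ← Finset.mul_sum, hbreaks, Finset.sum_const,
    Finset.card_univ]
  zify at heuler
  simp only [nsmul_eq_mul]
  linarith

lemma exists_curvature_pos {c : D.Cell} (hc : D.curvature c < 6) : ∃ d ≠ c, 0 < D.curvature d := by
  classical
  by_contra! hnonpos
  have hsum := D.six_le_sum_curvature
  rw [← Finset.add_sum_erase _ _ (Finset.mem_univ c)] at hsum
  have hrest : ∑ d ∈ Finset.univ.erase c, D.curvature d ≤ 0 :=
    Finset.sum_nonpos fun d hd => hnonpos d (Finset.ne_of_mem_erase hd)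
  omega

variable {D}

lemma six_lt_arcs (hR : IsSixthSystem R) {c : D.Cell} (hc : edgeCount c D.boundary = 0) :
    6 < D.arcs c := by
  have hcell := D.six_mul_length_add_arcs_le c
  have hpos := List.length_pos_iff.2 (hR.ne_nil _ (D.label_mem c))
  rw [hc] at hcell
  by_contra! hle
  have := Nat.mul_le_mul_right (D.label c).length hle
  obtain h | h := (D.arcs c).eq_zero_or_pos
  · rw [h] at hcell
    omega
  · omega

lemma edgeCount_ne_zero_of_curvature_pos (hR : IsSixthSystem R) {c : D.Cell}
    (hc : 0 < D.curvature c) : edgeCount c D.boundary ≠ 0 := fun h => by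
  have := six_lt_arcs hR h
  unfold curvature at hc
  omega

lemma length_label_lt (hR : IsSixthSystem R) {c : D.Cell} (hc : D.arcs c ≤ 3) :
    (D.label c).length < 2 * edgeCount c D.boundary := by
  have hcell := D.six_mul_length_add_arcs_le c
  have hpos := List.length_pos_iff.2 (hR.ne_nil _ (D.label_mem c))
  interval_cases D.arcs c <;> omega

lemma exists_areaAtMost_of_run {a : BoundaryEdge α Q D.Cell}
    {U B V : List (BoundaryEdge α Q D.Cell)} (h : D.boundary = U ++ a :: (B ++ V))
    (hB : ∀ b ∈ B, b.isBreak = false) (hlen : (D.label a.cell).length < 2 * (B.length + 1)) :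
    ∃ e e' v, boundaryWord (a :: B) = e ++ v ∧ e ++ e' ∈ R ∧ e'.length < e.length ∧
      AreaAtMost (FreeGroup.mk '' R) (FreeGroup.mk (boundaryWord U) * (FreeGroup.mk e')⁻¹ *
        FreeGroup.mk v * FreeGroup.mk (boundaryWord V)) (Fintype.card D.Cell - 1) := by
  have hchain := D.isCyclicChain.1
  rw [h, List.isChain_append, ← List.cons_append, List.isChain_append] at hchain
  obtain ⟨e', he'⟩ := take_boundaryWord_isPrefix_of_isChain hchain.2.1.1 hB
  have hsplit := List.take_append_drop (a.rest.length + 1) (boundaryWord (a :: B))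
  set e := (boundaryWord (a :: B)).take (a.rest.length + 1) with he
  set v := (boundaryWord (a :: B)).drop (a.rest.length + 1)
  have hlabel := D.length_rest a (by simp [h])
  refine ⟨e, e', v, hsplit.symm, he' ▸ D.cons_mem a (by simp [h]), ?_, ?_⟩
  · have hrest := congrArg List.length he'
    have htake : e.length = min (a.rest.length + 1) (B.length + 1) := by simp [he]
    simp only [List.length_append, List.length_cons] at hrest
    omega
  · have hrem := D.areaAtMost_remove U a (B ++ V) h
    have hrest := congrArg FreeGroup.mk he'
    have hrun := congrArg FreeGroup.mk hsplit
    rw [mk_append, mk_cons a.letter a.rest] at hrest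
    rw [mk_append, boundaryWord_cons, mk_cons a.letter (boundaryWord B)] at hrun
    rw [boundaryWord_append, mk_append] at hrem
    rw [eq_inv_mul_of_mul_eq hrest, eq_inv_mul_of_mul_eq hrun]
    convert hrem using 1
    group

lemma edgeCount_eq_length_of_breakCount_eq_zero {a : BoundaryEdge α Q D.Cell}
    {T : List (BoundaryEdge α Q D.Cell)} (h : D.boundary = a :: T)
    (ha : breakCount a.cell D.boundary = 0) :
    edgeCount a.cell D.boundary = D.boundary.length := by
  refine edgeCount_eq_length fun b hb => ?_
  by_contra hne
  obtain ⟨U, V, hUV⟩ := List.append_of_mem hb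
  have hcyc := (hUV ▸ D.isCyclicChain).append_comm.1
  have hzero := edgeCount_eq_zero_of_breakCount_eq_zero (c := a.cell) hcyc
    (fun x hx => by rwa [← Option.mem_some_iff.1 hx])
    (by rw [hUV, breakCount_append] at ha; rw [breakCount_append]; omega)
  rw [edgeCount_append, add_comm, ← edgeCount_append, ← hUV, h, edgeCount_cons,
    if_pos rfl] at hzero
  omega

lemma hasDehnStep_of_run {a : BoundaryEdge α Q D.Cell} {U B V : List (BoundaryEdge α Q D.Cell)}
    (h : D.boundary = U ++ a :: (B ++ V)) (hB : ∀ b ∈ B, b.isBreak = false)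
    (hlen : (D.label a.cell).length < 2 * (B.length + 1)) :
    HasDehnStep R D.word (Fintype.card D.Cell - 1) := by
  obtain ⟨e, e', v, hword, hmem, hlt, harea⟩ := exists_areaAtMost_of_run h hB hlen
  refine ⟨boundaryWord U, e, v ++ boundaryWord V, e', ?_, hmem, hlt, ?_⟩
  · rw [word, h, boundaryWord_append, ← List.cons_append, boundaryWord_append, hword]
    simp
  · rwa [mk_append, ← mul_assoc]

lemma hasDehnStep_of_breakCount_eq_zero (hR : IsSixthSystem R) {a : BoundaryEdge α Q D.Cell}
    {T : List (BoundaryEdge α Q D.Cell)} (h : D.boundary = a :: T)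
    (ha : breakCount a.cell D.boundary = 0) :
    HasDehnStep R D.word (Fintype.card D.Cell - 1) := by
  have hcount := edgeCount_eq_length_of_breakCount_eq_zero h ha
  have hcells : ∀ b ∈ D.boundary, b.cell = a.cell := by
    simpa [edgeCount] using hcount
  have hrun : ∀ b ∈ D.boundary, b.isBreak = false := by
    intro b hb
    by_contra! hbreak
    rw [breakCount, List.countP_eq_zero] at ha
    exact ha b hb (by simp [hbreak, hcells b hb])
  -- Any other cell has no boundary edge, hence nonpositive curvature.
  have harcs : D.arcs a.cell ≤ 3 := by
    by_contra! harcs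
    obtain ⟨d, hd, hpos⟩ := D.exists_curvature_pos (c := a.cell) (by unfold curvature; omega)
    refine edgeCount_ne_zero_of_curvature_pos hR hpos (edgeCount_eq_zero fun b hb => ?_)
    rw [hcells b hb]
    exact hd.symm
  have hlen := length_label_lt hR harcs
  rw [hcount, h] at hlen
  exact hasDehnStep_of_run (U := []) (V := []) (by simpa using h)
    (fun b hb => hrun b (by simp [h, hb])) hlen

lemma hasDehnStep_of_breakCount_ne_zero (hR : IsSixthSystem R) {a : BoundaryEdge α Q D.Cell}
    (ha : a ∈ D.boundary.head?) (hbreak : breakCount a.cell D.boundary ≠ 0) :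
    HasDehnStep R D.word (Fintype.card D.Cell - 1) := by
  have hcurv : D.curvature a.cell ≤ 3 := by
    have := D.breakCount_le_arcs a.cell
    unfold curvature
    omega
  obtain ⟨d, hd, hpos⟩ := D.exists_curvature_pos (c := a.cell) (by omega)
  have hhead : ∀ b ∈ D.boundary.head?, b.cell ≠ d := fun b hb =>
    Option.mem_unique ha hb ▸ hd.symm
  have hcount := edgeCount_ne_zero_of_curvature_pos hR hpos
  have hbreak_d : breakCount d D.boundary ≠ 0 := fun hzero =>
    hcount (edgeCount_eq_zero_of_breakCount_eq_zero D.isCyclicChain.1 hhead hzero)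
  have hle_d := D.breakCount_le_arcs d
  unfold curvature at hpos
  have hlen := length_label_lt hR (c := d) (by omega)
  obtain ⟨U, b, B, V, hUV, hb, hB, hrun⟩ :=
    exists_run_of_breakCount_eq_one D.isCyclicChain.1 hhead (by omega)
  exact hasDehnStep_of_run hUV hB (by rw [hb]; omega)

/-- **Greendlinger's lemma** -/
theorem hasDehnStep (hR : IsSixthSystem R) (hD : D.boundary ≠ []) :
    HasDehnStep R D.word (Fintype.card D.Cell - 1) := by
  obtain ⟨a, T, h⟩ := List.exists_cons_of_ne_nil hD
  by_cases ha : breakCount a.cell D.boundary = 0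
  · exact hasDehnStep_of_breakCount_eq_zero hR h ha
  · exact hasDehnStep_of_breakCount_ne_zero hR (by simp [h]) ha

end DiskDiagram

end Greendlinger

/-! ### Existence of disk diagrams -/

section Existence

variable {α : Type*}

/-- The word `w` has area `N > 0`, and no subword of it can be split off without increasing the
area; its minimal van Kampen diagrams are then topological disks. -/
structure IsIndecomposable (R : Set (Word α)) (w : Word α) (N : ℕ) : Prop where
  pos : 0 < N
  areaAtMost : AreaAtMost (FreeGroup.mk '' R) (FreeGroup.mk w) N
  not_areaAtMost : ∀ n < N, ¬AreaAtMost (FreeGroup.mk '' R) (FreeGroup.mk w) n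
  lt_add : ∀ u z v, w = u ++ z ++ v → z ≠ [] → u ++ v ≠ [] → ∀ m n,
    AreaAtMost (FreeGroup.mk '' R) (FreeGroup.mk z) m →
    AreaAtMost (FreeGroup.mk '' R) (FreeGroup.mk u * FreeGroup.mk v) n → N < m + n

lemma IsIndecomposable.ne_nil {R : Set (Word α)} {w : Word α} {N : ℕ}
    (h : IsIndecomposable R w N) : w ≠ [] := by
  rintro rfl
  exact h.not_areaAtMost 0 h.pos AreaAtMost.one

lemma IsIndecomposable.isReduced {R : Set (Word α)} {w : Word α} {N : ℕ}
    (h : IsIndecomposable R w N) : FreeGroup.IsReduced w := by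
  by_contra hw
  obtain ⟨u, z, v, rfl, hz, hmk⟩ := exists_cancelling_pair_of_not_isReduced hw
  have huv : FreeGroup.mk (u ++ z ++ v) = FreeGroup.mk u * FreeGroup.mk v := by
    rw [mk_append, mk_append, hmk, mul_one]
  by_cases hnil : u ++ v = []
  · refine h.not_areaAtMost 0 h.pos ?_
    rw [huv, ← mk_append, hnil]
    exact AreaAtMost.one
  · have := h.lt_add u z v rfl (List.ne_nil_of_length_pos (by omega)) hnil 0 N
      (hmk ▸ AreaAtMost.one) (huv ▸ h.areaAtMost)
    omega

variable {Q : Type*} [Group Q]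

/-- There is a disk diagram with boundary word `w`, read from the vertex `g`, and `N` cells. -/
def HasDiskDiagram (R : Set (Word α)) (ψ : FreeGroup α →* Q) (g : Q) (w : Word α) (N : ℕ) : Prop :=
  ∃ D : DiskDiagram R ψ, D.word = w ∧ (∀ a ∈ D.boundary.head?, a.vertex = g) ∧
    Fintype.card D.Cell = N

variable {R : Set (Word α)} {ψ : FreeGroup α →* Q}

lemma areaAtMost_complement_of_hasDehnStep (hR : IsSixthSystem R) {u z v : Word α}
    (hr : u ++ z ++ v ∈ R) {n : ℕ} (hz : HasDehnStep R z n) :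
    AreaAtMost (FreeGroup.mk '' R) (FreeGroup.mk (v ++ u)) n ∧ (v ++ u).length < z.length := by
  obtain ⟨u₁, e, v₁, e', rfl, hmem, hlt, hA⟩ := hz
  have hmem' : e ++ (v₁ ++ v ++ u ++ u₁) ∈ R := by
    simpa using hR.append_comm_mem (u ++ u₁) (e ++ v₁ ++ v) (by simpa using hr)
  obtain rfl : e' = v₁ ++ v ++ u ++ u₁ := by
    by_contra hne
    have := hR.six_mul_length_lt _ hmem _ hmem' (by simpa using hne) e ⟨_, rfl⟩ ⟨_, rfl⟩
    simp only [List.length_append] at this hlt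
    omega
  refine ⟨?_, by simp only [List.length_append] at hlt ⊢; omega⟩
  convert hA.inv using 1
  simp only [mk_append]
  group

/-- No proper subword of a relator has area less than `N`. -/
def ProperSubwordsUnfilled (R : Set (Word α)) (N : ℕ) : Prop :=
  ∀ u z v, u ++ z ++ v ∈ R → z ≠ [] → u ++ v ≠ [] →
    ∀ n < N, ¬AreaAtMost (FreeGroup.mk '' R) (FreeGroup.mk z) n

lemma properSubwordsUnfilled (hR : IsSixthSystem R) {N : ℕ}
    (hN : ∀ M < N, ∀ w, IsIndecomposable R w M → HasDiskDiagram R ψ 1 w M) :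
    ProperSubwordsUnfilled R N := by
  intro u z v hr hz huv n hn
  induction hl : z.length using Nat.strong_induction_on generalizing u z v n with
  | _ l ih =>
  intro hA
  classical
  have hex : ∃ n, AreaAtMost (FreeGroup.mk '' R) (FreeGroup.mk z) n := ⟨n, hA⟩
  have hle : Nat.find hex ≤ n := Nat.find_min' hex hA
  have hpos : 0 < Nat.find hex := by
    rw [Nat.pos_iff_ne_zero, Ne, Nat.find_eq_zero]
    exact fun h0 => hz (eq_of_isReduced_of_mk_eq (isReduced_of_append_append (hR.isReduced _ hr))
      FreeGroup.IsReduced.nil h0.eq_one)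
  have hind : IsIndecomposable R z (Nat.find hex) := by
    refine ⟨hpos, Nat.find_spec hex, fun _ => Nat.find_min hex, ?_⟩
    rintro u₁ z₁ v₁ rfl hz₁ huv₁ m₁ m₂ h₁ -
    by_contra! hm
    refine ih z₁.length ?_ (u ++ u₁) z₁ (v₁ ++ v) (by simpa using hr) hz₁ ?_ m₁ (by omega) rfl h₁
    · have := List.length_pos_iff.2 huv₁
      simp only [List.length_append] at hl this
      omega
    · simp_all
  obtain ⟨D, rfl, -, hcard⟩ := hN _ (by omega) z hind
  obtain ⟨h, hlen⟩ := areaAtMost_complement_of_hasDehnStep hR hr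
    (D.hasDehnStep hR fun h => hz (by rw [DiskDiagram.word, h, boundaryWord_nil]))
  refine ih _ (hl ▸ hlen) [] _ D.word ?_ (fun h => huv ?_) (by simpa using hz) _ (by omega) rfl h
  · simpa using hR.append_comm_mem (u ++ D.word) v hr
  · simp_all

/-- A diagram filling a part of `w`: it is bounded by the initial segment of `w` read along `front`
and by the path `back`, which lies on the single cell `cell` with relator
`hidden ++ boundaryWord back`. The gap between `back` and the rest `todo` of `w` remains to be
filled. -/
structure PartialFilling (R : Set (Word α)) (ψ : FreeGroup α →* Q) (g : Q) (w : Word α)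
    (N : ℕ) where
  diagram : DiskDiagram R ψ
  front : List (BoundaryEdge α Q diagram.Cell)
  back : List (BoundaryEdge α Q diagram.Cell)
  todo : Word α
  hidden : Word α
  cell : diagram.Cell
  boundary_eq : diagram.boundary = front ++ back
  cell_of_mem : ∀ a ∈ back, a.cell = cell
  front_ne_nil : front ≠ []
  vertex_front : ∀ a ∈ front.head?, a.vertex = g
  append_todo : boundaryWord front ++ todo = w
  append_mem : hidden ++ boundaryWord back ∈ R
  hidden_ne_nil : hidden ≠ []
  length_append : hidden.length + back.length = (diagram.label cell).length
  card_le : Fintype.card diagram.Cell ≤ N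
  areaAtMost_gap : AreaAtMost (FreeGroup.mk '' R)
    ((FreeGroup.mk (boundaryWord back))⁻¹ * FreeGroup.mk todo) (N - Fintype.card diagram.Cell)
  areaAtMost_remove : AreaAtMost (FreeGroup.mk '' R)
    (FreeGroup.mk (boundaryWord front) * (FreeGroup.mk hidden)⁻¹) (Fintype.card diagram.Cell - 1)

namespace PartialFilling

variable {g : Q} {w : Word α} {N : ℕ} (P : PartialFilling R ψ g w N)

/-- The length of the boundary of the gap. -/
def gapLength : ℕ := P.back.length + P.todo.length

lemma card_pos : 0 < Fintype.card P.diagram.Cell := Fintype.card_pos_iff.2 ⟨P.cell⟩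

lemma boundaryWord_front_ne_nil : boundaryWord P.front ≠ [] :=
  fun h => P.front_ne_nil (List.map_eq_nil_iff.1 h)

lemma areaAtMost_boundary : AreaAtMost (FreeGroup.mk '' R)
    (FreeGroup.mk (boundaryWord P.front) * FreeGroup.mk (boundaryWord P.back))
    (Fintype.card P.diagram.Cell) := by
  rw [← mk_append, ← boundaryWord_append, ← P.boundary_eq]
  exact P.diagram.areaAtMost

lemma hasDiskDiagram_of_gapLength_eq_zero (hw : IsIndecomposable R w N) (h : P.gapLength = 0) :
    HasDiskDiagram R ψ g w N := by
  obtain ⟨hback, htodo⟩ : P.back = [] ∧ P.todo = [] := by simpa [gapLength] using h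
  have hD : P.diagram.boundary = P.front := by rw [P.boundary_eq, hback, List.append_nil]
  have hword : boundaryWord P.diagram.boundary = w := by
    simpa [hD, htodo] using P.append_todo
  have hA := P.diagram.areaAtMost
  rw [hword] at hA
  refine ⟨P.diagram, hword, hD ▸ P.vertex_front, P.card_le.antisymm ?_⟩
  by_contra! hlt
  exact hw.not_areaAtMost _ hlt hA

lemma todo_ne_nil (hN : ProperSubwordsUnfilled R N) (h : P.back ≠ []) : P.todo ≠ [] := by
  intro htodo
  have hgap := P.areaAtMost_gap.inv
  have := P.card_pos
  have := P.card_le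
  refine hN P.hidden (boundaryWord P.back) [] (by simpa using P.append_mem)
    (fun h0 => h (List.map_eq_nil_iff.1 h0)) (by simpa using P.hidden_ne_nil) _ ?_
    (by simpa [htodo, ← FreeGroup.one_eq_mk] using hgap)
  omega

/-- Extends the front by an edge at which the gap is folded. -/
def advance {t : BoundaryEdge α Q P.diagram.Cell} {T : List (BoundaryEdge α Q P.diagram.Cell)}
    {v : Word α} (hback : P.back = t :: T) (htodo : P.todo = t.letter :: v) :
    PartialFilling R ψ g w N where
  diagram := P.diagram
  front := P.front ++ [t]
  back := T
  todo := v
  hidden := P.hidden ++ [t.letter]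
  cell := P.cell
  boundary_eq := by simp [P.boundary_eq, hback]
  cell_of_mem a ha := P.cell_of_mem a (by simp [hback, ha])
  front_ne_nil := by simp
  vertex_front a ha :=
    P.vertex_front a (by rwa [List.head?_append_of_ne_nil _ P.front_ne_nil] at ha)
  append_todo := by simp [← P.append_todo, htodo]
  append_mem := by simpa [hback] using P.append_mem
  hidden_ne_nil := by simp
  length_append := by simpa [hback, add_comm, add_left_comm] using P.length_append
  card_le := P.card_le
  areaAtMost_gap := by
    convert P.areaAtMost_gap using 1
    rw [hback, htodo, boundaryWord_cons, mk_cons t.letter v, mk_cons t.letter]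
    group
  areaAtMost_remove := by
    convert P.areaAtMost_remove using 1
    rw [boundaryWord_append, mk_append, mk_append, boundaryWord_cons, boundaryWord_nil]
    group

/-- A way of cutting the gap of a partial filling into two by a path joining its sides. -/
structure Cut where
  back₁ : List (BoundaryEdge α Q P.diagram.Cell)
  back₂ : List (BoundaryEdge α Q P.diagram.Cell)
  todo₁ : Word α
  todo₂ : Word α
  area₁ : ℕ
  area₂ : ℕ
  back_eq : P.back = back₁ ++ back₂
  todo_eq : P.todo = todo₁ ++ todo₂
  ne_nil : back₁ ≠ [] ∨ todo₁ ≠ []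
  areaAtMost₁ : AreaAtMost (FreeGroup.mk '' R)
    ((FreeGroup.mk (boundaryWord back₁))⁻¹ * FreeGroup.mk todo₁) area₁
  areaAtMost₂ : AreaAtMost (FreeGroup.mk '' R)
    ((FreeGroup.mk (boundaryWord back₂))⁻¹ * FreeGroup.mk todo₂) area₂
  area_add_le : area₁ + area₂ ≤ N - Fintype.card P.diagram.Cell

namespace Cut

variable {P}

/-- The length of the boundary of the first part of the gap. -/
def length (K : P.Cut) : ℕ := K.back₁.length + K.todo₁.length

/-- The first part of the gap is as short as possible, and then has the least possible area. -/
structure IsMinimal (K : P.Cut) : Prop where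
  length_le : ∀ L : P.Cut, K.length ≤ L.length
  not_areaAtMost : ∀ n < K.area₁, ¬AreaAtMost (FreeGroup.mk '' R)
    ((FreeGroup.mk (boundaryWord K.back₁))⁻¹ * FreeGroup.mk K.todo₁) n

lemma exists_isMinimal (h : P.todo ≠ []) : ∃ K : P.Cut, K.IsMinimal := by
  classical
  have hcut : ∃ n, ∃ K : P.Cut, K.length = n :=
    ⟨_, ⟨P.back, [], P.todo, [], _, 0, by simp, by simp, .inr h, P.areaAtMost_gap,
      by simpa [← FreeGroup.one_eq_mk] using AreaAtMost.one, le_rfl⟩, rfl⟩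
  obtain ⟨K, hK⟩ := Nat.find_spec hcut
  have hex : ∃ n, AreaAtMost (FreeGroup.mk '' R)
    ((FreeGroup.mk (boundaryWord K.back₁))⁻¹ * FreeGroup.mk K.todo₁) n := ⟨_, K.areaAtMost₁⟩
  refine ⟨{ K with
    area₁ := Nat.find hex
    areaAtMost₁ := Nat.find_spec hex
    area_add_le := (add_le_add_left (Nat.find_min' hex K.areaAtMost₁) _).trans K.area_add_le },
    fun L => ?_, fun n => Nat.find_min hex⟩
  exact hK.trans_le (Nat.find_min' hcut ⟨L, rfl⟩)

variable {K : P.Cut}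

lemma area_add_card_le (K : P.Cut) : K.area₁ + K.area₂ + Fintype.card P.diagram.Cell ≤ N := by
  have := K.area_add_le
  have := P.card_le
  omega

lemma areaAtMost_front (K : P.Cut) : AreaAtMost (FreeGroup.mk '' R)
    (FreeGroup.mk (boundaryWord P.front) * FreeGroup.mk (boundaryWord K.back₁) *
      FreeGroup.mk (boundaryWord K.back₂)) (Fintype.card P.diagram.Cell) := by
  rw [mul_assoc, ← mk_append, ← boundaryWord_append, ← K.back_eq]
  exact P.areaAtMost_boundary

lemma append_mem (K : P.Cut) :
    P.hidden ++ boundaryWord K.back₁ ++ boundaryWord K.back₂ ∈ R := by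
  simpa [K.back_eq] using P.append_mem

lemma append_todo (K : P.Cut) : boundaryWord P.front ++ K.todo₁ ++ K.todo₂ = w := by
  simpa [K.todo_eq] using P.append_todo

lemma todo₁_ne_nil (hN : ProperSubwordsUnfilled R N) (K : P.Cut) : K.todo₁ ≠ [] := by
  intro h
  have hne : boundaryWord K.back₁ ≠ [] := fun h0 =>
    (K.ne_nil.resolve_right (· h)) (List.map_eq_nil_iff.1 h0)
  have hA := K.areaAtMost₁.inv
  have := K.area_add_card_le
  have := P.card_pos
  refine hN _ _ _ K.append_mem hne (by simp [P.hidden_ne_nil]) K.area₁ (by omega) ?_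
  simpa [h, ← FreeGroup.one_eq_mk] using hA

lemma back₁_ne_nil (hw : IsIndecomposable R w N) (K : P.Cut) (h : K.todo₁ ≠ []) :
    K.back₁ ≠ [] := by
  intro hback
  have h₁ := K.areaAtMost₁
  have hfront := K.areaAtMost_front
  rw [hback, boundaryWord_nil, ← FreeGroup.one_eq_mk] at h₁ hfront
  have := K.area_add_card_le
  have := hw.lt_add _ K.todo₁ _ K.append_todo.symm h (by simp [P.boundaryWord_front_ne_nil]) _ _
    (by simpa using h₁) ((by simpa using hfront : AreaAtMost _ _ _).mul_of_inv_mul K.areaAtMost₂)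
  omega

lemma area₁_pos (hR : IsSixthSystem R) (hw : IsIndecomposable R w N) (K : P.Cut)
    (h : ∀ t ∈ P.back.head?, ∀ x ∈ P.todo.head?, t.letter ≠ x) (hback : K.back₁ ≠ []) :
    0 < K.area₁ := by
  by_contra! h0
  have heq : FreeGroup.mk (boundaryWord K.back₁) = FreeGroup.mk K.todo₁ :=
    inv_mul_eq_one.1 (Nat.le_zero.1 h0 ▸ K.areaAtMost₁).eq_one
  have hletters := eq_of_isReduced_of_mk_eq
    (isReduced_of_append_append (hR.isReduced _ K.append_mem))
    (isReduced_of_append_append (K.append_todo ▸ hw.isReduced)) heq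
  obtain ⟨t, T, hT⟩ := List.exists_cons_of_ne_nil hback
  rw [hT, boundaryWord_cons] at hletters
  exact h t (by simp [K.back_eq, hT]) t.letter (by simp [K.todo_eq, ← hletters]) rfl

lemma area₁_lt_of_straddle (hK : K.IsMinimal) {u z₁ z₂ v : Word α}
    (hback : FreeGroup.invRev (boundaryWord K.back₁) = u ++ z₁) (htodo : K.todo₁ = z₂ ++ v)
    (hz : z₁ ++ z₂ ≠ []) (huv : u ++ v ≠ []) {m n : ℕ}
    (hm : AreaAtMost (FreeGroup.mk '' R) (FreeGroup.mk (z₁ ++ z₂)) m)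
    (hn : AreaAtMost (FreeGroup.mk '' R) (FreeGroup.mk u * FreeGroup.mk v) n) :
    K.area₁ < m + n := by
  by_contra! hle
  obtain ⟨S₁, S₂, hS, hS₁, hS₂⟩ : ∃ S₁ S₂, K.back₁ = S₁ ++ S₂ ∧
      boundaryWord S₁ = FreeGroup.invRev z₁ ∧ boundaryWord S₂ = FreeGroup.invRev u :=
    List.map_eq_append_iff.1 (show boundaryWord K.back₁ = _ by
      rw [← FreeGroup.invRev_append, ← hback, FreeGroup.invRev_invRev])
  have hlen₁ : S₁.length = z₁.length := by simpa using congrArg List.length hS₁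
  have hlen₂ : S₂.length = u.length := by simpa using congrArg List.length hS₂
  have hne : S₁ ≠ [] ∨ z₂ ≠ [] := by
    contrapose! hz
    have hz₁ : z₁ = [] := List.length_eq_zero_iff.1 (by simpa [hz.1] using hlen₁.symm)
    rw [hz₁, hz.2, List.append_nil]
  have := K.area_add_le
  have hlt := hK.length_le ⟨S₁, S₂ ++ K.back₂, z₂, v ++ K.todo₂, m, n + K.area₂,
    by simp [K.back_eq, hS], by simp [K.todo_eq, htodo], hne,
    by simpa [hS₁, mk_invRev, mk_append, -FreeGroup.mul_mk, -FreeGroup.inv_mk] using hm, ?_,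
    by omega⟩
  · have := List.length_pos_iff.2 huv
    simp only [length, hS, htodo, List.length_append] at hlt this
    omega
  · convert (hn.conj (FreeGroup.mk (boundaryWord K.back₂))).mul K.areaAtMost₂ using 1
    rw [boundaryWord_append, hS₂, mk_append, mk_append, mk_invRev]
    group

lemma area₁_lt_of_todo (hw : IsIndecomposable R w N) {u z v : Word α}
    (htodo : K.todo₁ = u ++ z ++ v) (hz : z ≠ []) {m n : ℕ}
    (hm : AreaAtMost (FreeGroup.mk '' R) (FreeGroup.mk z) m)
    (hn : AreaAtMost (FreeGroup.mk '' R)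
      (FreeGroup.mk (FreeGroup.invRev (boundaryWord K.back₁) ++ u) * FreeGroup.mk v) n) :
    K.area₁ < m + n := by
  have hrest := (K.areaAtMost_front.mul (hn.conj (FreeGroup.mk (boundaryWord K.back₂)))).mul
    K.areaAtMost₂
  have := hw.lt_add (boundaryWord P.front ++ u) z (v ++ K.todo₂)
    (by simp [← K.append_todo, htodo]) hz (by simp [P.boundaryWord_front_ne_nil]) m _ hm (by
      convert hrest using 1
      simp only [mk_append, mk_invRev]
      group)
  have := K.area_add_card_le
  omega

lemma not_areaAtMost_of_back (hN : ProperSubwordsUnfilled R N) {u z v : Word α}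
    (hback : FreeGroup.invRev (boundaryWord K.back₁) = u ++ z ++ v) (hz : z ≠ []) {m : ℕ}
    (hm : m < N) : ¬AreaAtMost (FreeGroup.mk '' R) (FreeGroup.mk z) m := by
  intro hA
  have hb : boundaryWord K.back₁ =
      FreeGroup.invRev v ++ FreeGroup.invRev z ++ FreeGroup.invRev u := by
    rw [← FreeGroup.invRev_invRev (L₁ := boundaryWord K.back₁), hback]
    simp [FreeGroup.invRev_append]
  refine hN (P.hidden ++ FreeGroup.invRev v) (FreeGroup.invRev z)
    (FreeGroup.invRev u ++ boundaryWord K.back₂) (by simpa [hb] using K.append_mem) ?_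
    (by simp [P.hidden_ne_nil]) m hm (by rw [mk_invRev]; exact hA.inv)
  rwa [Ne, ← List.length_eq_zero_iff, FreeGroup.invRev_length, List.length_eq_zero_iff]

lemma isIndecomposable (hw : IsIndecomposable R w N) (hN : ProperSubwordsUnfilled R N)
    (hK : K.IsMinimal) (hpos : 0 < K.area₁) :
    IsIndecomposable R (FreeGroup.invRev (boundaryWord K.back₁) ++ K.todo₁) K.area₁ where
  pos := hpos
  areaAtMost := by rw [mk_append, mk_invRev]; exact K.areaAtMost₁
  not_areaAtMost n hn := by rw [mk_append, mk_invRev]; exact hK.not_areaAtMost n hn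
  lt_add u z v h hz huv m n hm hn := by
    rcases List.append_eq_append_iff.1 h with ⟨y, hy, htodo⟩ | ⟨y, hback, -⟩
    · rcases List.append_eq_append_iff.1 hy with ⟨z₁, hback, rfl⟩ | ⟨y', rfl, rfl⟩
      · exact area₁_lt_of_straddle hK hback htodo hz huv hm hn
      · exact area₁_lt_of_todo hw htodo hz hm hn
    · by_contra! hle
      have := K.area_add_card_le
      have := P.card_pos
      exact not_areaAtMost_of_back hN hback hz (by omega) hm

lemma not_areaAtMost_back₂_append_front (K : P.Cut) (hw : IsIndecomposable R w N) {n : ℕ}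
    (hn : n + K.area₂ < N) : ¬AreaAtMost (FreeGroup.mk '' R)
      (FreeGroup.mk (boundaryWord (K.back₂ ++ P.front)) * FreeGroup.mk K.todo₁) n := by
  intro hA
  refine hw.not_areaAtMost _ hn ?_
  convert (hA.conj (FreeGroup.mk (boundaryWord K.back₂))).mul K.areaAtMost₂ using 1
  simp only [← K.append_todo, boundaryWord_append, mk_append]
  group

lemma areaAtMost_front_todo₁ (K : P.Cut) : AreaAtMost (FreeGroup.mk '' R)
    (FreeGroup.mk (boundaryWord P.front) * FreeGroup.mk K.todo₁ *
      (FreeGroup.mk (P.hidden ++ boundaryWord K.back₁))⁻¹)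
    (Fintype.card P.diagram.Cell - 1 + K.area₁) := by
  convert P.areaAtMost_remove.mul (K.areaAtMost₁.mul_comm.conj (FreeGroup.mk P.hidden)⁻¹) using 1
  rw [mk_append]
  group

/-- The diagram of the partial filling, with its boundary read from the end of `back₁`. -/
abbrev diagram (K : P.Cut) : DiskDiagram R ψ :=
  P.diagram.rotate (P.front ++ K.back₁) K.back₂ (by simp [P.boundary_eq, K.back_eq])

/-- The gluing of a diagram for the first part of the gap. -/
def gluing (hw : IsIndecomposable R w N) (hR : IsSymmetrized R) (hback : K.back₁ ≠ [])
    (htodo : K.todo₁ ≠ []) {D : DiskDiagram R ψ} {S₁ S₂ : List (BoundaryEdge α Q D.Cell)}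
    (hD : D.boundary = S₁ ++ S₂) (hS₁ : boundaryWord S₁ = FreeGroup.invRev (boundaryWord K.back₁))
    (hS₂ : boundaryWord S₂ = K.todo₁) (hcard : Fintype.card D.Cell = K.area₁)
    (hvertex : ∀ a ∈ S₁.head?, ∀ y ∈ (K.back₂ ++ P.front).head?, a.vertex = y.vertex) :
    Gluing K.diagram D where
  outer₁ := K.back₂ ++ P.front
  seam₁ := K.back₁
  seam₂ := S₁
  outer₂ := S₂
  cell := P.cell
  tail := FreeGroup.invRev P.hidden ++ FreeGroup.invRev (boundaryWord K.back₂)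
  boundary₁ := (List.append_assoc ..).symm
  boundary₂ := hD
  outer₁_ne_nil := by simp [P.front_ne_nil]
  seam₁_ne_nil := hback
  outer₂_ne_nil := by
    rintro rfl
    exact htodo hS₂.symm
  cell_of_mem a ha := P.cell_of_mem a (by simp [K.back_eq, ha])
  boundaryWord_seam₂ := hS₁
  vertex_seam₂ := hvertex
  append_tail_mem := by
    have hinv := hR.invRev_mem _ K.append_mem
    rw [FreeGroup.invRev_append, FreeGroup.invRev_append] at hinv
    simpa [hS₁] using hR.append_comm_mem _ _ hinv
  length_append_tail := by
    have hlen := P.length_append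
    have hS := congrArg List.length hS₁
    simp only [K.back_eq, List.length_append, FreeGroup.invRev_length, length_boundaryWord]
      at hlen hS ⊢
    rw [show K.diagram.label P.cell = P.diagram.label P.cell from rfl]
    omega
  areaAtMost_remove := by
    convert P.areaAtMost_remove.conj (FreeGroup.mk (boundaryWord K.back₂))⁻¹ using 1
    simp only [boundaryWord_append, mk_append, mk_invRev]
    group
  not_areaAtMost := by
    have hle := K.area_add_card_le
    have hpos := P.card_pos
    have hcard₁ : Fintype.card K.diagram.Cell = Fintype.card P.diagram.Cell := rfl
    rw [hS₂]
    exact K.not_areaAtMost_back₂_append_front hw (by omega)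

lemma exists_gapLength_lt_of_gluing (hR : IsSixthSystem R) {D : DiskDiagram R ψ}
    (E : Gluing K.diagram D) (houter₁ : E.outer₁ = K.back₂ ++ P.front)
    (houter₂ : boundaryWord E.outer₂ = K.todo₁) (htodo : K.todo₁ ≠ [])
    (hcard : Fintype.card D.Cell = K.area₁) :
    ∃ P' : PartialFilling R ψ g w N, P'.gapLength < P.gapLength := by
  obtain ⟨A, B, hAB, hA, hB, hAcell, hBhead⟩ := exists_embed_append_eq
    (f := (Sum.inl : P.diagram.Cell → P.diagram.Cell ⊕ D.Cell)) K.back₂ P.front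
  have hglue : (E.glue hR).boundary = A ++ (B ++ embed Sum.inr E.outer₂) := by
    rw [← List.append_assoc, ← hAB, ← houter₁]
    rfl
  have hBne : B ≠ [] := by
    rintro rfl
    exact P.boundaryWord_front_ne_nil hB.symm
  have hAlen : A.length = K.back₂.length := by
    rw [← length_boundaryWord, hA, length_boundaryWord]
  have hle := K.area_add_card_le
  have hpos := P.card_pos
  have hcard' : Fintype.card (P.diagram.Cell ⊕ D.Cell) = Fintype.card P.diagram.Cell + K.area₁ := by
    rw [Fintype.card_sum, hcard]
  refine ⟨{
    diagram := (E.glue hR).rotate A (B ++ embed Sum.inr E.outer₂) hglue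
    front := B ++ embed Sum.inr E.outer₂
    back := A
    todo := K.todo₂
    hidden := P.hidden ++ boundaryWord K.back₁
    cell := Sum.inl P.cell
    boundary_eq := rfl
    cell_of_mem := fun a ha => ?_
    front_ne_nil := by simp [hBne]
    vertex_front := fun a ha => ?_
    append_todo := by simp [boundaryWord_embed, hB, houter₂, ← K.append_todo]
    append_mem := by simpa [hA] using K.append_mem
    hidden_ne_nil := by simp [P.hidden_ne_nil]
    length_append := ?_
    card_le := by rw [hcard']; omega
    areaAtMost_gap := by rw [hA]; exact K.areaAtMost₂.mono (by rw [hcard']; omega)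
    areaAtMost_remove := ?_ }, ?_⟩
  · obtain ⟨b, hb, hab⟩ := hAcell a ha
    rw [hab, P.cell_of_mem b (by simp [K.back_eq, hb])]
  · obtain ⟨y, hy, hay⟩ := hBhead a (by rwa [List.head?_append_of_ne_nil _ hBne] at ha)
    exact hay.trans (P.vertex_front y hy)
  · simpa [hAlen, K.back_eq, add_assoc] using P.length_append
  · rw [boundaryWord_append, boundaryWord_embed, hB, houter₂, mk_append, hcard']
    exact K.areaAtMost_front_todo₁.mono (by omega)
  · have := List.length_pos_iff.2 htodo
    simp only [gapLength, hAlen, K.back_eq, K.todo_eq, List.length_append]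
    omega

end Cut

lemma exists_gapLength_lt (hR : IsSixthSystem R) (hw : IsIndecomposable R w N)
    (hN : ∀ M < N, ∀ w, IsIndecomposable R w M → ∀ g, HasDiskDiagram R ψ g w M)
    (hgap : P.gapLength ≠ 0) :
    ∃ P' : PartialFilling R ψ g w N, P'.gapLength < P.gapLength := by
  have hsub := properSubwordsUnfilled hR fun M hM w h => hN M hM w h 1
  have htodo : P.todo ≠ [] := fun h => by
    have hback : P.back ≠ [] := fun h0 => hgap (by simp [gapLength, h, h0])
    exact P.todo_ne_nil hsub hback h
  by_cases hfold : ∀ t ∈ P.back.head?, ∀ x ∈ P.todo.head?, t.letter ≠ x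
  · obtain ⟨K, hK⟩ := Cut.exists_isMinimal htodo
    have htodo₁ := K.todo₁_ne_nil hsub
    have hback₁ := K.back₁_ne_nil hw htodo₁
    have hpos := K.area₁_pos hR hw hfold hback₁
    obtain ⟨y, hy⟩ := Option.isSome_iff_exists.1
      (List.isSome_head?.2 (List.append_ne_nil_of_right_ne_nil K.back₂ P.front_ne_nil))
    have := K.area_add_card_le
    have := P.card_pos
    obtain ⟨D, hword, hbase, hcard⟩ := hN K.area₁ (by omega) _
      (K.isIndecomposable hw hsub hK hpos) y.vertex
    obtain ⟨S₁, S₂, hD, hS₁, hS₂⟩ := List.map_eq_append_iff.1 hword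
    have hne : S₁ ≠ [] := by
      rintro rfl
      exact hback₁ (List.length_eq_zero_iff.1 (by simpa using (congrArg List.length hS₁).symm))
    refine Cut.exists_gapLength_lt_of_gluing hR
      (K.gluing hw hR.toIsSymmetrized hback₁ htodo₁ hD hS₁ hS₂ hcard ?_) rfl hS₂ htodo₁ hcard
    intro a ha z hz
    obtain rfl := Option.mem_unique hy hz
    exact hbase a (by rwa [hD, List.head?_append_of_ne_nil _ hne])
  · push Not at hfold
    obtain ⟨t, ht, _, hx, rfl⟩ := hfold
    obtain ⟨T, hT⟩ := List.head?_eq_some_iff.1 ht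
    obtain ⟨v, hv⟩ := List.head?_eq_some_iff.1 hx
    exact ⟨P.advance hT hv, by simp [gapLength, advance, hT, hv]; omega⟩

theorem hasDiskDiagram (P : PartialFilling R ψ g w N) (hR : IsSixthSystem R)
    (hw : IsIndecomposable R w N)
    (hN : ∀ M < N, ∀ w, IsIndecomposable R w M → ∀ g, HasDiskDiagram R ψ g w M) :
    HasDiskDiagram R ψ g w N := by
  induction hl : P.gapLength using Nat.strong_induction_on generalizing P with
  | _ l ih =>
  by_cases hgap : P.gapLength = 0
  · exact P.hasDiskDiagram_of_gapLength_eq_zero hw hgap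
  · obtain ⟨P', hP'⟩ := P.exists_gapLength_lt hR hw hN hgap
    exact ih _ (hl ▸ hP') P' rfl

end PartialFilling

/-- The cell at the first letter of a word as a partial filling. -/
def PartialFilling.singleCell (hR : IsSymmetrized R) (hψ : ∀ r ∈ R, ψ (FreeGroup.mk r) = 1)
    (g : Q) {x : α × Bool} {s v : Word α} {N : ℕ} (hs : x :: s ∈ R) (hpos : 0 < N)
    (hA : AreaAtMost (FreeGroup.mk '' R) ((FreeGroup.mk s)⁻¹ * FreeGroup.mk v) (N - 1)) :
    PartialFilling R ψ g (x :: v) N where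
  diagram := IsoSpecPaper.singleCell hR hψ g hs
  front := [⟨g, x, s, (), false⟩]
  back := cellBoundary ψ g [x] s
  todo := v
  hidden := [x]
  cell := ()
  boundary_eq := by simp [cellBoundary, ← FreeGroup.one_eq_mk]
  cell_of_mem _ _ := rfl
  front_ne_nil := by simp
  vertex_front := by simp
  append_todo := rfl
  append_mem := by
    rw [boundaryWord_cellBoundary]
    exact hs
  hidden_ne_nil := by simp
  length_append := by simp [length_cellBoundary, add_comm]
  card_le := hpos
  areaAtMost_gap := by rw [boundaryWord_cellBoundary]; exact hA
  areaAtMost_remove := by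
    rw [boundaryWord_cons, boundaryWord_nil, mul_inv_cancel]
    exact AreaAtMost.one

theorem IsIndecomposable.hasDiskDiagram (hR : IsSixthSystem R)
    (hψ : ∀ r ∈ R, ψ (FreeGroup.mk r) = 1) {w : Word α} {N : ℕ} (hw : IsIndecomposable R w N)
    (g : Q) : HasDiskDiagram R ψ g w N := by
  classical
  induction N using Nat.strong_induction_on generalizing w g with
  | _ N ih =>
  obtain ⟨x, v, rfl⟩ := List.exists_cons_of_ne_nil hw.ne_nil
  obtain ⟨t, hA⟩ := hw.areaAtMost.exists_weightedArea hR.toIsSymmetrized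
  rcases firstEdgeDichotomy hR.toIsSymmetrized t N x v hw.isReduced hA with
    ⟨s, hs, m, hm, hrest⟩ | ⟨_, _, Z, B, rfl, m₁, m₂, _, _, hZ, hB, hle, _⟩
  · exact (PartialFilling.singleCell hR.toIsSymmetrized hψ g hs hw.pos
      (hrest.mono (by omega))).hasDiskDiagram hR hw fun M hM w h g => ih M hM h g
  · obtain ⟨hhead, -⟩ := isReduced_cons_iff.1 hw.isReduced
    have hZne : Z ≠ [] := by
      rintro rfl
      exact hhead _ rfl rfl
    have hrest : AreaAtMost (FreeGroup.mk '' R)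
        (FreeGroup.mk [x] * FreeGroup.mk (letterInv x :: B)) m₂ := by
      rw [mk_cons (letterInv x) B, mk_letterInv, mul_inv_cancel_left]
      exact hB.areaAtMost
    have := hw.lt_add [x] Z (letterInv x :: B) (by simp) hZne (by simp) m₁ m₂ hZ.areaAtMost hrest
    omega

end Existence

/-! ### Dehn's algorithm -/

section DehnAlgorithm

variable {α : Type*} {R : Set (Word α)}

lemma IsSixthSystem.exists_hasDiskDiagram {Q : Type*} [Group Q] {ψ : FreeGroup α →* Q}
    (hR : IsSixthSystem R) (hψ : ∀ r ∈ R, ψ (FreeGroup.mk r) = 1) {w : Word α}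
    (hw : FreeGroup.mk w ∈ Subgroup.normalClosure (FreeGroup.mk '' R)) (hne : FreeGroup.mk w ≠ 1)
    (hsub : ∀ u z v, w = u ++ z ++ v → z ≠ [] → u ++ v ≠ [] →
      FreeGroup.mk z ∉ Subgroup.normalClosure (FreeGroup.mk '' R)) (g : Q) :
    ∃ N, HasDiskDiagram R ψ g w N := by
  classical
  have hex := exists_areaAtMost_of_mem_normalClosure hw
  refine ⟨Nat.find hex, IsIndecomposable.hasDiskDiagram hR hψ ⟨?_, Nat.find_spec hex,
    fun _ => Nat.find_min hex, fun u z v hz hne huv _ _ hA _ => ?_⟩ g⟩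
  · rw [Nat.pos_iff_ne_zero, Ne, Nat.find_eq_zero]
    exact fun h => hne h.eq_one
  · exact absurd hA.mem_normalClosure (hsub u z v hz hne huv)

lemma IsSixthSystem.exists_dehnStep (hR : IsSixthSystem R) {w : Word α}
    (hw : FreeGroup.mk w ∈ Subgroup.normalClosure (FreeGroup.mk '' R))
    (hred : FreeGroup.IsReduced w) (hne : w ≠ []) :
    ∃ u e v e', w = u ++ e ++ v ∧ e ++ e' ∈ R ∧ e'.length < e.length := by
  induction hl : w.length using Nat.strong_induction_on generalizing w with
  | _ l ih =>
  by_cases hsub : ∀ u z v, w = u ++ z ++ v → z ≠ [] → u ++ v ≠ [] →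
      FreeGroup.mk z ∉ Subgroup.normalClosure (FreeGroup.mk '' R)
  · have hmk : FreeGroup.mk w ≠ 1 := fun h =>
      hne (eq_of_isReduced_of_mk_eq hred FreeGroup.IsReduced.nil h)
    obtain ⟨N, D, rfl, -, -⟩ :=
      hR.exists_hasDiskDiagram (ψ := (1 : FreeGroup α →* Unit)) (fun _ _ => rfl) hw hmk hsub 1
    obtain ⟨u, e, v, e', hword, hmem, hlt, -⟩ := D.hasDehnStep hR fun h =>
      hne (by rw [DiskDiagram.word, h, boundaryWord_nil])
    exact ⟨u, e, v, e', hword, hmem, hlt⟩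
  · push Not at hsub
    obtain ⟨u, z, v, rfl, hz, huv, hmem⟩ := hsub
    have hlt : z.length < l := by
      have := List.length_pos_iff.2 huv
      simp only [List.length_append] at hl this
      omega
    obtain ⟨u', e, v', e', rfl, he, hlen⟩ :=
      ih _ hlt hmem (isReduced_of_append_append hred) hz rfl
    exact ⟨u ++ u', e, v' ++ v, e', by simp, he, hlen⟩

/-- The relators of length at most `K`. -/
def shortRelators (R : Set (Word α)) (K : ℕ) : Set (Word α) := {r | r ∈ R ∧ r.length ≤ K}

lemma IsSixthSystem.restrict_length (hR : IsSixthSystem R) (K : ℕ) :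
    IsSixthSystem (shortRelators R K) where
  append_comm_mem u v h :=
    ⟨hR.append_comm_mem u v h.1, by simpa [add_comm] using h.2⟩
  invRev_mem r h := ⟨hR.invRev_mem r h.1, by simpa using h.2⟩
  isReduced r h := hR.isReduced r h.1
  ne_nil r h := hR.ne_nil r h.1
  six_mul_length_lt r hr s hs := hR.six_mul_length_lt r hr.1 s hs.1

lemma IsSixthSystem.mem_normalClosure_shortRelators (hR : IsSixthSystem R) {k : ℕ} {w : Word α}
    (hw : FreeGroup.mk w ∈ Subgroup.normalClosure (FreeGroup.mk '' R))
    (hk : w.length ≤ k) :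
    FreeGroup.mk w ∈ Subgroup.normalClosure (FreeGroup.mk '' shortRelators R (2 * k)) := by
  classical
  induction hl : w.length using Nat.strong_induction_on generalizing w with
  | _ l ih =>
  have hred : FreeGroup.mk (FreeGroup.reduce w) = FreeGroup.mk w := FreeGroup.reduce.self
  have hle : (FreeGroup.reduce w).length ≤ w.length := FreeGroup.reduce.red.length_le
  by_cases hnil : FreeGroup.reduce w = []
  · rw [← hred, hnil, ← FreeGroup.one_eq_mk]
    exact one_mem _
  rw [← hred] at hw ⊢
  obtain ⟨u, e, v, e', hword, hmem, hlt⟩ :=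
    hR.exists_dehnStep hw (FreeGroup.IsReduced.of_reduce_eq FreeGroup.reduce.idem) hnil
  have hlen := congrArg List.length hword
  simp only [List.length_append] at hlen
  have hconj : FreeGroup.mk (FreeGroup.reduce w) = FreeGroup.mk u * FreeGroup.mk (e ++ e') *
      (FreeGroup.mk u)⁻¹ * FreeGroup.mk (u ++ FreeGroup.invRev e' ++ v) := by
    rw [hword]
    simp only [mk_append, mk_invRev]
    group
  have hrel (S : Set (Word α)) (h : e ++ e' ∈ S) :
      FreeGroup.mk u * FreeGroup.mk (e ++ e') * (FreeGroup.mk u)⁻¹ ∈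
        Subgroup.normalClosure (FreeGroup.mk '' S) :=
    Subgroup.normalClosure_normal.conj_mem _
      (Subgroup.subset_normalClosure (Set.mem_image_of_mem _ h)) _
  have hshort : e ++ e' ∈ shortRelators R (2 * k) :=
    ⟨hmem, by rw [List.length_append]; omega⟩
  have hdehn : (u ++ FreeGroup.invRev e' ++ v).length < l := by
    simp only [List.length_append, FreeGroup.invRev_length]
    omega
  rw [hconj] at hw ⊢
  exact mul_mem (hrel _ hshort)
    (ih _ hdehn ((Subgroup.mul_mem_cancel_left _ (hrel _ hmem)).1 hw) (by omega) rfl)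

end DehnAlgorithm

/-! ### The word metric -/

section WordMetric

variable {α Q : Type*}

lemma wnorm_mk_le (w : Word α) : wnorm (FreeGroup.mk w) ≤ w.length := by
  classical exact FreeGroup.norm_mk_le

lemma exists_mk_eq_length_eq_wnorm (x : FreeGroup α) :
    ∃ w : Word α, FreeGroup.mk w = x ∧ w.length = wnorm x := by
  let := Classical.decEq α
  exact ⟨x.toWord, FreeGroup.mk_toWord, rfl⟩

lemma wnorm_mul_le (x y : FreeGroup α) : wnorm (x * y) ≤ wnorm x + wnorm y := by
  classical exact FreeGroup.norm_mul_le x y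

lemma wnorm_inv (x : FreeGroup α) : wnorm x⁻¹ = wnorm x := by
  classical exact FreeGroup.norm_inv_eq

lemma wnorm_one : wnorm (1 : FreeGroup α) = 0 := by
  classical exact FreeGroup.norm_one

variable [Group Q] {ψ : FreeGroup α →* Q}

lemma wlen_map_le (ψ : FreeGroup α →* Q) (x : FreeGroup α) : wlen ψ (ψ x) ≤ wnorm x :=
  Nat.sInf_le ⟨x, rfl, rfl⟩

lemma wlen_map_mk_le (ψ : FreeGroup α →* Q) (s : Word α) :
    wlen ψ (ψ (FreeGroup.mk s)) ≤ s.length :=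
  (wlen_map_le ψ _).trans (wnorm_mk_le s)

lemma wlen_one (ψ : FreeGroup α →* Q) : wlen ψ 1 = 0 := by
  simpa [wnorm_one] using wlen_map_le ψ 1

lemma exists_wnorm_eq_wlen (hψ : Surjective ψ) (h : Q) : ∃ x, wnorm x = wlen ψ h ∧ ψ x = h := by
  obtain ⟨x, rfl⟩ := hψ h
  exact Nat.sInf_mem (s := {n | ∃ y, wnorm y = n ∧ ψ y = ψ x}) ⟨_, x, rfl, rfl⟩

lemma wlen_mul_le (hψ : Surjective ψ) (g h : Q) : wlen ψ (g * h) ≤ wlen ψ g + wlen ψ h := by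
  obtain ⟨x, hx, rfl⟩ := exists_wnorm_eq_wlen hψ g
  obtain ⟨y, hy, rfl⟩ := exists_wnorm_eq_wlen hψ h
  rw [← hx, ← hy, ← map_mul]
  exact (wlen_map_le ψ _).trans (wnorm_mul_le x y)

lemma wlen_inv (hψ : Surjective ψ) (g : Q) : wlen ψ g⁻¹ = wlen ψ g := by
  have hle (h : Q) : wlen ψ h⁻¹ ≤ wlen ψ h := by
    obtain ⟨x, hx, rfl⟩ := exists_wnorm_eq_wlen hψ h
    rw [← hx, ← map_inv, ← wnorm_inv x]
    exact wlen_map_le ψ _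
  exact (hle g).antisymm (by simpa using hle g⁻¹)

lemma wdist_self (ψ : FreeGroup α →* Q) (g : Q) : wdist ψ g g = 0 := by
  rw [wdist, inv_mul_cancel, wlen_one]

lemma wdist_comm (hψ : Surjective ψ) (g h : Q) : wdist ψ g h = wdist ψ h g := by
  rw [wdist, ← wlen_inv hψ, mul_inv_rev, inv_inv, wdist]

lemma wdist_triangle (hψ : Surjective ψ) (g h k : Q) :
    wdist ψ g k ≤ wdist ψ g h + wdist ψ h k := by
  simpa [wdist, mul_assoc] using wlen_mul_le hψ (g⁻¹ * h) (h⁻¹ * k)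

lemma wdist_mul_right_eq_wlen (ψ : FreeGroup α →* Q) (g h : Q) :
    wdist ψ g (g * h) = wlen ψ h := by
  rw [wdist, inv_mul_cancel_left]

/-- The word `s` labels geodesic paths in the Cayley graph. -/
def IsGeodesicWord (ψ : FreeGroup α →* Q) (s : Word α) : Prop :=
  wlen ψ (ψ (FreeGroup.mk s)) = s.length

lemma exists_isGeodesicWord (hψ : Surjective ψ) (h : Q) :
    ∃ s, IsGeodesicWord ψ s ∧ ψ (FreeGroup.mk s) = h := by
  obtain ⟨x, hx, rfl⟩ := exists_wnorm_eq_wlen hψ h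
  obtain ⟨s, rfl, hs⟩ := exists_mk_eq_length_eq_wnorm x
  exact ⟨s, hx.symm.trans hs.symm, rfl⟩

namespace IsGeodesicWord

lemma of_isInfix (hψ : Surjective ψ) {s t : Word α} (h : IsGeodesicWord ψ t) (hst : s <:+: t) :
    IsGeodesicWord ψ s := by
  obtain ⟨u, v, rfl⟩ := hst
  have hu := wlen_map_mk_le ψ u
  have hs := wlen_map_mk_le ψ s
  have hv := wlen_map_mk_le ψ v
  rw [IsGeodesicWord, mk_append, mk_append, map_mul, map_mul, List.length_append,
    List.length_append] at h
  have h₁ := wlen_mul_le hψ (ψ (FreeGroup.mk u) * ψ (FreeGroup.mk s)) (ψ (FreeGroup.mk v))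
  have h₂ := wlen_mul_le hψ (ψ (FreeGroup.mk u)) (ψ (FreeGroup.mk s))
  unfold IsGeodesicWord
  omega

lemma length_le (hψ : Surjective ψ) {s t : Word α} (h : IsGeodesicWord ψ s)
    (hst : ψ (FreeGroup.mk (s ++ t)) = 1) : s.length ≤ t.length := by
  rw [mk_append, map_mul] at hst
  rw [← h, eq_inv_of_mul_eq_one_left hst, wlen_inv hψ]
  exact wlen_map_mk_le ψ t

lemma eq_nil (hψ : Surjective ψ) {s : Word α} (h : IsGeodesicWord ψ s)
    (hs : ψ (FreeGroup.mk s) = 1) : s = [] :=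
  List.length_eq_zero_iff.1 (Nat.le_zero.1 (h.length_le hψ (t := []) (by simpa using hs)))

end IsGeodesicWord

/-- The vertices of the path that starts at `g` and reads the word `s`. -/
def pathVertices (ψ : FreeGroup α →* Q) (g : Q) (s : Word α) : Set Q :=
  {p | ∃ u, u <+: s ∧ g * ψ (FreeGroup.mk u) = p}

lemma self_mem_pathVertices (g : Q) (s : Word α) : g ∈ pathVertices ψ g s :=
  ⟨[], List.nil_prefix, by simp [← FreeGroup.one_eq_mk]⟩

lemma mul_mem_pathVertices (g : Q) (s : Word α) :
    g * ψ (FreeGroup.mk s) ∈ pathVertices ψ g s :=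
  ⟨s, List.prefix_rfl, rfl⟩

lemma pathVertices_append (g : Q) (u v : Word α) : pathVertices ψ g (u ++ v) =
    pathVertices ψ g u ∪ pathVertices ψ (g * ψ (FreeGroup.mk u)) v := by
  ext p
  constructor
  · rintro ⟨t, ht, rfl⟩
    rcases List.prefix_or_prefix_of_prefix ht (List.prefix_append u v) with h | ⟨r, rfl⟩
    · exact .inl ⟨t, h, rfl⟩
    · exact .inr ⟨r, (List.prefix_append_right_inj u).1 ht, by rw [mk_append, map_mul, mul_assoc]⟩
  · rintro (⟨t, ht, rfl⟩ | ⟨t, ht, rfl⟩)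
    · exact ⟨t, ht.trans (List.prefix_append u v), rfl⟩
    · exact ⟨u ++ t, (List.prefix_append_right_inj u).2 ht,
        by rw [mk_append, map_mul, mul_assoc]⟩

lemma pathVertices_cons (g : Q) (x : α × Bool) (s : Word α) : pathVertices ψ g (x :: s) =
    insert g (pathVertices ψ (g * ψ (FreeGroup.mk [x])) s) := by
  ext p
  constructor
  · rintro ⟨u, hu, rfl⟩
    rcases List.prefix_cons_iff.1 hu with rfl | ⟨t, rfl, ht⟩
    · exact .inl (by simp [← FreeGroup.one_eq_mk])
    · exact .inr ⟨t, ht, by rw [mk_cons x t, map_mul, mul_assoc]⟩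
  · rintro (rfl | ⟨t, ht, rfl⟩)
    · exact self_mem_pathVertices _ _
    · exact ⟨x :: t, List.cons_prefix_cons.2 ⟨rfl, ht⟩, by rw [mk_cons x t, map_mul, mul_assoc]⟩

lemma wdist_add_wdist_le_of_mem_pathVertices {g p : Q} {s : Word α}
    (hp : p ∈ pathVertices ψ g s) :
    wdist ψ g p + wdist ψ p (g * ψ (FreeGroup.mk s)) ≤ s.length := by
  obtain ⟨u, ⟨v, rfl⟩, rfl⟩ := hp
  rw [mk_append, map_mul, ← mul_assoc, wdist_mul_right_eq_wlen, wdist_mul_right_eq_wlen,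
    List.length_append]
  exact add_le_add (wlen_map_mk_le ψ u) (wlen_map_mk_le ψ v)

lemma wdist_le_length_of_mem_pathVertices (hψ : Surjective ψ) {g p q : Q} {s : Word α}
    (hp : p ∈ pathVertices ψ g s) (hq : q ∈ pathVertices ψ g s) : wdist ψ p q ≤ s.length := by
  have hle {u v : Word α} (huv : u <+: v) (hv : v <+: s) :
      wdist ψ (g * ψ (FreeGroup.mk u)) (g * ψ (FreeGroup.mk v)) ≤ s.length := by
    obtain ⟨t, rfl⟩ := huv
    rw [mk_append, map_mul, ← mul_assoc, wdist_mul_right_eq_wlen]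
    have := hv.length_le
    rw [List.length_append] at this
    exact (wlen_map_mk_le ψ t).trans (by omega)
  obtain ⟨u, hu, rfl⟩ := hp
  obtain ⟨v, hv, rfl⟩ := hq
  rcases List.prefix_or_prefix_of_prefix hu hv with h | h
  · exact hle h hv
  · exact wdist_comm hψ _ _ ▸ hle h hu

lemma pathSum_eq_sub {θ : Q → α × Bool → ℤ} {f : Q → ℤ} {g : Q} {s : Word α}
    (h : ∀ p x, p ∈ pathVertices ψ g s → p * ψ (FreeGroup.mk [x]) ∈ pathVertices ψ g s →
      θ p x = f p - f (p * ψ (FreeGroup.mk [x]))) :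
    pathSum ψ θ g s = f g - f (g * ψ (FreeGroup.mk s)) := by
  induction s generalizing g with
  | nil => simp [pathSum, ← FreeGroup.one_eq_mk]
  | cons x s ih =>
    rw [pathVertices_cons] at h
    rw [pathSum, h g x (.inl rfl) (.inr (self_mem_pathVertices _ _)),
      ih fun p y hp hy => h p y (.inr hp) (.inr hy), mk_cons x s, map_mul, mul_assoc]
    ring

/-- The closed `τ`-neighborhood of a set in the word metric. -/
def neighborhood (ψ : FreeGroup α →* Q) (τ : ℕ) (A : Set Q) : Set Q :=
  {p | ∃ q ∈ A, wdist ψ q p ≤ τ}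

lemma subset_neighborhood (τ : ℕ) (A : Set Q) : A ⊆ neighborhood ψ τ A :=
  fun p hp => ⟨p, hp, by simp [wdist_self]⟩

lemma neighborhood_mono {σ τ : ℕ} (h : σ ≤ τ) (A : Set Q) :
    neighborhood ψ σ A ⊆ neighborhood ψ τ A :=
  fun _ ⟨q, hq, hqp⟩ => ⟨q, hq, hqp.trans h⟩

lemma mem_neighborhood_add (hψ : Surjective ψ) {σ τ : ℕ} {A : Set Q} {p q : Q}
    (hp : p ∈ neighborhood ψ τ A) (hpq : wdist ψ p q ≤ σ) : q ∈ neighborhood ψ (τ + σ) A := by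
  obtain ⟨a, ha, hap⟩ := hp
  exact ⟨a, ha, (wdist_triangle hψ a p q).trans (add_le_add hap hpq)⟩

/-- Two sets come within distance `D` in the word metric. -/
def AreClose (ψ : FreeGroup α →* Q) (D : ℕ) (A B : Set Q) : Prop :=
  ∃ p ∈ A, ∃ q ∈ B, wdist ψ p q ≤ D

lemma AreClose.symm (hψ : Surjective ψ) {D : ℕ} {A B : Set Q} (h : AreClose ψ D A B) :
    AreClose ψ D B A := by
  obtain ⟨p, hp, q, hq, hpq⟩ := h
  exact ⟨q, hq, p, hp, wdist_comm hψ p q ▸ hpq⟩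

lemma AreClose.mono {D : ℕ} {A B A' B' : Set Q} (h : AreClose ψ D A B) (hA : A ⊆ A')
    (hB : B ⊆ B') : AreClose ψ D A' B' := by
  obtain ⟨p, hp, q, hq, hpq⟩ := h
  exact ⟨p, hA hp, q, hB hq, hpq⟩

lemma areClose_of_mem {A B : Set Q} {p : Q} (hA : p ∈ A) (hB : p ∈ B) (D : ℕ) :
    AreClose ψ D A B :=
  ⟨p, hA, p, hB, by simp [wdist_self]⟩

lemma areClose_of_mem_neighborhood (hψ : Surjective ψ) {σ τ D : ℕ} {A B : Set Q} {p : Q}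
    (hA : p ∈ neighborhood ψ σ A) (hB : p ∈ neighborhood ψ τ B) (hD : σ + τ ≤ D) :
    AreClose ψ D A B := by
  obtain ⟨a, ha, hap⟩ := hA
  obtain ⟨b, hb, hbp⟩ := hB
  refine ⟨a, ha, b, hb, (wdist_triangle hψ a p b).trans ?_⟩
  rw [wdist_comm hψ p b]
  omega

end WordMetric

/-! ### Diagrams with geodesic sides -/

section Polygon

variable {α Q : Type*}

lemma head?_flatten_cell_ne {I : Type*} {L : List (List (BoundaryEdge α Q I))} {c : I}
    (hc : ∀ S ∈ L, ∀ a ∈ S.head?, a.cell ≠ c) : ∀ a ∈ L.flatten.head?, a.cell ≠ c := by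
  intro a ha
  rw [List.head?_flatten, Option.mem_def] at ha
  obtain ⟨S, hS, haS⟩ := List.exists_of_findSome?_eq_some ha
  exact hc S hS a haS

variable [Group Q] {ψ : FreeGroup α →* Q} {R : Set (Word α)}

namespace DiskDiagram

variable {D : DiskDiagram R ψ} {L : List (List (BoundaryEdge α Q D.Cell))}

lemma edgeCount_eq_of_breakCount_eq_one {c : D.Cell} (hL : D.boundary = L.flatten)
    (hhead : ∀ S ∈ L, ∀ a ∈ S.head?, a.cell ≠ c) (hc : breakCount c D.boundary = 1) :
    ∃ L₁ S L₂, L = L₁ ++ S :: L₂ ∧ S.IsChain (Follows ψ) ∧ breakCount c S = 1 ∧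
      edgeCount c D.boundary = edgeCount c S := by
  obtain ⟨a, ha, hac⟩ : ∃ a ∈ D.boundary, a.isBreak = true ∧ a.cell = c := by
    have hpos : 0 < breakCount c D.boundary := by omega
    simpa [breakCount, List.countP_pos_iff] using hpos
  obtain ⟨S, hS, haS⟩ := List.mem_flatten.1 (hL ▸ ha)
  obtain ⟨L₁, L₂, rfl⟩ := List.append_of_mem hS
  have hchain := D.isCyclicChain.1
  rw [hL, List.flatten_append, List.flatten_cons] at hchain hc
  rw [List.isChain_append, List.isChain_append] at hchain
  rw [breakCount_append, breakCount_append] at hc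
  have hbreak : 0 < breakCount c S := List.countP_pos_iff.2 ⟨a, haS, by simpa using hac⟩
  have hzero₁ := edgeCount_eq_zero_of_breakCount_eq_zero hchain.1
    (head?_flatten_cell_ne fun T hT => hhead T (by simp [hT])) (by omega)
  have hzero₂ := edgeCount_eq_zero_of_breakCount_eq_zero hchain.2.1.2.1
    (head?_flatten_cell_ne fun T hT => hhead T (by simp [hT])) (by omega)
  refine ⟨L₁, S, L₂, rfl, hchain.2.1.1, by omega, ?_⟩
  rw [hL, List.flatten_append, List.flatten_cons, edgeCount_append, edgeCount_append, hzero₁,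
    hzero₂, add_zero, zero_add]

/-- A cell of positive curvature would meet a single side, along more than half of its label. -/
lemma curvature_nonpos (hR : IsSixthSystem R) (hψ : Surjective ψ)
    (hker : ∀ r ∈ R, ψ (FreeGroup.mk r) = 1) (hL : D.boundary = L.flatten)
    (hgeo : ∀ S ∈ L, IsGeodesicWord ψ (boundaryWord S)) {c : D.Cell}
    (hhead : ∀ S ∈ L, ∀ a ∈ S.head?, a.cell ≠ c) : D.curvature c ≤ 0 := by
  by_contra! hpos
  have hle := D.breakCount_le_arcs c
  have hcount := edgeCount_ne_zero_of_curvature_pos hR hpos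
  have hbreak : breakCount c D.boundary ≠ 0 := fun h =>
    hcount (edgeCount_eq_zero_of_breakCount_eq_zero D.isCyclicChain.1
      (hL ▸ head?_flatten_cell_ne hhead) h)
  unfold curvature at hpos
  obtain ⟨L₁, S, L₂, rfl, hchain, hS, hcountS⟩ :=
    edgeCount_eq_of_breakCount_eq_one hL hhead (by omega)
  obtain ⟨U, a, B, V, rfl, rfl, hB, hlen⟩ := exists_run_of_breakCount_eq_one hchain
    (hhead S (by simp)) hS
  have hlabel := length_label_lt hR (c := a.cell) (by omega)
  obtain ⟨e, e', v, hword, hmem, hlt, -⟩ := exists_areaAtMost_of_run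
    (a := a) (U := L₁.flatten ++ U) (B := B) (V := V ++ L₂.flatten) (by simp [hL]) hB (by omega)
  have he : e <:+: boundaryWord (U ++ a :: (B ++ V)) := by
    refine ⟨boundaryWord U, v ++ boundaryWord V, ?_⟩
    rw [← List.cons_append, boundaryWord_append, boundaryWord_append, hword]
    simp
  have hgeodesic := (hgeo _ (by simp)).of_isInfix hψ he
  exact hlt.not_ge (hgeodesic.length_le hψ (hker _ hmem))

open scoped Classical in
lemma card_edgeCount_eq_zero_add_six_le (hR : IsSixthSystem R) (hψ : Surjective ψ)
    (hker : ∀ r ∈ R, ψ (FreeGroup.mk r) = 1) (hL : D.boundary = L.flatten)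
    (hgeo : ∀ S ∈ L, IsGeodesicWord ψ (boundaryWord S)) :
    Finset.card {c | edgeCount c D.boundary = 0} + 6 ≤ 6 * L.length := by
  let H : Finset D.Cell := (L.filterMap fun S => S.head?.map BoundaryEdge.cell).toFinset
  have hH : H.card ≤ L.length := (List.toFinset_card_le _).trans (List.length_filterMap_le _ _)
  have hcurvature (c : D.Cell) : D.curvature c ≤
      (if c ∈ H then 6 else 0) - if edgeCount c D.boundary = 0 then 1 else 0 := by
    by_cases hzero : edgeCount c D.boundary = 0
    · have := six_lt_arcs hR hzero
      unfold curvature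
      split_ifs <;> omega
    · by_cases hc : c ∈ H
      · rw [if_pos hc, if_neg hzero]
        unfold curvature
        omega
      · rw [if_neg hc, if_neg hzero]
        refine curvature_nonpos hR hψ hker hL hgeo fun S hS a ha hac => hc ?_
        exact List.mem_toFinset.2 (List.mem_filterMap.2 ⟨S, hS, by simp [Option.mem_def.1 ha, hac]⟩)
  have hsum := D.six_le_sum_curvature.trans (Finset.sum_le_sum fun c _ => hcurvature c)
  rw [Finset.sum_sub_distrib, Finset.sum_ite_mem, Finset.univ_inter, Finset.sum_const,
    Finset.sum_boole, nsmul_eq_mul] at hsum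
  omega

end DiskDiagram

end Polygon

section Cut

variable {α Q : Type*} [Group Q] {ψ : FreeGroup α →* Q}

open scoped Classical in
/-- The coboundary of the indicator function of `U`, restricted to the edges inside `N`. -/
noncomputable def cutCochain (ψ : FreeGroup α →* Q) (U N : Set Q) (p : Q) (x : α × Bool) : ℤ :=
  if p ∈ N ∧ p * ψ (FreeGroup.mk [x]) ∈ N then
    U.indicator 1 p - U.indicator 1 (p * ψ (FreeGroup.mk [x]))
  else 0

lemma isAntisymmetric_cutCochain (U N : Set Q) : IsAntisymmetric ψ (cutCochain ψ U N) := by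
  intro p x
  have hp : p * ψ (FreeGroup.mk [x]) * ψ (FreeGroup.mk [letterInv x]) = p := by
    rw [mk_letterInv, map_inv, mul_inv_cancel_right]
  by_cases h : p ∈ N ∧ p * ψ (FreeGroup.mk [x]) ∈ N
  · rw [cutCochain, cutCochain, hp, if_pos h, if_pos h.symm, neg_sub]
  · rw [cutCochain, cutCochain, hp, if_neg h, if_neg fun h' => h h'.symm, neg_zero]

lemma pathSum_cutCochain_of_subset {U N : Set Q} {g : Q} {s : Word α}
    (h : pathVertices ψ g s ⊆ N) : pathSum ψ (cutCochain ψ U N) g s =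
      U.indicator 1 g - U.indicator 1 (g * ψ (FreeGroup.mk s)) :=
  pathSum_eq_sub fun _ _ hp hpx => if_pos ⟨h hp, h hpx⟩

lemma pathSum_cutCochain_eq_zero {U N : Set Q} {g : Q} {s : Word α}
    (h : pathVertices ψ g s ⊆ U ∨ Disjoint (pathVertices ψ g s) U ∨
      Disjoint (pathVertices ψ g s) N) : pathSum ψ (cutCochain ψ U N) g s = 0 := by
  refine (pathSum_eq_sub (f := 0) fun p x hp hpx => ?_).trans (sub_self 0)
  rcases h with h | h | h
  · simp [cutCochain, h hp, h hpx]
  · simp [cutCochain, h.notMem_of_mem_left hp, h.notMem_of_mem_left hpx]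
  · simp [cutCochain, h.notMem_of_mem_left hp]

namespace DiskDiagram

variable {R : Set (Word α)} {D : DiskDiagram R ψ} {g : Q}

/-- The vertices of the boundary of a cell. -/
def cellVertices (D : DiskDiagram R ψ) (c : D.Cell) : Set Q :=
  pathVertices ψ (D.base c) (D.label c)

lemma wdist_le_of_mem_cellVertices (hψ : Surjective ψ) {K : ℕ} (hK : ∀ r ∈ R, r.length ≤ K)
    {c : D.Cell} {p q : Q} (hp : p ∈ D.cellVertices c) (hq : q ∈ D.cellVertices c) :
    wdist ψ p q ≤ K :=
  (wdist_le_length_of_mem_pathVertices hψ hp hq).trans (hK _ (D.label_mem c))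

lemma vertex_mem_cellVertices {a : BoundaryEdge α Q D.Cell} (ha : a ∈ D.boundary) :
    a.vertex ∈ D.cellVertices a.cell :=
  let ⟨q, hq, hvertex⟩ := D.exists_prefix a ha
  ⟨q, hq, hvertex.symm⟩

lemma vertex_mem_pathVertices_word (hg : ∀ a ∈ D.boundary.head?, a.vertex = g)
    {a : BoundaryEdge α Q D.Cell} (ha : a ∈ D.boundary) :
    a.vertex ∈ pathVertices ψ g D.word := by
  obtain ⟨U, V, h⟩ := List.append_of_mem ha
  refine ⟨boundaryWord U, ⟨boundaryWord (a :: V), ?_⟩, ?_⟩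
  · rw [word, h, boundaryWord_append]
  · rcases U with _ | ⟨b, U⟩
    · simp [← FreeGroup.one_eq_mk, hg a (by simp [h])]
    · rw [← hg b (by simp [h])]
      exact (vertex_head_of_isChain_append (h ▸ D.isCyclicChain.1) rfl rfl).symm

/-- The flux of `cutCochain ψ U N` through the boundary is concentrated on the second side, where it
is `1`; a cell with nonzero flux crosses both `U` and `N`. -/
lemma exists_cell_of_separated (hker : ∀ r ∈ R, ψ (FreeGroup.mk r) = 1)
    (hg : ∀ a ∈ D.boundary.head?, a.vertex = g) {s₁ s₂ s₃ s₄ : Word α}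
    (hword : D.word = s₁ ++ (s₂ ++ (s₃ ++ s₄))) {U N : Set Q} (h₁ : pathVertices ψ g s₁ ⊆ U)
    (h₂ : pathVertices ψ (g * ψ (FreeGroup.mk s₁)) s₂ ⊆ N)
    (h₃ : Disjoint (pathVertices ψ (g * ψ (FreeGroup.mk s₁) * ψ (FreeGroup.mk s₂)) s₃) U)
    (h₄ : Disjoint (pathVertices ψ
      (g * ψ (FreeGroup.mk s₁) * ψ (FreeGroup.mk s₂) * ψ (FreeGroup.mk s₃)) s₄) N) :
    ∃ c, (¬D.cellVertices c ⊆ U ∧ ¬Disjoint (D.cellVertices c) U) ∧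
      ¬D.cellVertices c ⊆ N ∧ ¬Disjoint (D.cellVertices c) N := by
  have hflux : ∑ c, pathSum ψ (cutCochain ψ U N) (D.base c) (D.label c) = 1 := by
    rw [← D.edgeSum_boundary _ (isAntisymmetric_cutCochain U N),
      edgeSum_eq_pathSum _ D.isCyclicChain.1 hg, ← word, hword, pathSum_append, pathSum_append,
      pathSum_append, pathSum_cutCochain_eq_zero (.inl h₁), pathSum_cutCochain_of_subset h₂,
      pathSum_cutCochain_eq_zero (.inr (.inl h₃)), pathSum_cutCochain_eq_zero (.inr (.inr h₄)),
      Set.indicator_of_mem (h₁ (mul_mem_pathVertices g s₁)),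
      Set.indicator_of_notMem (h₃.notMem_of_mem_left (self_mem_pathVertices _ _))]
    simp
  obtain ⟨c, -, hc⟩ := Finset.exists_ne_zero_of_sum_ne_zero (hflux.trans_ne one_ne_zero)
  refine ⟨c, ⟨fun h => hc ?_, fun h => hc ?_⟩, fun h => hc ?_, fun h => hc ?_⟩
  · exact pathSum_cutCochain_eq_zero (.inl h)
  · exact pathSum_cutCochain_eq_zero (.inr (.inl h))
  · rw [pathSum_cutCochain_of_subset h, hker _ (D.label_mem c), mul_one, sub_self]
  · exact pathSum_cutCochain_eq_zero (.inr (.inr h))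

end DiskDiagram

/-- A set of diameter at most `K` is cut by at most one of the neighborhoods of `A` of radii
`K + 1`, `2 * (K + 1)`, …. -/
lemma exists_neighborhood_not_cutting (hψ : Surjective ψ) {I : Type*} (s : Finset I)
    {C : I → Set Q} {K : ℕ} (hC : ∀ i ∈ s, ∀ p ∈ C i, ∀ q ∈ C i, wdist ψ p q ≤ K) (A : Set Q) :
    ∃ j ≤ s.card, ∀ i ∈ s, C i ⊆ neighborhood ψ ((K + 1) * (j + 1)) A ∨
      Disjoint (C i) (neighborhood ψ ((K + 1) * (j + 1)) A) := by
  by_contra! hcut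
  choose c hcs hc using fun j : Fin (s.card + 1) => hcut j (Fin.is_le j)
  obtain ⟨i, j, hij, hcij⟩ := Fintype.exists_ne_map_eq_of_card_lt
    (fun j => (⟨c j, hcs j⟩ : s)) (by simp)
  wlog hlt : i < j generalizing i j
  · exact this j i hij.symm hcij.symm (by omega)
  obtain ⟨p, hp, hpA⟩ := Set.not_disjoint_iff.1 (hc i).2
  refine (hc j).1 fun q hq => ?_
  have hpq := hC _ (hcs i) p hp q (Subtype.mk.inj hcij ▸ hq)
  refine neighborhood_mono ?_ A (mem_neighborhood_add hψ hpA hpq)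
  have hle := Nat.mul_le_mul_left (K + 1) (show (i : ℕ) + 1 + 1 ≤ j + 1 by omega)
  rw [mul_add (K + 1) ((i : ℕ) + 1)] at hle
  omega

end Cut

/-! ### Geodesic quadrilaterals -/

section Quadrilateral

variable {α Q : Type*} [Group Q]

/-- A quadrilateral with geodesic sides in the Cayley graph, given by a vertex and the words read
along the sides. -/
structure GeodesicQuadrilateral (ψ : FreeGroup α →* Q) where
  vertex : Q
  side₁ : Word α
  side₂ : Word α
  side₃ : Word α
  side₄ : Word α
  geodesic₁ : IsGeodesicWord ψ side₁
  geodesic₂ : IsGeodesicWord ψ side₂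
  geodesic₃ : IsGeodesicWord ψ side₃
  geodesic₄ : IsGeodesicWord ψ side₄
  closed : ψ (FreeGroup.mk (side₁ ++ (side₂ ++ (side₃ ++ side₄)))) = 1

namespace GeodesicQuadrilateral

variable {ψ : FreeGroup α →* Q} (A : GeodesicQuadrilateral ψ)

/-- The word read around a quadrilateral. -/
abbrev word : Word α := A.side₁ ++ (A.side₂ ++ (A.side₃ ++ A.side₄))

/-- The vertices of the first side. -/
def path₁ : Set Q := pathVertices ψ A.vertex A.side₁

/-- The vertices of the second side. -/
def path₂ : Set Q := pathVertices ψ (A.vertex * ψ (FreeGroup.mk A.side₁)) A.side₂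

/-- The vertices of the third side. -/
def path₃ : Set Q :=
  pathVertices ψ (A.vertex * ψ (FreeGroup.mk A.side₁) * ψ (FreeGroup.mk A.side₂)) A.side₃

/-- The vertices of the fourth side. -/
def path₄ : Set Q :=
  pathVertices ψ (A.vertex * ψ (FreeGroup.mk A.side₁) * ψ (FreeGroup.mk A.side₂) *
    ψ (FreeGroup.mk A.side₃)) A.side₄

/-- Two opposite sides come within distance `D` of each other. -/
def HasCloseSides (D : ℕ) : Prop := AreClose ψ D A.path₁ A.path₃ ∨ AreClose ψ D A.path₂ A.path₄

lemma closed_mul : ψ (FreeGroup.mk A.side₁) * ψ (FreeGroup.mk A.side₂) *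
    ψ (FreeGroup.mk A.side₃) * ψ (FreeGroup.mk A.side₄) = 1 := by
  rw [← A.closed, mk_append, mk_append, mk_append]
  simp only [map_mul, mul_assoc]

/-- The same quadrilateral, starting with the second side. -/
def rotate : GeodesicQuadrilateral ψ where
  vertex := A.vertex * ψ (FreeGroup.mk A.side₁)
  side₁ := A.side₂
  side₂ := A.side₃
  side₃ := A.side₄
  side₄ := A.side₁
  geodesic₁ := A.geodesic₂
  geodesic₂ := A.geodesic₃
  geodesic₃ := A.geodesic₄
  geodesic₄ := A.geodesic₁
  closed := by
    have h := A.closed_mul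
    rw [mul_assoc, mul_assoc] at h
    simpa [mk_append, mul_assoc, -FreeGroup.mul_mk] using mul_eq_one_comm.1 h

lemma length_word_rotate : A.rotate.word.length = A.word.length := by
  simp only [word, rotate, List.length_append]
  omega

lemma path₄_rotate : A.rotate.path₄ = A.path₁ := by
  have h : A.vertex * ψ (FreeGroup.mk A.side₁) * ψ (FreeGroup.mk A.side₂) *
      ψ (FreeGroup.mk A.side₃) * ψ (FreeGroup.mk A.side₄) = A.vertex := by
    simpa [mul_assoc] using A.closed_mul
  exact congrArg (pathVertices ψ · A.side₁) h

variable {A}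

lemma HasCloseSides.of_rotate (hψ : Surjective ψ) {D : ℕ} (h : A.rotate.HasCloseSides D) :
    A.HasCloseSides D := by
  rcases h with h | h
  · exact .inr h
  · exact .inl (A.path₄_rotate ▸ h.symm hψ)

lemma hasCloseSides_of_side₁_eq_nil (h : A.side₁ = []) (D : ℕ) : A.HasCloseSides D := by
  refine .inr (areClose_of_mem (p := A.vertex) ?_ ?_ D)
  · simpa [path₂, h, ← FreeGroup.one_eq_mk] using self_mem_pathVertices A.vertex A.side₂
  · have := A.closed_mul
    rw [mul_assoc, mul_assoc] at this
    simpa [path₄, mul_assoc, this] using mul_mem_pathVertices (ψ := ψ) (A.vertex *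
      ψ (FreeGroup.mk A.side₁) * ψ (FreeGroup.mk A.side₂) * ψ (FreeGroup.mk A.side₃)) A.side₄

/-- The quadrilateral obtained by cutting off a closed path around the corner between the first two
sides. -/
def cutCorner (hψ : Surjective ψ) (A : GeodesicQuadrilateral ψ) {a x y b : Word α}
    (h₁ : A.side₁ = a ++ x) (h₂ : A.side₂ = y ++ b) (hxy : ψ (FreeGroup.mk (x ++ y)) = 1) :
    GeodesicQuadrilateral ψ where
  vertex := A.vertex
  side₁ := a
  side₂ := b
  side₃ := A.side₃
  side₄ := A.side₄
  geodesic₁ := A.geodesic₁.of_isInfix hψ ⟨[], x, by simp [h₁]⟩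
  geodesic₂ := A.geodesic₂.of_isInfix hψ ⟨y, [], by simp [h₂]⟩
  geodesic₃ := A.geodesic₃
  geodesic₄ := A.geodesic₄
  closed := by
    have h := A.closed_mul
    rw [mk_append, map_mul] at hxy
    rw [h₁, h₂, mk_append, mk_append, map_mul, map_mul, mul_assoc _ (ψ (FreeGroup.mk x)),
      ← mul_assoc (ψ (FreeGroup.mk x)), hxy, one_mul] at h
    simpa [mk_append, mul_assoc, -FreeGroup.mul_mk] using h

lemma HasCloseSides.of_cutCorner {hψ : Surjective ψ} {a x y b : Word α}
    {h₁ : A.side₁ = a ++ x} {h₂ : A.side₂ = y ++ b} {hxy : ψ (FreeGroup.mk (x ++ y)) = 1} {D : ℕ}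
    (h : (A.cutCorner hψ h₁ h₂ hxy).HasCloseSides D) : A.HasCloseSides D := by
  have hxy' : ψ (FreeGroup.mk x) * ψ (FreeGroup.mk y) = 1 := by rw [← map_mul, ← mk_append, hxy]
  have hcorner : A.vertex * ψ (FreeGroup.mk A.side₁) * ψ (FreeGroup.mk y) =
      A.vertex * ψ (FreeGroup.mk a) := by
    rw [h₁, mk_append, map_mul, mul_assoc, mul_assoc, hxy', mul_one]
  have hend : A.vertex * ψ (FreeGroup.mk A.side₁) * ψ (FreeGroup.mk A.side₂) =
      A.vertex * ψ (FreeGroup.mk a) * ψ (FreeGroup.mk b) := by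
    rw [h₂, mk_append, map_mul, ← mul_assoc, hcorner]
  have hpath₁ : (A.cutCorner hψ h₁ h₂ hxy).path₁ ⊆ A.path₁ := by
    rw [path₁, path₁, h₁, pathVertices_append]
    exact Set.subset_union_left
  have hpath₂ : (A.cutCorner hψ h₁ h₂ hxy).path₂ ⊆ A.path₂ := by
    rw [path₂, path₂, h₂, pathVertices_append, hcorner]
    exact Set.subset_union_right
  have hpath₃ : (A.cutCorner hψ h₁ h₂ hxy).path₃ = A.path₃ :=
    congrArg (pathVertices ψ · A.side₃) hend.symm
  have hpath₄ : (A.cutCorner hψ h₁ h₂ hxy).path₄ = A.path₄ :=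
    congrArg (fun p => pathVertices ψ (p * ψ (FreeGroup.mk A.side₃)) A.side₄) hend.symm
  exact h.imp (·.mono hpath₁ hpath₃.le) (·.mono hpath₂ hpath₄.le)

variable {D : ℕ}

lemma hasCloseSides_of_corner (hψ : Surjective ψ)
    (ih : ∀ B : GeodesicQuadrilateral ψ, B.word.length < A.word.length → B.HasCloseSides D)
    {a x y b : Word α} (h₁ : A.side₁ = a ++ x) (h₂ : A.side₂ = y ++ b)
    (hxy : ψ (FreeGroup.mk (x ++ y)) = 1) (hne : x ++ y ≠ []) : A.HasCloseSides D := by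
  refine .of_cutCorner (h₁ := h₁) (h₂ := h₂) (hxy := hxy) (hψ := hψ) (ih _ ?_)
  have hpos := List.length_pos_iff.2 hne
  simp only [word, cutCorner, h₁, h₂, List.length_append] at hpos ⊢
  omega

lemma hasCloseSides_of_mem_path₁_of_mem_path₃ {p : Q} (h₁ : p ∈ A.path₁) (h₃ : p ∈ A.path₃) :
    A.HasCloseSides D :=
  .inl (areClose_of_mem h₁ h₃ D)

lemma hasCloseSides_of_closed_subword_of_side₁ (hψ : Surjective ψ)
    (ih : ∀ B : GeodesicQuadrilateral ψ, B.word.length < A.word.length → B.HasCloseSides D)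
    {u x z v : Word α} (h₁ : A.side₁ = u ++ x)
    (hz : x ++ (A.side₂ ++ (A.side₃ ++ A.side₄)) = z ++ v)
    (hclosed : ψ (FreeGroup.mk z) = 1) (hne : z ≠ []) (huv : u ++ v ≠ []) :
    A.HasCloseSides D := by
  rcases List.append_eq_append_iff.1 hz with ⟨z₂, rfl, hz₂⟩ | ⟨y, rfl, -⟩
  · rcases List.append_eq_append_iff.1 hz₂ with ⟨z₃, rfl, hz₃⟩ | ⟨y, h₂, -⟩
    · rcases List.append_eq_append_iff.1 hz₃ with ⟨z₄, rfl, hz₄⟩ | ⟨y, h₃, -⟩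
      · have hvu : ψ (FreeGroup.mk (v ++ u)) = 1 := by
          have hword := A.closed
          rw [h₁, List.append_assoc, hz, mk_append, mk_append, map_mul, map_mul, hclosed,
            one_mul] at hword
          rw [mk_append, map_mul, mul_eq_one_comm, hword]
        have hrotate : A.rotate.rotate.rotate.HasCloseSides D :=
          hasCloseSides_of_corner hψ
            (fun B hB => ih B (by simpa only [length_word_rotate] using hB))
            hz₄ h₁ hvu (by simp_all [and_comm])
        exact ((hrotate.of_rotate hψ).of_rotate hψ).of_rotate hψ
      · refine hasCloseSides_of_mem_path₁_of_mem_path₃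
          (p := A.vertex * ψ (FreeGroup.mk u)) ⟨u, ⟨x, h₁.symm⟩, rfl⟩ ⟨z₃, ⟨y, h₃.symm⟩, ?_⟩
        simp only [mk_append, map_mul, h₁, mul_assoc] at hclosed ⊢
        rw [hclosed, mul_one]
    · exact hasCloseSides_of_corner hψ ih h₁ h₂ hclosed hne
  · have hgeo := A.geodesic₁.of_isInfix hψ (s := z) ⟨u, y, by simp [h₁]⟩
    exact absurd (hgeo.eq_nil hψ hclosed) hne

lemma hasCloseSides_of_closed_subword (hψ : Surjective ψ)
    (ih : ∀ B : GeodesicQuadrilateral ψ, B.word.length < A.word.length → B.HasCloseSides D)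
    {u z v : Word α} (hword : A.word = u ++ (z ++ v)) (hclosed : ψ (FreeGroup.mk z) = 1)
    (hz : z ≠ []) (huv : u ++ v ≠ []) : A.HasCloseSides D := by
  induction hn : u.length using Nat.strong_induction_on generalizing A u v with
  | _ n hrec =>
    by_cases hnil : A.side₁ = []
    · exact hasCloseSides_of_side₁_eq_nil hnil D
    rcases List.append_eq_append_iff.1 hword with ⟨t, rfl, h⟩ | ⟨x, h₁, h⟩
    · refine .of_rotate hψ (hrec t.length ?_ (fun B hB => ih B (by rwa [length_word_rotate] at hB))
        (v := v ++ A.side₁) ?_ (by simp [hnil]) rfl)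
      · have := List.length_pos_iff.2 hnil
        rw [List.length_append] at hn
        omega
      · simpa [word, rotate] using congrArg (· ++ A.side₁) h
    · exact hasCloseSides_of_closed_subword_of_side₁ hψ ih h₁ h.symm hclosed hz huv

variable {R : Set (Word α)} {K : ℕ}

lemma exists_boundary_eq_of_word_eq {D : DiskDiagram R ψ} (h : D.word = A.word) :
    ∃ L : List (List (BoundaryEdge α Q D.Cell)), L.length = 4 ∧ D.boundary = L.flatten ∧
      ∀ S ∈ L, IsGeodesicWord ψ (boundaryWord S) := by
  obtain ⟨S₁, T₁, hD, h₁, hT₁⟩ := List.map_eq_append_iff.1 h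
  obtain ⟨S₂, T₂, rfl, h₂, hT₂⟩ := List.map_eq_append_iff.1 hT₁
  obtain ⟨S₃, S₄, rfl, h₃, h₄⟩ := List.map_eq_append_iff.1 hT₂
  refine ⟨[S₁, S₂, S₃, S₄], rfl, by simpa using hD, ?_⟩
  simp only [List.forall_mem_cons, boundaryWord, h₁, h₂, h₃, h₄]
  exact ⟨A.geodesic₁, A.geodesic₂, A.geodesic₃, A.geodesic₄, by simp⟩

lemma mem_path_of_mem_pathVertices_word {p : Q} (h : p ∈ pathVertices ψ A.vertex A.word) :
    p ∈ A.path₁ ∨ p ∈ A.path₂ ∨ p ∈ A.path₃ ∨ p ∈ A.path₄ := by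
  rwa [word, pathVertices_append, pathVertices_append, pathVertices_append] at h

open scoped Classical in
/-- At most `18` cells miss the boundary, so one of `19` neighborhoods of the first side cuts none
of them. -/
lemma exists_neighborhood_not_cutting_interior (hR : IsSixthSystem R) (hψ : Surjective ψ)
    (hrel : ∀ r ∈ R, ψ (FreeGroup.mk r) = 1) (hK : ∀ r ∈ R, r.length ≤ K) {D : DiskDiagram R ψ}
    (hD : D.word = A.word) : ∃ τ, K ≤ τ ∧ τ ≤ 19 * (K + 1) ∧
      ∀ c, edgeCount c D.boundary = 0 → D.cellVertices c ⊆ neighborhood ψ τ A.path₁ ∨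
        Disjoint (D.cellVertices c) (neighborhood ψ τ A.path₁) := by
  obtain ⟨L, hL, hboundary, hgeo⟩ := exists_boundary_eq_of_word_eq hD
  have hcard := DiskDiagram.card_edgeCount_eq_zero_add_six_le hR hψ hrel hboundary hgeo
  obtain ⟨j, hj, hcut⟩ := exists_neighborhood_not_cutting hψ
    {c | edgeCount c D.boundary = 0} (C := D.cellVertices) (K := K)
    (fun c _ p hp q hq => DiskDiagram.wdist_le_of_mem_cellVertices hψ hK hp hq) A.path₁
  refine ⟨(K + 1) * (j + 1), by nlinarith, ?_, fun c hc => hcut c (by simpa using hc)⟩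
  rw [mul_comm]
  exact Nat.mul_le_mul_right _ (by omega)

/-- If the conclusion fails, separate the first side from the third by one of its neighborhoods and
the second side from the fourth; the cell crossing both neighborhoods is near no side. -/
lemma hasCloseSides_of_diskDiagram (hR : IsSixthSystem R) (hψ : Surjective ψ)
    (hrel : ∀ r ∈ R, ψ (FreeGroup.mk r) = 1) (hK : ∀ r ∈ R, r.length ≤ K) {D : DiskDiagram R ψ}
    (hD : D.word = A.word) (hvertex : ∀ a ∈ D.boundary.head?, a.vertex = A.vertex) :
    A.HasCloseSides (20 * (K + 1)) := by
  by_contra hfar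
  rw [HasCloseSides, not_or] at hfar
  obtain ⟨τ, hKτ, hτ, hcut⟩ := exists_neighborhood_not_cutting_interior hR hψ hrel hK hD
  have h₃ {p} (hp : p ∈ A.path₃) {σ} (hσ : σ ≤ 20 * (K + 1)) :
      p ∉ neighborhood ψ σ A.path₁ := fun h =>
    hfar.1 (areClose_of_mem_neighborhood hψ h (subset_neighborhood 0 _ hp) hσ)
  have h₄ {p} (hp : p ∈ A.path₄) {σ} (hσ : σ ≤ 20 * (K + 1)) :
      p ∉ neighborhood ψ σ A.path₂ := fun h =>
    hfar.2 (areClose_of_mem_neighborhood hψ h (subset_neighborhood 0 _ hp) hσ)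
  obtain ⟨c, hU, hN⟩ := D.exists_cell_of_separated hrel hvertex hD
    (subset_neighborhood τ A.path₁) (subset_neighborhood K A.path₂)
    (Set.disjoint_left.2 fun p hp => h₃ hp (by omega))
    (Set.disjoint_left.2 fun p hp => h₄ hp (by omega))
  have hc : edgeCount c D.boundary ≠ 0 := fun h => (hcut c h).elim hU.1 hU.2
  obtain ⟨a, ha, rfl⟩ : ∃ a ∈ D.boundary, a.cell = c := by
    by_contra! h
    exact hc (edgeCount_eq_zero h)
  have hnear {p q} (hp : p ∈ D.cellVertices a.cell) (hq : q ∈ D.cellVertices a.cell) :=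
    DiskDiagram.wdist_le_of_mem_cellVertices hψ hK hp hq
  have hmem := DiskDiagram.vertex_mem_cellVertices ha
  rcases mem_path_of_mem_pathVertices_word (A := A)
    (hD ▸ DiskDiagram.vertex_mem_pathVertices_word hvertex ha) with h | h | h | h
  · exact hU.1 fun p hp => neighborhood_mono hKτ _ ⟨_, h, hnear hmem hp⟩
  · exact hN.1 fun p hp => ⟨_, h, hnear hmem hp⟩
  · obtain ⟨p, hp, hpU⟩ := Set.not_disjoint_iff.1 hU.2
    exact h₃ h (by omega) (mem_neighborhood_add hψ hpU (hnear hp hmem))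
  · obtain ⟨p, hp, hpN⟩ := Set.not_disjoint_iff.1 hN.2
    exact h₄ h (by omega) (mem_neighborhood_add hψ hpN (hnear hp hmem))

lemma hasCloseSides_of_no_closed_subword (hR : IsSixthSystem R) (hψ : Surjective ψ)
    (hker : ψ.ker = Subgroup.normalClosure (FreeGroup.mk '' R)) (hK : ∀ r ∈ R, r.length ≤ K)
    (hsub : ∀ u z v, A.word = u ++ z ++ v → z ≠ [] → u ++ v ≠ [] → ψ (FreeGroup.mk z) ≠ 1) :
    A.HasCloseSides (20 * (K + 1)) := by
  by_cases h₁ : A.side₁ = []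
  · exact hasCloseSides_of_side₁_eq_nil h₁ _
  by_cases h₂ : A.side₂ = []
  · exact .of_rotate hψ (hasCloseSides_of_side₁_eq_nil (A := A.rotate) h₂ _)
  by_cases h₃ : A.side₃ = []
  · exact .of_rotate hψ (.of_rotate hψ (hasCloseSides_of_side₁_eq_nil (A := A.rotate.rotate) h₃ _))
  have hlen : 3 ≤ A.word.length := by
    have := List.length_pos_iff.2 h₁
    have := List.length_pos_iff.2 h₂
    have := List.length_pos_iff.2 h₃
    simp only [word, List.length_append]
    omega
  have hrel (r) (hr : r ∈ R) : ψ (FreeGroup.mk r) = 1 := by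
    rw [← MonoidHom.mem_ker, hker]
    exact Subgroup.subset_normalClosure ⟨r, hr, rfl⟩
  have hred : FreeGroup.IsReduced A.word := by
    by_contra h
    obtain ⟨u, z, v, hword, hz, hmk⟩ := exists_cancelling_pair_of_not_isReduced h
    refine hsub u z v hword (List.ne_nil_of_length_pos (by omega)) (fun huv => ?_) (by simp [hmk])
    obtain ⟨rfl, rfl⟩ := List.append_eq_nil_iff.1 huv
    rw [hword] at hlen
    simp only [List.length_append, List.length_nil] at hlen
    omega
  have hne : FreeGroup.mk A.word ≠ 1 := fun h => by
    rw [eq_of_isReduced_of_mk_eq hred FreeGroup.IsReduced.nil h] at hlen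
    simp at hlen
  obtain ⟨N, D, hD, hvertex, -⟩ := hR.exists_hasDiskDiagram hrel (hker ▸ A.closed) hne
    (fun u z v h hz huv hmem => hsub u z v h hz huv (hker.symm ▸ hmem :)) A.vertex
  exact hasCloseSides_of_diskDiagram hR hψ hrel hK hD hvertex

theorem hasCloseSides (hR : IsSixthSystem R) (hψ : Surjective ψ)
    (hker : ψ.ker = Subgroup.normalClosure (FreeGroup.mk '' R)) (hK : ∀ r ∈ R, r.length ≤ K)
    (A : GeodesicQuadrilateral ψ) : A.HasCloseSides (20 * (K + 1)) := by
  induction hn : A.word.length using Nat.strong_induction_on generalizing A with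
  | _ n ih =>
    by_cases hsub : ∃ u z v, A.word = u ++ z ++ v ∧ z ≠ [] ∧ u ++ v ≠ [] ∧
        ψ (FreeGroup.mk z) = 1
    · obtain ⟨u, z, v, hword, hz, huv, hclosed⟩ := hsub
      exact hasCloseSides_of_closed_subword hψ (fun B hB => ih _ (hn ▸ hB) B rfl)
        (by rw [hword, List.append_assoc]) hclosed hz huv
    · push Not at hsub
      exact hasCloseSides_of_no_closed_subword hR hψ hker hK hsub

end GeodesicQuadrilateral

end Quadrilateral

/-! ### Linear filling in hyperbolic quotients -/

section HyperbolicFilling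

variable {α Q : Type*} [Group Q] {ψ : FreeGroup α →* Q}

lemma wdist_add_wdist_le_of_areClose (hψ : Surjective ψ) {D : ℕ} {a c : Q} {s t : Word α}
    (h : AreClose ψ D (pathVertices ψ a s) (pathVertices ψ c t)) :
    wdist ψ a c + wdist ψ (a * ψ (FreeGroup.mk s)) (c * ψ (FreeGroup.mk t)) ≤
      s.length + t.length + 2 * D := by
  obtain ⟨p, hp, q, hq, hpq⟩ := h
  have hs := wdist_add_wdist_le_of_mem_pathVertices hp
  have ht := wdist_add_wdist_le_of_mem_pathVertices hq
  have hstart : wdist ψ a c ≤ wdist ψ a p + wdist ψ p q + wdist ψ c q :=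
    (wdist_triangle hψ a q c).trans (add_le_add (wdist_triangle hψ a p q) (wdist_comm hψ q c).le)
  have hend : wdist ψ (a * ψ (FreeGroup.mk s)) (c * ψ (FreeGroup.mk t)) ≤
      wdist ψ p (a * ψ (FreeGroup.mk s)) + wdist ψ p q + wdist ψ q (c * ψ (FreeGroup.mk t)) :=
    (wdist_triangle hψ _ q _).trans (add_le_add_left
      ((wdist_triangle hψ _ p q).trans (add_le_add_left (wdist_comm hψ _ p).le _)) _)
  omega

/-- Gromov's four-point condition for the word metric, with additive error `δ`. -/
def FourPointCondition (ψ : FreeGroup α →* Q) (δ : ℕ) : Prop :=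
  ∀ a b c d, wdist ψ a c + wdist ψ b d ≤
    max (wdist ψ a b + wdist ψ c d) (wdist ψ b c + wdist ψ d a) + δ

theorem IsSixthSystem.fourPointCondition {R : Set (Word α)} {K : ℕ} (hR : IsSixthSystem R)
    (hψ : Surjective ψ) (hker : ψ.ker = Subgroup.normalClosure (FreeGroup.mk '' R))
    (hK : ∀ r ∈ R, r.length ≤ K) : FourPointCondition ψ (40 * (K + 1)) := by
  intro a b c d
  obtain ⟨s, hs, hab⟩ := exists_isGeodesicWord hψ (a⁻¹ * b)
  obtain ⟨t, ht, hbc⟩ := exists_isGeodesicWord hψ (b⁻¹ * c)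
  obtain ⟨u, hu, hcd⟩ := exists_isGeodesicWord hψ (c⁻¹ * d)
  obtain ⟨v, hv, hda⟩ := exists_isGeodesicWord hψ (d⁻¹ * a)
  have hclosed : ψ (FreeGroup.mk (s ++ (t ++ (u ++ v)))) = 1 := by
    simp only [mk_append, map_mul, hab, hbc, hcd, hda, mul_assoc, mul_inv_cancel_left,
      inv_mul_cancel]
  let A : GeodesicQuadrilateral ψ := ⟨a, s, t, u, v, hs, ht, hu, hv, hclosed⟩
  have hclose := A.hasCloseSides hR hψ hker hK
  simp only [IsGeodesicWord, hab, hbc, hcd, hda] at hs ht hu hv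
  simp only [GeodesicQuadrilateral.HasCloseSides, GeodesicQuadrilateral.path₁,
    GeodesicQuadrilateral.path₂, GeodesicQuadrilateral.path₃, GeodesicQuadrilateral.path₄, A,
    hab, hbc, hcd, mul_inv_cancel_left] at hclose
  simp only [wdist, hs, ht, hu, hv]
  rcases hclose with h | h <;> have hle := wdist_add_wdist_le_of_areClose hψ h
  · simp only [hab, hcd, mul_inv_cancel_left, wdist] at hle
    omega
  · simp only [hbc, hda, mul_inv_cancel_left] at hle
    rw [wdist_comm hψ c a] at hle
    simp only [wdist] at hle
    omega

/-- The two steps before and the two steps after a point of the polygon farthest from `x 0` can be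
replaced by three, unless the first two steps can be replaced by one. -/
lemma FourPointCondition.exists_shortcut (hψ : Surjective ψ) {δ m N : ℕ}
    (hδ : FourPointCondition ψ δ) (hδm : δ ≤ m) {x : ℕ → Q}
    (hstep : ∀ i < N, wdist ψ (x i) (x (i + 1)) ≤ m) (hclosed : x N = x 0) (hN : 2 ≤ N) :
    ∃ i k, k + 1 ≤ 4 ∧ i + (k + 1) ≤ N ∧ wdist ψ (x i) (x (i + (k + 1))) ≤ k * m := by
  by_cases hfirst : wdist ψ (x 0) (x 2) ≤ m
  · exact ⟨0, 1, by omega, by omega, by simpa using hfirst⟩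
  have htwo {i : ℕ} (hi : i + 1 < N) : wdist ψ (x i) (x (i + 2)) ≤ 2 * m := by
    have := wdist_triangle hψ (x i) (x (i + 1)) (x (i + 2))
    have := hstep i (by omega)
    have : wdist ψ (x (i + 1)) (x (i + 2)) ≤ m := hstep (i + 1) hi
    omega
  obtain ⟨M, hM, hmax⟩ := (Finset.range (N + 1)).exists_max_image (fun i => wdist ψ (x 0) (x i))
    ⟨0, by simp⟩
  simp only [Finset.mem_range] at hM hmax
  have hfar : m < wdist ψ (x 0) (x M) := (not_le.1 hfirst).trans_le (hmax 2 (by omega))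
  have hM₀ : M ≠ 0 := by rintro rfl; simp [wdist_self] at hfar
  have hM₁ : M ≠ 1 := by rintro rfl; exact hfar.not_ge (hstep 0 (by omega))
  have hMN : M ≠ N := by rintro rfl; simp [hclosed, wdist_self] at hfar
  have hMN' : M + 1 ≠ N := by
    rintro rfl
    rw [wdist_comm hψ, ← hclosed] at hfar
    exact hfar.not_ge (hstep M (by omega))
  obtain ⟨i, rfl⟩ := Nat.exists_eq_add_of_le' (show 2 ≤ M by omega)
  refine ⟨i, 3, by omega, by omega, ?_⟩
  have hfour := hδ (x 0) (x i) (x (i + 2)) (x (i + 4))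
  have := hmax i (by omega)
  have := hmax (i + 4) (by omega)
  have := htwo (i := i) (by omega)
  have : wdist ψ (x (i + 2)) (x (i + 4)) ≤ 2 * m := htwo (by omega)
  rw [wdist_comm hψ (x (i + 4)) (x 0)] at hfour
  change wdist ψ (x i) (x (i + 4)) ≤ 3 * m
  omega

lemma exists_prod_eq_mk_of_length_le (m : ℕ) {l : ℕ} {s : Word α} (hs : s.length ≤ l * m) :
    ∃ H : List (FreeGroup α), H.length = l ∧ (∀ h ∈ H, wnorm h ≤ m) ∧
      H.prod = FreeGroup.mk s := by
  induction l generalizing s with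
  | zero =>
    obtain rfl : s = [] := List.length_eq_zero_iff.1 (by omega)
    exact ⟨[], rfl, by simp, by simp [FreeGroup.one_eq_mk]⟩
  | succ l ih =>
    obtain ⟨H, hlen, hH, hprod⟩ := ih (s := s.drop m) (by
      rw [List.length_drop]
      rw [Nat.succ_mul] at hs
      omega)
    refine ⟨FreeGroup.mk (s.take m) :: H, by rw [List.length_cons, hlen],
      List.forall_mem_cons.2 ⟨(wnorm_mk_le _).trans (List.length_take_le _ _), hH⟩, ?_⟩
    rw [List.prod_cons, hprod, ← mk_append, List.take_append_drop]

lemma wnorm_prod_le {m : ℕ} {H : List (FreeGroup α)} (hH : ∀ h ∈ H, wnorm h ≤ m) :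
    wnorm H.prod ≤ H.length * m := by
  induction H with
  | nil => simp [wnorm_one]
  | cons h H ih =>
    rw [List.forall_mem_cons] at hH
    rw [List.prod_cons, List.length_cons, Nat.succ_mul, add_comm]
    exact (wnorm_mul_le _ _).trans (add_le_add hH.1 (ih hH.2))

lemma AreaAtMost.of_replace {S : Set (FreeGroup α)} {a b b' c : FreeGroup α} {n : ℕ}
    (hb : b * b'⁻¹ ∈ S) (h : AreaAtMost S (a * b' * c) n) : AreaAtMost S (a * b * c) (n + 1) := by
  have hmul := ((AreaAtMost.of_mem hb).conj a⁻¹).mul h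
  rw [Nat.add_comm 1 n] at hmul
  convert hmul using 1
  group

lemma exists_length_eq_of_wlen_le (hψ : Surjective ψ) {m k : ℕ} {g : Q}
    (hg : wlen ψ g ≤ k * m) :
    ∃ H : List (FreeGroup α), H.length = k ∧ (∀ h ∈ H, wnorm h ≤ m) ∧ ψ H.prod = g := by
  obtain ⟨s, hs, rfl⟩ := exists_isGeodesicWord hψ g
  obtain ⟨H, hlen, hH, hprod⟩ := exists_prod_eq_mk_of_length_le m (hs ▸ hg)
  exact ⟨H, hlen, hH, congrArg ψ hprod⟩

lemma FourPointCondition.exists_shorter_list (hψ : Surjective ψ) {δ m : ℕ}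
    (hδ : FourPointCondition ψ δ) (hδm : δ ≤ m) {H : List (FreeGroup α)}
    (hH : ∀ h ∈ H, wnorm h ≤ m) (hprod : ψ H.prod = 1) (hlen : 2 ≤ H.length) :
    ∃ A B B' C : List (FreeGroup α), H = A ++ B ++ C ∧ B.length = B'.length + 1 ∧ B.length ≤ 4 ∧
      (∀ h ∈ B', wnorm h ≤ m) ∧ ψ B.prod = ψ B'.prod := by
  have hblock (i j : ℕ) :
      ψ ((H.drop i).take j).prod = (ψ (H.take i).prod)⁻¹ * ψ (H.take (i + j)).prod := by
    rw [List.take_add, List.prod_append, map_mul, inv_mul_cancel_left]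
  obtain ⟨i, k, hk, hik, hdist⟩ := hδ.exists_shortcut hψ hδm (x := fun i => ψ (H.take i).prod)
    (fun i _ => by
      rw [wdist, ← hblock]
      refine (wlen_map_le ψ _).trans ((wnorm_prod_le fun h hh =>
        hH h (List.mem_of_mem_drop (List.mem_of_mem_take hh))).trans ?_)
      exact (Nat.mul_le_mul_right m (List.length_take_le _ _)).trans (one_mul m).le)
    (by simp [hprod]) hlen
  obtain ⟨B', hlen', hB', hprod'⟩ := exists_length_eq_of_wlen_le hψ hdist
  have hB : ((H.drop i).take (k + 1)).length = k + 1 := by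
    rw [List.length_take, List.length_drop]
    omega
  refine ⟨H.take i, (H.drop i).take (k + 1), B', (H.drop i).drop (k + 1), ?_, ?_, by omega, hB', ?_⟩
  · rw [List.append_assoc, List.take_append_drop, List.take_append_drop]
  · rw [hB, hlen']
  · rw [hblock, hprod']

theorem FourPointCondition.areaAtMost_prod (hψ : Surjective ψ) {δ m : ℕ}
    (hδ : FourPointCondition ψ δ) (hδm : δ ≤ m) {S : Set (FreeGroup α)}
    (hS : triv ψ (7 * m) ⊆ S) {H : List (FreeGroup α)} (hH : ∀ h ∈ H, wnorm h ≤ m)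
    (hprod : ψ H.prod = 1) : AreaAtMost S H.prod H.length := by
  induction hl : H.length generalizing H with
  | zero =>
    rw [List.length_eq_zero_iff.1 hl]
    exact AreaAtMost.one
  | succ N ih =>
    rcases N.eq_zero_or_pos with rfl | hN
    · obtain ⟨h, rfl⟩ := List.length_eq_one_iff.1 hl
      rw [List.prod_singleton] at hprod ⊢
      exact AreaAtMost.of_mem (hS ⟨(hH h (by simp)).trans (by omega), hprod⟩)
    obtain ⟨A, B, B', C, rfl, hBB', hB, hB', heq⟩ :=
      hδ.exists_shorter_list hψ hδm hH hprod (by omega)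
    simp only [List.mem_append, or_imp, forall_and] at hH
    simp only [List.prod_append, map_mul, heq] at hprod ⊢
    have hshort : AreaAtMost S (A.prod * B'.prod * C.prod) N := by
      simpa only [List.prod_append] using ih (H := A ++ B' ++ C)
        (by simpa only [List.mem_append, or_imp, forall_and] using ⟨⟨hH.1.1, hB'⟩, hH.2⟩)
        (by simpa only [List.prod_append, map_mul] using hprod)
        (by simp only [List.length_append] at hl ⊢; omega)
    refine AreaAtMost.of_replace (hS ⟨?_, by rw [map_mul, map_inv, heq, mul_inv_cancel]⟩) hshort
    calc wnorm (B.prod * B'.prod⁻¹) ≤ wnorm B.prod + wnorm B'.prod := by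
          simpa only [wnorm_inv] using wnorm_mul_le B.prod B'.prod⁻¹
      _ ≤ 4 * m + 3 * m := add_le_add
          ((wnorm_prod_le hH.1.2).trans (Nat.mul_le_mul_right m hB))
          ((wnorm_prod_le hB').trans (Nat.mul_le_mul_right m (by omega)))
      _ = 7 * m := by ring

theorem FourPointCondition.area_le (hψ : Surjective ψ) {δ m n : ℕ}
    (hδ : FourPointCondition ψ δ) (hδm : δ ≤ m) (hm : 0 < m) {S : Set (FreeGroup α)}
    (hS : triv ψ (7 * m) ⊆ S) {w : FreeGroup α} (hw : w ∈ triv ψ n) : area S w ≤ n / m + 1 := by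
  obtain ⟨s, rfl, hs⟩ := exists_mk_eq_length_eq_wnorm w
  have hlt : n < m * (n / m + 1) := Nat.lt_mul_div_succ n hm
  obtain ⟨H, hlen, hH, hprod⟩ := exists_prod_eq_mk_of_length_le m (s := s) (l := n / m + 1)
    (by rw [hs, mul_comm]; exact hw.1.trans hlt.le)
  obtain ⟨l, hl, harea⟩ := hδ.areaAtMost_prod hψ hδm hS hH (hprod ▸ hw.2)
  exact (Nat.sInf_le (hprod ▸ harea)).trans (hl.trans hlen.le)

end HyperbolicFilling

/-! ### Small cancellation presentations -/

section Presentation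

variable {α : Type*}

lemma winv_eq_invRev (w : Word α) : winv w = FreeGroup.invRev w := rfl

lemma ReducedWord.isReduced {w : Word α} (h : ReducedWord w) : FreeGroup.IsReduced w :=
  List.IsChain.imp (fun _ _ hxy hfst => by_contra fun hne => hxy ⟨hfst, Bool.eq_not.2 hne⟩) h

lemma isReduced_invRev {w : Word α} (h : FreeGroup.IsReduced w) :
    FreeGroup.IsReduced (FreeGroup.invRev w) := by
  classical
  rw [FreeGroup.isReduced_iff_reduce_eq] at h ⊢
  rw [FreeGroup.reduce_invRev, h]

lemma invRev_isRotated {u v : Word α} (h : u ~r v) :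
    FreeGroup.invRev u ~r FreeGroup.invRev v :=
  (h.map _).reverse

lemma mem_cyclicShifts_iff {S : Set (Word α)} {w : Word α} :
    w ∈ CyclicShifts S ↔ ∃ r ∈ S, r ~r w ∨ FreeGroup.invRev r ~r w := by
  simp only [CyclicShifts, winv_eq_invRev, Set.mem_ofPred_eq, exists_or, List.IsRotated, eq_comm]

lemma append_comm_mem_cyclicShifts {S : Set (Word α)} {u v : Word α}
    (h : u ++ v ∈ CyclicShifts S) : v ++ u ∈ CyclicShifts S := by
  rw [mem_cyclicShifts_iff] at h ⊢
  obtain ⟨r, hr, h⟩ := h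
  exact ⟨r, hr, h.imp (·.trans List.isRotated_append) (·.trans List.isRotated_append)⟩

lemma invRev_mem_cyclicShifts {S : Set (Word α)} {w : Word α} (h : w ∈ CyclicShifts S) :
    FreeGroup.invRev w ∈ CyclicShifts S := by
  rw [mem_cyclicShifts_iff] at h ⊢
  obtain ⟨r, hr, h | h⟩ := h
  · exact ⟨r, hr, Or.inr (invRev_isRotated h)⟩
  · exact ⟨r, hr, Or.inl (FreeGroup.invRev_invRev (L₁ := r) ▸ invRev_isRotated h)⟩

lemma ReducedPresentation.isReduced {S : Set (Word α)} (hS : ReducedPresentation S) {w : Word α}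
    (hw : w ∈ CyclicShifts S) : FreeGroup.IsReduced w := by
  obtain ⟨r, hr, ⟨n, rfl⟩ | h⟩ := mem_cyclicShifts_iff.1 hw
  · exact (hS r hr n).isReduced
  · obtain ⟨n, hn⟩ : r ~r FreeGroup.invRev w :=
      FreeGroup.invRev_invRev (L₁ := r) ▸ invRev_isRotated h
    rw [← FreeGroup.invRev_invRev (L₁ := w), ← hn]
    exact isReduced_invRev (hS r hr n).isReduced

lemma SmallCancellation.six_mul_length_lt {S : Set (Word α)} (hS : SmallCancellation (1 / 6) S)
    {r s u : Word α} (hr : r ∈ CyclicShifts S) (hs : s ∈ CyclicShifts S) (hne : r ≠ s)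
    (hur : u <+: r) (hus : u <+: s) : 6 * u.length < r.length := by
  have hlt := hS r hr s hs hne u hur hus
  have hmin := min_le_left (r.length : ℝ) (s.length : ℝ)
  have : (6 : ℝ) * u.length < r.length := by linarith
  exact_mod_cast this

/-- The symmetrized form of a presentation; an empty relator is discarded, as it bounds no cell. -/
def symmetrizedRelators (S : Set (Word α)) : Set (Word α) := {w | w ∈ CyclicShifts S ∧ w ≠ []}

lemma isSixthSystem_symmetrizedRelators {S : Set (Word α)} (hred : ReducedPresentation S)
    (hsc : SmallCancellation (1 / 6) S) : IsSixthSystem (symmetrizedRelators S) where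
  append_comm_mem u v h := ⟨append_comm_mem_cyclicShifts h.1, by
    simpa only [ne_eq, List.append_eq_nil_iff, and_comm] using h.2⟩
  invRev_mem r h := ⟨invRev_mem_cyclicShifts h.1, fun hnil => h.2 <| by
    rw [← FreeGroup.invRev_invRev (L₁ := r), hnil, FreeGroup.invRev_empty]⟩
  isReduced r h := hred.isReduced h.1
  ne_nil r h := h.2
  six_mul_length_lt r hr s hs hne u hur hus :=
    hsc.six_mul_length_lt hr.1 hs.1 hne hur hus

lemma mk_mem_of_isRotated {N : Subgroup (FreeGroup α)} [N.Normal] {u v : Word α} (h : u ~r v)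
    (hu : FreeGroup.mk u ∈ N) : FreeGroup.mk v ∈ N := by
  obtain ⟨n, rfl⟩ := h
  rw [List.rotate_eq_drop_append_take_mod, mk_append]
  refine Subgroup.Normal.mem_comm ‹_› ?_
  rwa [← mk_append, List.take_append_drop]

lemma normalClosure_symmetrizedRelators (S : Set (Word α)) :
    Subgroup.normalClosure (FreeGroup.mk '' symmetrizedRelators S) =
      Subgroup.normalClosure (FreeGroup.mk '' S) := by
  apply le_antisymm <;> refine Subgroup.normalClosure_le_normal ?_ <;> rintro _ ⟨w, hw, rfl⟩
  · obtain ⟨r, hr, h | h⟩ := mem_cyclicShifts_iff.1 hw.1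
    · exact mk_mem_of_isRotated h (Subgroup.subset_normalClosure ⟨r, hr, rfl⟩)
    · refine mk_mem_of_isRotated h ?_
      rw [mk_invRev]
      exact inv_mem (Subgroup.subset_normalClosure ⟨r, hr, rfl⟩)
  · rcases eq_or_ne w [] with rfl | hne
    · exact one_mem _
    · exact Subgroup.subset_normalClosure
        ⟨w, ⟨mem_cyclicShifts_iff.2 ⟨w, hw, Or.inl (.refl w)⟩, hne⟩, rfl⟩

end Presentation

section Spectrum

variable {α : Type*} {R : Set (Word α)} {φ : FreeGroup α →* G} {k m n : ℕ}

lemma isoSpec_le_of_forall_area_le {c : ℕ}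
    (h : ∀ w ∈ Subgroup.normalClosure (triv φ k), wnorm w ≤ n → area (triv φ m) w ≤ c) :
    isoSpec φ k m n ≤ c :=
  csSup_le ⟨_, 1, ⟨one_mem _, by simp [wnorm_one]⟩, rfl⟩ fun _ ⟨w, ⟨hw, hwn⟩, hc⟩ =>
    hc ▸ h w hw hwn

lemma IsSixthSystem.normalClosure_triv_le (hR : IsSixthSystem R)
    (hker : φ.ker = Subgroup.normalClosure (FreeGroup.mk '' R)) (k : ℕ) :
    Subgroup.normalClosure (triv φ k) ≤
      Subgroup.normalClosure (FreeGroup.mk '' shortRelators R (2 * k)) := by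
  refine Subgroup.normalClosure_le_normal fun x hx => ?_
  obtain ⟨w, rfl, hw⟩ := exists_mk_eq_length_eq_wnorm x
  exact hR.mem_normalClosure_shortRelators (hker ▸ hx.2) (hw ▸ hx.1)

/-- The polygons are filled in the quotient by the relators of length at most `2 * k`, whose
four-point constant `40 * (2 * k + 1)` is at most `m`. -/
theorem IsSixthSystem.isoSpec_le (hR : IsSixthSystem R)
    (hker : φ.ker = Subgroup.normalClosure (FreeGroup.mk '' R)) (hk : 0 < k)
    (hkm : 120 * k ≤ m) : isoSpec φ k (120 * m) n ≤ n / m + 1 := by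
  let N := Subgroup.normalClosure (FreeGroup.mk '' shortRelators R (2 * k))
  have hmem (x : FreeGroup α) : QuotientGroup.mk' N x = 1 ↔ x ∈ N :=
    QuotientGroup.eq_one_iff x
  have hN : N ≤ φ.ker := hker ▸ Subgroup.normalClosure_mono (Set.image_mono fun r hr => hr.1)
  have htriv : triv (QuotientGroup.mk' N) (7 * m) ⊆ triv φ (120 * m) := fun x hx =>
    ⟨hx.1.trans (by omega), hN ((hmem x).1 hx.2)⟩
  have hfour := (hR.restrict_length (2 * k)).fourPointCondition
    (QuotientGroup.mk'_surjective N) (QuotientGroup.ker_mk' N) fun r hr => hr.2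
  exact isoSpec_le_of_forall_area_le fun w hw hwn =>
    hfour.area_le (QuotientGroup.mk'_surjective N) (by omega) (by omega) htriv
      ⟨hwn, (hmem w).2 (hR.normalClosure_triv_le hker k hw)⟩

theorem IsSixthSystem.isoSpecR_specLE_linSpec (hR : IsSixthSystem R)
    (hker : φ.ker = Subgroup.normalClosure (FreeGroup.mk '' R)) :
    SpecLE (isoSpecR φ) linSpec := by
  refine ⟨120, by norm_num, fun k m n hk _ _ hkm => ?_⟩
  calc isoSpecR φ k (120 * m) n ≤ ((n / m : ℕ) : ℝ) + 1 := by
        rw [isoSpecR]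
        exact_mod_cast hR.isoSpec_le hker hk hkm
    _ ≤ (n : ℝ) / m + 1 := by gcongr; exact Nat.cast_div_le
    _ ≤ 120 * (((120 * n : ℕ) : ℝ) / m) + 120 * (n : ℝ) / m + 120 := by
        have : (0 : ℝ) ≤ (n : ℝ) / m := by positivity
        push_cast
        rw [mul_div_assoc]
        linarith

lemma linSpec_specLE_of_nonneg {f : ℕ → ℕ → ℕ → ℝ} (hf : ∀ k m n, 0 ≤ f k m n) :
    SpecLE linSpec f := by
  refine ⟨1, one_pos, fun k m n _ _ _ _ => ?_⟩
  have := hf (1 * k) m (1 * n)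
  simp only [linSpec, Nat.cast_one, one_mul] at this ⊢
  linarith

end Spectrum

theorem linear_isoSpec_of_smallCancellation_general {α G : Type*} [Group G]
    (φ : FreeGroup α →* G) (𝓡 : Set (Word α))
    (hker : φ.ker = Subgroup.normalClosure (FreeGroup.mk '' 𝓡))
    (hred : ReducedPresentation 𝓡) (hsc : SmallCancellation (1 / 6) 𝓡) :
    SpecEquiv (isoSpecR φ) linSpec := by
  have hR : IsSixthSystem (symmetrizedRelators 𝓡) := isSixthSystem_symmetrizedRelators hred hsc
  have hker' : φ.ker = Subgroup.normalClosure (FreeGroup.mk '' symmetrizedRelators 𝓡) := by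
    rw [hker, normalClosure_symmetrizedRelators]
  exact ⟨hR.isoSpecR_specLE_linSpec hker', linSpec_specLE_of_nonneg fun _ _ _ => Nat.cast_nonneg _⟩

/-- A finitely generated group admitting a (possibly infinite) reduced
`C'(1/6)` small cancellation presentation has linear isoperimetric spectrum. -/
theorem linear_isoSpec_of_smallCancellation {G : Type} [Group G] {a : ℕ}
    (φ : FreeGroup (Fin a) →* G) (hφ : Surjective φ)
    (𝓡 : Set (List (Fin a × Bool)))
    (hker : φ.ker = Subgroup.normalClosure (FreeGroup.mk '' 𝓡))
    (hred : ReducedPresentation 𝓡)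
    (hsc : SmallCancellation (1 / 6) 𝓡) :
    SpecEquiv (isoSpecR φ) linSpec :=
  linear_isoSpec_of_smallCancellation_general φ 𝓡 hker hred hsc

end IsoSpecPaper
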